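/- Let Σ be a complete (⋃_{σ∈Σ} σ = ℝ^n, equivalently X_Σ compact) non-singular fan in ℝ^n satisfying condition (2.9.2), and let Σ_1 be a fan in ℝ^n with Σ(1) ⊆ Σ_1 ⊊ Σ, where Σ(1) is the set of one-dimensional cones of Σ (so Σ_1 has the same primitive generators n_1,…,n_r). Let D = (d_1,…,d_r) be positive integers with ∑_k d_k n_k = 0. Then: (i) the lift j_D : Pol*_D(S¹,X_{Σ_1}) → ΩU(K_{Σ_1}) of i_D through Ωq_{Σ_1} is a homotopy equivalence through dimension d(D,Σ_1); and (ii) the map i_D : Pol*_D(S¹,X_{Σ_1}) → ΩX_{Σ_1} induces an isomorphism (i_D)_* : π_k(Pol*_D(S¹,X_{Σ_1})) → π_k(ΩX_{Σ_1}) ≅ π_{k+1}(X_{Σ_1}) for every 2 ≤ k ≤ d(D,Σ_1) = 2(r_min(Σ_1)−1)·d_min − 2. -/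

import Mathlib

open scoped BigOperators
attribute [local instance] Classical.propDecidable

noncomputable section

namespace Toric


/-! ### Cones and fans -/

/-- The real vector associated to an integer vector. -/
def zr {n : ℕ} (v : Fin n → ℤ) : Fin n → ℝ := fun i => (v i : ℝ)

/-- A convex rational polyhedral cone in `ℝ^n`. -/
def IsRatCone {n : ℕ} (σ : Set (Fin n → ℝ)) : Prop :=
  ∃ s : Finset (Fin n → ℤ),
    σ = {x | ∃ lam : (Fin n → ℤ) → ℝ, (∀ v, 0 ≤ lam v) ∧ x = ∑ v ∈ s, lam v • zr v}

/-- A cone is strongly convex if `σ ∩ (-σ) = {0}`. -/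
def StronglyConvex {n : ℕ} (σ : Set (Fin n → ℝ)) : Prop := σ ∩ (-σ) = {0}

/-- `τ` is a face of `σ`, cut out by a linear form nonnegative on `σ`. -/
def IsFaceOf {n : ℕ} (τ σ : Set (Fin n → ℝ)) : Prop :=
  ∃ L : (Fin n → ℝ) →ₗ[ℝ] ℝ, (∀ x ∈ σ, 0 ≤ L x) ∧ τ = σ ∩ {x | L x = 0}

/-- A fan in `ℝ^n`: a finite collection of strongly convex rational polyhedral cones,
closed under taking faces, such that the intersection of two cones is a face of each;
we also require that it strictly contains `{0}`. -/
structure Fan (n : ℕ) where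
  cones : Set (Set (Fin n → ℝ))
  finite : cones.Finite
  ratCone : ∀ σ ∈ cones, IsRatCone σ
  stronglyConvex : ∀ σ ∈ cones, StronglyConvex σ
  face_mem : ∀ σ ∈ cones, ∀ τ, IsFaceOf τ σ → τ ∈ cones
  inter_face : ∀ σ ∈ cones, ∀ τ ∈ cones, IsFaceOf (σ ∩ τ) σ
  zero_mem : ({0} : Set (Fin n → ℝ)) ∈ cones
  nontrivial : cones ≠ {({0} : Set (Fin n → ℝ))}

/-- A fan is complete if its cones cover `ℝ^n`. -/
def Fan.Complete {n : ℕ} (F : Fan n) : Prop := ⋃₀ F.cones = Set.univ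

/-- A fan is non-singular if each of its cones is spanned by part of a `ℤ`-basis of `ℤ^n`. -/
def Fan.NonSingular {n : ℕ} (F : Fan n) : Prop :=
  ∀ σ ∈ F.cones, ∃ (b : Module.Basis (Fin n) ℤ (Fin n → ℤ)) (s : Finset (Fin n)),
    σ = {x | ∃ lam : Fin n → ℝ, (∀ i, 0 ≤ lam i) ∧ x = ∑ i ∈ s, lam i • zr (b i)}

/-- The ray (one-dimensional cone) generated by a vector. -/
def ray {n : ℕ} (v : Fin n → ℝ) : Set (Fin n → ℝ) := {x | ∃ t : ℝ, 0 ≤ t ∧ x = t • v}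

/-- The cone spanned by the vectors `n_i`, `i ∈ s`. -/
def coneIdx {n r : ℕ} (N : Fin r → Fin n → ℤ) (s : Finset (Fin r)) : Set (Fin n → ℝ) :=
  {x | ∃ lam : Fin r → ℝ, (∀ i, 0 ≤ lam i) ∧ x = ∑ i ∈ s, lam i • zr (N i)}

/-- A point of `ℝ^n` lying in the lattice `ℤ^n`. -/
def IsLatticePoint {n : ℕ} (x : Fin n → ℝ) : Prop := ∀ i, ∃ m : ℤ, x i = (m : ℝ)

/-- `N 1, …, N r` is the (complete, repetition-free) list of primitive generators of the
one-dimensional cones of the fan `F`. -/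
structure IsPrimGens {n r : ℕ} (F : Fan n) (N : Fin r → Fin n → ℤ) : Prop where
  ray_mem : ∀ k, ray (zr (N k)) ∈ F.cones
  ne_zero : ∀ k, N k ≠ 0
  primitive : ∀ k, ray (zr (N k)) ∩ {x | IsLatticePoint x}
      = {x | ∃ c : ℕ, x = (c : ℝ) • zr (N k)}
  inj : Function.Injective N
  complete : ∀ σ ∈ F.cones, Module.finrank ℝ (Submodule.span ℝ σ) = 1 →
      ∃ k, σ = ray (zr (N k))

/-- Condition (2.9.1): a positive integral relation among the primitive generators. -/
def Cond1 {n r : ℕ} (N : Fin r → Fin n → ℤ) : Prop :=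
  ∃ d : Fin r → ℕ, (∀ k, 0 < d k) ∧ ∑ k, (d k : ℤ) • N k = 0

/-- Condition (2.9.2): the primitive generators span `ℤ^n` over `ℤ`. -/
def Cond2 {n r : ℕ} (N : Fin r → Fin n → ℤ) : Prop :=
  Submodule.span ℤ (Set.range N) = ⊤

/-- The underlying simplicial complex `K_Σ` of a fan. -/
def KC {n r : ℕ} (F : Fan n) (N : Fin r → Fin n → ℤ) : Set (Finset (Fin r)) :=
  {s | coneIdx N s ∈ F.cones}

/-- A primitive set: it spans no cone of the fan, but every proper subset does. -/
def PrimitiveSet {r : ℕ} (K : Set (Finset (Fin r))) (s : Finset (Fin r)) : Prop :=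
  s ∉ K ∧ ∀ t ⊂ s, t ∈ K

/-- `r_min`: the minimal cardinality of a primitive set. -/
def rmin {r : ℕ} (K : Set (Finset (Fin r))) : ℕ :=
  sInf {m | ∃ s : Finset (Fin r), PrimitiveSet K s ∧ s.card = m}

/-- `d_min = min {d_1, …, d_r}`. -/
def dmin {r : ℕ} (D : Fin r → ℕ) : ℕ := sInf (Set.range D)

/-- The stability dimension `d(D,Σ) = 2(r_min − 1) d_min − 2`. -/
def dBound {r : ℕ} (K : Set (Finset (Fin r))) (D : Fin r → ℕ) : ℤ :=
  2 * ((rmin K : ℤ) - 1) * (dmin D : ℤ) - 2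

/-- The connectivity bound `C_D(Σ) = 2(r_min − 1) d_min − 1`. -/
def CBound {r : ℕ} (K : Set (Finset (Fin r))) (D : Fin r → ℕ) : ℤ :=
  2 * ((rmin K : ℤ) - 1) * (dmin D : ℤ) - 1

/-! ### Coordinate subspaces, `U(K)`, `G_Σ` and the toric quotient -/

/-- The coordinate subspace `L_σ ⊆ ℂ^r`. -/
def LSub {r : ℕ} (σ : Finset (Fin r)) : Set (Fin r → ℂ) := {x | ∀ i ∈ σ, x i = 0}

/-- The complement `U(K)` of the coordinate subspace arrangement of type `K`. -/
def UK {r : ℕ} (K : Set (Finset (Fin r))) : Set (Fin r → ℂ) :=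
  (⋃ σ ∈ {s : Finset (Fin r) | s ∉ K}, LSub σ)ᶜ

lemma mem_UK {r : ℕ} {K : Set (Finset (Fin r))} {x : Fin r → ℂ} :
    x ∈ UK K ↔ ∀ σ : Finset (Fin r), σ ∉ K → ∃ i ∈ σ, x i ≠ 0 := by
  constructor
  · intro h σ hσ
    by_contra hc
    push_neg at hc
    exact h (Set.mem_biUnion hσ (fun i hi => hc i hi))
  · intro h hx
    rcases Set.mem_iUnion₂.1 hx with ⟨σ, hσ, hxσ⟩
    rcases h σ hσ with ⟨i, hi, hne⟩
    exact hne (hxσ i hi)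

/-- The group `G_Σ` (as a subset of `ℂ^r`). -/
def GSet {n r : ℕ} (N : Fin r → Fin n → ℤ) : Set (Fin r → ℂ) :=
  {μ | (∀ k, μ k ≠ 0) ∧ ∀ m : Fin n → ℤ, ∏ k, μ k ^ (∑ j, N k j * m j) = 1}

/-- The orbit relation of the `G_Σ`-action on `U(K_Σ)`. -/
def toricRel {n r : ℕ} (N : Fin r → Fin n → ℤ) (K : Set (Finset (Fin r)))
    (x y : ↥(UK K)) : Prop :=
  ∃ μ ∈ GSet N, (fun i => μ i * (x : Fin r → ℂ) i) = (y : Fin r → ℂ)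

/-- The toric variety `X_Σ = U(K_Σ)/G_Σ`, as a topological quotient. -/
def XS {n r : ℕ} (N : Fin r → Fin n → ℤ) (K : Set (Finset (Fin r))) : Type :=
  Quot (toricRel N K)

instance {n r : ℕ} (N : Fin r → Fin n → ℤ) (K : Set (Finset (Fin r))) :
    TopologicalSpace (XS N K) :=
  instTopologicalSpaceQuot

/-- The quotient map `q_Σ : U(K_Σ) → X_Σ`. -/
def qmap {n r : ℕ} (N : Fin r → Fin n → ℤ) (K : Set (Finset (Fin r))) :
    ↥(UK K) → XS N K :=
  Quot.mk (toricRel N K)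

/-- `q_Σ` as a continuous map. -/
def qCont {n r : ℕ} (N : Fin r → Fin n → ℤ) (K : Set (Finset (Fin r))) :
    C(↥(UK K), XS N K) :=
  ⟨qmap N K, continuous_quot_mk⟩

lemma coneIdx_empty {n r : ℕ} (N : Fin r → Fin n → ℤ) :
    coneIdx N (∅ : Finset (Fin r)) = ({0} : Set (Fin n → ℝ)) := by
  ext x
  constructor
  · rintro ⟨lam, -, hx⟩
    simpa using hx
  · intro hx
    exact ⟨0, fun i => le_refl 0, by simpa using hx⟩

lemma empty_mem_KC {n r : ℕ} (F : Fan n) (N : Fin r → Fin n → ℤ) :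
    (∅ : Finset (Fin r)) ∈ KC F N := by
  show coneIdx N ∅ ∈ F.cones
  rw [coneIdx_empty]
  exact F.zero_mem

/-- The point `(1,…,1)`. -/
def onesC {r : ℕ} : Fin r → ℂ := fun _ => 1

lemma ones_mem_UK {r : ℕ} {K : Set (Finset (Fin r))} (h : (∅ : Finset (Fin r)) ∈ K) :
    (onesC : Fin r → ℂ) ∈ UK K := by
  rw [mem_UK]
  intro σ hσ
  rcases Finset.nonempty_iff_ne_empty.2 (fun he : σ = ∅ => hσ (by rw [he]; exact h)) with ⟨i, hi⟩
  exact ⟨i, hi, one_ne_zero⟩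

/-- The base point `(1,…,1)` of `U(K_Σ)`. -/
def onesUK {r : ℕ} {K : Set (Finset (Fin r))} (h : (∅ : Finset (Fin r)) ∈ K) : ↥(UK K) :=
  ⟨onesC, ones_mem_UK h⟩

/-- The base point `[1,…,1]` of `X_Σ`. -/
def baseX {n r : ℕ} (N : Fin r → Fin n → ℤ) (K : Set (Finset (Fin r)))
    (h : (∅ : Finset (Fin r)) ∈ K) : XS N K :=
  qmap N K (onesUK h)



/-! ### Spaces of tuples of monic polynomials -/

/-- The monic polynomial `z^d + a_{d-1} z^{d-1} + ⋯ + a_0` with coefficient data `a`. -/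
def toPoly {d : ℕ} (a : Fin d → ℂ) : Polynomial ℂ :=
  Polynomial.X ^ d + ∑ i : Fin d, Polynomial.C (a i) * Polynomial.X ^ (i : ℕ)

/-- The space `Pol*_D(S¹, X_Σ)` of `r`-tuples of monic polynomials of multidegree `D`
(in coefficient coordinates) such that for every `σ ∉ K` the polynomials `{f_i : i ∈ σ}`
have no common real root. -/
def PolSp {r : ℕ} (K : Set (Finset (Fin r))) (D : Fin r → ℕ) :
    Set (∀ k : Fin r, Fin (D k) → ℂ) :=
  {f | ∀ σ : Finset (Fin r), σ ∉ K → ∀ t : ℝ,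
        ∃ k ∈ σ, (toPoly (f k)).eval (t : ℂ) ≠ 0}

lemma polEval_mem_UK {r : ℕ} {K : Set (Finset (Fin r))} {D : Fin r → ℕ}
    (f : ↥(PolSp K D)) (t : ℝ) :
    (fun k => (toPoly (f.1 k)).eval (t : ℂ)) ∈ UK K :=
  mem_UK.2 fun σ hσ => f.2 σ hσ t

/-! ### Loop spaces and induced maps on homotopy groups -/

/-- The loop space `Ω X = Map*(S¹, X)` with `S¹ = ℝ ∪ {∞}` (the one-point
compactification of `ℝ`), based at `x₀`. -/
def Loop (X : Type*) [TopologicalSpace X] (x₀ : X) : Type _ :=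
  {γ : C(OnePoint ℝ, X) // γ OnePoint.infty = x₀}

instance {X : Type*} [TopologicalSpace X] (x₀ : X) : TopologicalSpace (Loop X x₀) :=
  instTopologicalSpaceSubtype

/-- The constant loop, base point of `Ω X`. -/
def Loop.const {X : Type*} [TopologicalSpace X] (x₀ : X) : Loop X x₀ :=
  ⟨ContinuousMap.const _ x₀, rfl⟩

/-- A based continuous map induces a continuous map of loop spaces. -/
def loopMap {X Y : Type*} [TopologicalSpace X] [TopologicalSpace Y] {x₀ : X} {y₀ : Y}
    (f : C(X, Y)) (hf : f x₀ = y₀) : C(Loop X x₀, Loop Y y₀) where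
  toFun γ := ⟨f.comp γ.1, by simp [γ.2, hf]⟩
  continuous_toFun := by
    apply Continuous.subtype_mk
    exact (ContinuousMap.continuous_postcomp f).comp continuous_subtype_val

/-- The map induced by a continuous map on homotopy groups (`π_q`). -/
def piMap (q : ℕ) {X Y : Type*} [TopologicalSpace X] [TopologicalSpace Y]
    (f : C(X, Y)) (x : X) :
    HomotopyGroup (Fin q) X x → HomotopyGroup (Fin q) Y (f x) :=
  Quotient.map
    (fun p => ⟨f.comp p.1, fun y hy => by
      show f (p.1 y) = f x
      rw [p.2 y hy]⟩)
    (fun p₁ p₂ h => h.elim fun H => ⟨H.compContinuousMap f⟩)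

/-- `f` is a homotopy equivalence through dimension `d`: it induces isomorphisms on
`π_k` for all `k ≤ d` (at every base point). -/
def HomotopyEquivThrough {X Y : Type*} [TopologicalSpace X] [TopologicalSpace Y]
    (f : C(X, Y)) (d : ℤ) : Prop :=
  ∀ (x : X) (k : ℕ), (k : ℤ) ≤ d → Function.Bijective (piMap k f x)

/-- A genuine homotopy equivalence. -/
def IsHtpyEquiv {X Y : Type*} [TopologicalSpace X] [TopologicalSpace Y]
    (f : C(X, Y)) : Prop :=
  ∃ g : C(Y, X), (f.comp g).Homotopic (ContinuousMap.id Y) ∧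
    (g.comp f).Homotopic (ContinuousMap.id X)

/-! ### `i_D`, lifts, and stabilization maps -/

/-- `j : Pol*_D → Ω U(K_Σ)` is a lift of `i_D` through `Ω q_Σ`, i.e. `Ω q_Σ ∘ j = i_D`:
for every tuple `f` and real `t`, the loop `j f` at time `t` lies over the point
`[f_1(t), …, f_r(t)]` of `X_Σ` (and at `∞` over `[1,…,1]`, automatically). -/
def IsLiftOfID {n r : ℕ} (N : Fin r → Fin n → ℤ) (K : Set (Finset (Fin r)))
    (hE : (∅ : Finset (Fin r)) ∈ K) (D : Fin r → ℕ)
    (j : ↥(PolSp K D) → Loop ↥(UK K) (onesUK hE)) : Prop :=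
  ∀ (f : ↥(PolSp K D)) (t : ℝ),
    qmap N K ((j f).1 (t : OnePoint ℝ)) =
      qmap N K ⟨fun k => (toPoly (f.1 k)).eval (t : ℂ), polEval_mem_UK f t⟩

/-- `i : Pol*_D → Ω X_Σ` is the map `i_D` given by evaluation. -/
def IsID {n r : ℕ} (N : Fin r → Fin n → ℤ) (K : Set (Finset (Fin r)))
    (hE : (∅ : Finset (Fin r)) ∈ K) (D : Fin r → ℕ)
    (i : ↥(PolSp K D) → Loop (XS N K) (baseX N K hE)) : Prop :=
  ∀ (f : ↥(PolSp K D)) (t : ℝ),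
    (i f).1 (t : OnePoint ℝ) =
      qmap N K ⟨fun k => (toPoly (f.1 k)).eval (t : ℂ), polEval_mem_UK f t⟩

/-- `φ` is an admissible parameter for the stabilization maps: a homeomorphism of `ℂ`
onto the half plane `{Re < bound}` carrying `ℝ` onto `(-∞, bound)`. -/
def AdmissiblePhi (bound : ℝ) (φ : ℂ → ℂ) : Prop :=
  Continuous φ ∧ Function.Injective φ ∧ IsOpenMap φ ∧
    Set.range φ = {w : ℂ | w.re < bound} ∧
    φ '' {z : ℂ | z.im = 0} = {z : ℂ | z.im = 0 ∧ z.re < bound}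

/-- The defining property of the stabilization map
`s_{D,D'}(f)_k = φ(f_k) · (z - x_k)^{d'_k - d_k}`, where `φ(f)` denotes the monic
polynomial whose roots are the images under `φ` of the roots of `f`. -/
def StabSpec {r : ℕ} (K : Set (Finset (Fin r))) (φ : ℂ → ℂ) (xpt : Fin r → ℂ)
    (D D' : Fin r → ℕ) (s : ↥(PolSp K D) → ↥(PolSp K D')) : Prop :=
  ∀ (f : ↥(PolSp K D)) (k : Fin r),
    toPoly ((s f).1 k) =
      (((toPoly (f.1 k)).roots.map φ).map
        fun α => Polynomial.X - Polynomial.C α).prod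
        * (Polynomial.X - Polynomial.C (xpt k)) ^ (D' k - D k)

/-- The general defining property of the map `j_D : Pol*_D → Ω U(K_Σ)`:
when `∑ d_k n_k = 0` it is a lift of `i_D` through `Ω q_Σ`, and otherwise it is the
composite `j_{D₀} ∘ s_{D,D₀}` for a suitable `D₀ = m₀ D*` as in condition (2.9.1). -/
def IsJD {n r : ℕ} (N : Fin r → Fin n → ℤ) (K : Set (Finset (Fin r)))
    (hE : (∅ : Finset (Fin r)) ∈ K) (D : Fin r → ℕ)
    (j : C(↥(PolSp K D), Loop ↥(UK K) (onesUK hE))) : Prop :=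
  ((∑ k, (D k : ℤ) • N k = 0) ∧ IsLiftOfID N K hE D j) ∨
  ((∑ k, (D k : ℤ) • N k ≠ 0) ∧
    ∃ (dstar : Fin r → ℕ) (m₀ : ℕ),
      (∀ k, 0 < dstar k) ∧ (∑ k, (dstar k : ℤ) • N k = 0) ∧
      (∀ k, D k < m₀ * dstar k) ∧
      ∃ (φ : ℂ → ℂ) (xpt : Fin r → ℂ),
        AdmissiblePhi ((∑ k, D k : ℕ) : ℝ) φ ∧
        (∀ k, ((∑ k, D k : ℕ) : ℝ) < (xpt k).re) ∧ Function.Injective xpt ∧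
        ∃ (j₀ : C(↥(PolSp K fun k => m₀ * dstar k), Loop ↥(UK K) (onesUK hE)))
          (s₀ : C(↥(PolSp K D), ↥(PolSp K fun k => m₀ * dstar k))),
          IsLiftOfID N K hE _ j₀ ∧ StabSpec K φ xpt D _ s₀ ∧ j = j₀.comp s₀)

/-! ### Stabilized (colimit) spaces -/

/-- The multidegree `D + t·e`. -/
def Dt {r : ℕ} (D : Fin r → ℕ) (t : ℕ) : Fin r → ℕ := fun k => D k + t

/-- Carrier of the stabilized space: the disjoint union of the `Pol*_{D+te}`. -/
def ColCar {r : ℕ} (K : Set (Finset (Fin r))) (D : Fin r → ℕ) : Type :=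
  Σ t : ℕ, ↥(PolSp K (Dt D t))

instance {r : ℕ} (K : Set (Finset (Fin r))) (D : Fin r → ℕ) :
    TopologicalSpace (ColCar K D) := by
  unfold ColCar; infer_instance

/-- The identifications generating the colimit along the stabilization maps. -/
def ColRel {r : ℕ} (K : Set (Finset (Fin r))) (D : Fin r → ℕ)
    (s : ∀ t : ℕ, ↥(PolSp K (Dt D t)) → ↥(PolSp K (Dt D (t + 1)))) :
    ColCar K D → ColCar K D → Prop :=
  fun a b => b = ⟨a.1 + 1, s a.1 a.2⟩

/-- The stabilized space `Pol^Σ_{D+∞} = colim_t Pol*_{D+te}(S¹, X_Σ)`. -/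
def PolColim {r : ℕ} (K : Set (Finset (Fin r))) (D : Fin r → ℕ)
    (s : ∀ t : ℕ, ↥(PolSp K (Dt D t)) → ↥(PolSp K (Dt D (t + 1)))) : Type :=
  Quot (ColRel K D s)

instance {r : ℕ} (K : Set (Finset (Fin r))) (D : Fin r → ℕ)
    (s : ∀ t : ℕ, ↥(PolSp K (Dt D t)) → ↥(PolSp K (Dt D (t + 1)))) :
    TopologicalSpace (PolColim K D s) :=
  instTopologicalSpaceQuot

/-- Admissibility of a family of stabilization maps `s_{D+te}`. -/
def AdmissibleStabFamily {r : ℕ} (K : Set (Finset (Fin r))) (D : Fin r → ℕ)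
    (s : ∀ t : ℕ, ↥(PolSp K (Dt D t)) → ↥(PolSp K (Dt D (t + 1)))) : Prop :=
  ∀ t : ℕ, ∃ (φ : ℂ → ℂ) (xpt : Fin r → ℂ),
    AdmissiblePhi ((∑ k, Dt D t k : ℕ) : ℝ) φ ∧
    (∀ k, ((∑ k, Dt D t k : ℕ) : ℝ) < (xpt k).re) ∧ Function.Injective xpt ∧
    StabSpec K φ xpt (Dt D t) (Dt D (t + 1)) (s t)


/-! ### Coefficient vectors -/

/-- polynomial of degree `< d` with given coefficients -/
def lowPoly {d : ℕ} (a : Fin d → ℂ) : Polynomial ℂ :=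
  ∑ i : Fin d, Polynomial.C (a i) * Polynomial.X ^ (i : ℕ)

/-- coefficient vector -/
def coefVec (d : ℕ) (P : Polynomial ℂ) : Fin d → ℂ := fun i => P.coeff i

lemma toPoly_eq {d : ℕ} (a : Fin d → ℂ) : toPoly a = Polynomial.X ^ d + lowPoly a := rfl

lemma coeff_lowPoly {d : ℕ} (a : Fin d → ℂ) (j : ℕ) :
    (lowPoly a).coeff j = if h : j < d then a ⟨j, h⟩ else 0 := by
  unfold lowPoly
  simp only [Polynomial.finsetSum_coeff, Polynomial.coeff_C_mul_X_pow]
  split_ifs with h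
  · rw [Finset.sum_eq_single ⟨j, h⟩]
    · simp
    · intro b _ hb
      rw [if_neg]
      intro hj
      exact hb (Fin.ext hj.symm)
    · simp
  · apply Finset.sum_eq_zero
    intro b _
    rw [if_neg]
    intro hj
    exact h (hj ▸ b.2)

lemma degree_lowPoly_lt {d : ℕ} (a : Fin d → ℂ) : (lowPoly a).degree < d := by
  rw [Polynomial.degree_lt_iff_coeff_zero]
  intro m hm
  rw [coeff_lowPoly, dif_neg (not_lt.2 hm)]

lemma toPoly_monic {d : ℕ} (a : Fin d → ℂ) : (toPoly a).Monic :=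
  Polynomial.monic_X_pow_add (degree_lowPoly_lt a)

lemma toPoly_natDegree {d : ℕ} (a : Fin d → ℂ) : (toPoly a).natDegree = d := by
  rw [toPoly_eq, Polynomial.natDegree_add_eq_left_of_degree_lt]
  · simp
  · simpa using degree_lowPoly_lt a

lemma coefVec_toPoly {d : ℕ} (a : Fin d → ℂ) : coefVec d (toPoly a) = a := by
  ext i
  simp [coefVec, toPoly_eq, coeff_lowPoly, Polynomial.coeff_X_pow, i.2.ne]

lemma lowPoly_coefVec {d : ℕ} (P : Polynomial ℂ) (h : P.degree < d) :
    lowPoly (coefVec d P) = P := by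
  ext j
  rw [coeff_lowPoly]
  split_ifs with hj
  · rfl
  · exact ((Polynomial.degree_lt_iff_coeff_zero _ _).1 h j (not_lt.1 hj)).symm

lemma toPoly_coefVec {d : ℕ} (P : Polynomial ℂ) (h : P.Monic) (hd : P.natDegree = d) :
    toPoly (coefVec d P) = P := by
  ext j
  rw [toPoly_eq, Polynomial.coeff_add, coeff_lowPoly, Polynomial.coeff_X_pow]
  rcases lt_trichotomy j d with hj | hj | hj
  · rw [dif_pos hj, if_neg hj.ne]; simp [coefVec]
  · subst hj; simp [← hd, h.coeff_natDegree]
  · rw [dif_neg (by omega), if_neg (by omega), Polynomial.coeff_eq_zero_of_natDegree_lt (by omega)]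
    simp

/-! ### smooth families of polynomials -/

/-- smooth family of polynomials -/
def SmP {E : Type*} [NormedAddCommGroup E] [NormedSpace ℝ E] (f : E → Polynomial ℂ) : Prop :=
  ∀ n, ContDiff ℝ 1 fun x => (f x).coeff n

section
variable {E : Type*} [NormedAddCommGroup E] [NormedSpace ℝ E]

lemma SmP.const (P : Polynomial ℂ) : SmP fun _ : E => P := fun _ => contDiff_const

lemma SmP.add {f g : E → Polynomial ℂ} (hf : SmP f) (hg : SmP g) : SmP fun x => f x + g x := by
  intro n
  simpa using (hf n).add (hg n)

lemma SmP.sub {f g : E → Polynomial ℂ} (hf : SmP f) (hg : SmP g) : SmP fun x => f x - g x := by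
  intro n
  simpa using (hf n).sub (hg n)

lemma SmP.mul {f g : E → Polynomial ℂ} (hf : SmP f) (hg : SmP g) : SmP fun x => f x * g x := by
  intro n
  simp only [Polynomial.coeff_mul]
  exact ContDiff.sum fun i _ => (hf i.1).mul (hg i.2)

lemma SmP.prod {ι : Type*} (s : Finset ι) {f : ι → E → Polynomial ℂ} (hf : ∀ i, SmP (f i)) :
    SmP fun x => ∏ i ∈ s, f i x := by
  induction s using Finset.induction_on with
  | empty => simpa using SmP.const (1 : Polynomial ℂ)
  | insert a s ha ih =>
    simp only [Finset.prod_insert ha]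
    exact (hf a).mul ih

lemma SmP.C {f : E → ℂ} (hf : ContDiff ℝ 1 f) : SmP fun x => Polynomial.C (f x) := by
  intro n
  simp only [Polynomial.coeff_C]
  split_ifs
  · exact hf
  · exact contDiff_const

lemma SmP.lowPoly {d : ℕ} {f : E → Fin d → ℂ} (hf : ContDiff ℝ 1 f) :
    SmP fun x => lowPoly (f x) := by
  intro n
  simp only [coeff_lowPoly]
  split_ifs with h
  · exact contDiff_pi.1 hf ⟨n, h⟩
  · exact contDiff_const

lemma SmP.toPoly {d : ℕ} {f : E → Fin d → ℂ} (hf : ContDiff ℝ 1 f) :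
    SmP fun x => toPoly (f x) := by
  simp only [toPoly_eq]
  exact (SmP.const _).add (SmP.lowPoly hf)

lemma SmP.coefVec {f : E → Polynomial ℂ} (hf : SmP f) (d : ℕ) :
    ContDiff ℝ 1 fun x => coefVec d (f x) :=
  contDiff_pi.2 fun i => hf i

end

/-! ### separation -/

/-- Real points where the other coordinates are degenerate. -/
def SSet {r : ℕ} (K : Set (Finset (Fin r))) (k : Fin r) {e : Fin r → ℕ}
    (u : ∀ i, Fin (e i) → ℂ) : Set ℝ :=
  {x | ∃ σ : Finset (Fin r), σ ∉ K ∧ k ∈ σ ∧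
    ∀ i ∈ σ, i ≠ k → (toPoly (u i)).eval (x : ℂ) = 0}

/-- Gordan lemma. -/
lemma gordan (S : Finset ℝ) (q : ℝ → ℂ) (ε : ℕ)
    (hno : ¬ ∃ p : Polynomial ℂ, p.degree < ε ∧
      ∀ x ∈ S, 0 < ((starRingEnd ℂ) (q x) * p.eval (x : ℂ)).re) :
    ∃ T ⊆ S, T.Nonempty ∧ ∃ μ : ℝ → ℝ, (∀ x ∈ T, 0 < μ x) ∧
      ∀ p : Polynomial ℂ, p.degree < ε →
        ∑ x ∈ T, (μ x : ℂ) * ((starRingEnd ℂ) (q x) * p.eval (x : ℂ)) = 0 := by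
  let A : Polynomial.degreeLT ℂ ε →ₗ[ℝ] (S → ℝ) :=
    { toFun := fun p x => ((starRingEnd ℂ) (q x) * (p : Polynomial ℂ).eval ((x : ℝ) : ℂ)).re
      map_add' := by intro p p'; ext x; simp; ring
      map_smul' := by intro c p; ext x; simp; ring }
  let O : Set (S → ℝ) := Set.pi Set.univ fun _ => Set.Ioi (0 : ℝ)
  have hOc : Convex ℝ O := convex_pi fun i _ => convex_Ioi 0
  have hOo : IsOpen O := isOpen_set_pi Set.finite_univ fun i _ => isOpen_Ioi
  have hdis : Disjoint O (LinearMap.range A : Set (S → ℝ)) := by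
    rw [Set.disjoint_left]
    rintro y hy ⟨p, rfl⟩
    apply hno
    refine ⟨p, Polynomial.mem_degreeLT.1 p.2, fun x hx => ?_⟩
    exact hy ⟨x, hx⟩ (Set.mem_univ _)
  obtain ⟨f, u, hf1, hf2⟩ := geometric_hahn_banach_open hOc hOo
    (Submodule.convex (LinearMap.range A)) hdis
  have hu0 : u ≤ 0 := by simpa using hf2 0 (Submodule.zero_mem _)
  have hfA : ∀ p, f (A p) = 0 := by
    intro p
    by_contra hne
    have h1 := hf2 (A (((u - 1) / f (A p)) • p)) ⟨_, rfl⟩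
    rw [map_smul, map_smul, smul_eq_mul, div_mul_cancel₀ _ hne] at h1
    linarith
  have hfs : ∀ y : S → ℝ, f y = ∑ x, y x * f (Pi.single x 1) := by
    intro y
    conv_lhs => rw [show y = ∑ x, y x • (Pi.single x (1:ℝ) : S → ℝ) by
      ext i; simp [Finset.sum_apply, Pi.single_apply]]
    simp [map_sum]
  have hneg : ∀ x, f (Pi.single x 1) ≤ 0 := by
    intro x
    by_contra hlt
    push Not at hlt
    set t := f (Pi.single x 1)
    have h1 : f (1 : S → ℝ) < 0 := (hf1 1 (by intro i _; simp)).trans_le hu0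
    have h2 := hf1 ((1 : S → ℝ) + (-(f 1) / t) • Pi.single x 1) (by
      intro i _
      have : 0 ≤ (-(f 1) / t) * (Pi.single x (1:ℝ) : S → ℝ) i := by
        apply mul_nonneg
        · apply div_nonneg <;> linarith
        · by_cases h : i = x
          · subst h; simp
          · simp [h]
      simp only [Set.mem_Ioi, Pi.add_apply, Pi.one_apply, Pi.smul_apply, smul_eq_mul]
      linarith)
    rw [map_add, map_smul, smul_eq_mul, div_mul_cancel₀ _ hlt.ne'] at h2
    linarith
  let μ : ℝ → ℝ := fun x => if h : x ∈ S then - f (Pi.single ⟨x, h⟩ 1) else 0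
  have hμ : ∀ x : S, μ x = - f (Pi.single x 1) := by
    intro x
    simp [μ]
  have hμ0 : ∀ x ∈ S, 0 ≤ μ x := by
    intro x hx
    rw [hμ ⟨x, hx⟩]
    linarith [hneg ⟨x, hx⟩]
  have key : ∀ p : Polynomial ℂ, p.degree < ε →
      ∑ x ∈ S, μ x * ((starRingEnd ℂ) (q x) * p.eval (x : ℂ)).re = 0 := by
    intro p hp
    have h1 := hfA ⟨p, Polynomial.mem_degreeLT.2 hp⟩
    rw [hfs] at h1
    rw [← Finset.sum_coe_sort S]
    rw [← neg_eq_zero, ← Finset.sum_neg_distrib] at h1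
    rw [← h1]
    apply Finset.sum_congr rfl
    intro x _
    rw [hμ]
    simp only [A, LinearMap.coe_mk, AddHom.coe_mk]
    ring
  have keyC : ∀ p : Polynomial ℂ, p.degree < ε →
      ∑ x ∈ S, (μ x : ℂ) * ((starRingEnd ℂ) (q x) * p.eval (x : ℂ)) = 0 := by
    intro p hp
    apply Complex.ext
    · rw [Complex.re_sum, Complex.zero_re, ← key p hp]
      apply Finset.sum_congr rfl
      intro x _
      rw [Complex.re_ofReal_mul]
    · have h3 := key (Polynomial.C (-Complex.I) * p) (by
        refine lt_of_le_of_lt (Polynomial.degree_mul_le _ _) ?_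
        refine lt_of_le_of_lt (add_le_add_left (Polynomial.degree_C_le) _) ?_
        simpa using hp)
      rw [Complex.im_sum, Complex.zero_im, ← h3]
      apply Finset.sum_congr rfl
      intro x _
      rw [Complex.im_ofReal_mul]
      congr 1
      simp
      ring
  refine ⟨S.filter fun x => 0 < μ x, Finset.filter_subset _ _, ?_, μ, ?_, ?_⟩
  · by_contra hemp
    rw [Finset.not_nonempty_iff_eq_empty, Finset.filter_eq_empty_iff] at hemp
    have h1 : f (1 : S → ℝ) < 0 := (hf1 1 (by intro i _; simp)).trans_le hu0
    rw [hfs] at h1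
    have h2 : ∑ x : S, (1 : S → ℝ) x * f (Pi.single x 1) = 0 := by
      apply Finset.sum_eq_zero
      intro x _
      have := hemp x.2
      rw [hμ] at this
      have := hneg x
      simp only [Pi.one_apply, one_mul]
      linarith
    linarith
  · intro x hx
    exact (Finset.mem_filter.1 hx).2
  · intro p hp
    rw [← keyC p hp, Finset.sum_filter]
    apply Finset.sum_congr rfl
    intro x hx
    split_ifs with h
    · rfl
    · have : μ x = 0 := le_antisymm (not_lt.1 h) (hμ0 x hx)
      simp [this]

lemma decomp_aux (T : Finset ℝ) (hT : T.Nonempty) (μ : ℝ → ℝ) (hμ : ∀ x ∈ T, 0 < μ x)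
    (q : ℝ → ℂ) (hq : ∀ x ∈ T, q x ≠ 0) (ε : ℕ)
    (h : ∀ p : Polynomial ℂ, p.degree < ε →
        ∑ x ∈ T, (μ x : ℂ) * ((starRingEnd ℂ) (q x) * p.eval (x : ℂ)) = 0) :
    ε ≤ T.card ∧ ∃ (s : Fin T.card → ℝ) (κ : Fin (T.card - ε) → ℂ), ∀ x ∈ T,
      q x = (lowPoly (fun i => (s i : ℂ))).eval (x : ℂ) * (lowPoly κ).eval (x : ℂ) := by
  have hinj : Set.InjOn (fun x : ℝ => (x : ℂ)) T := Complex.ofReal_injective.injOn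
  have hcard : ε ≤ T.card := by
    by_contra hlt
    push Not at hlt
    have h1 := h (Lagrange.interpolate T (fun x : ℝ => (x : ℂ)) q)
      ((Lagrange.degree_interpolate_lt _ hinj).trans (by exact_mod_cast hlt))
    have h2 : ∑ x ∈ T, ((μ x * Complex.normSq (q x) : ℝ) : ℂ) = 0 := by
      rw [← h1]
      apply Finset.sum_congr rfl
      intro x hx
      rw [Lagrange.eval_interpolate_at_node _ hinj hx, mul_comm ((starRingEnd ℂ) (q x)),
        Complex.mul_conj]
      push_cast; ring
    rw [← Complex.ofReal_sum] at h2
    have h3 : ∑ x ∈ T, μ x * Complex.normSq (q x) = 0 := by exact_mod_cast h2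
    have h4 : 0 < ∑ x ∈ T, μ x * Complex.normSq (q x) :=
      Finset.sum_pos (fun x hx => mul_pos (hμ x hx) (Complex.normSq_pos.2 (hq x hx))) hT
    linarith
  refine ⟨hcard, ?_⟩
  let w : ℝ → ℝ := fun x => ∏ l ∈ T.erase x, (x - l)
  have hw : ∀ x, w x ≠ 0 := by
    intro x
    refine Finset.prod_ne_zero_iff.2 fun l hl => ?_
    exact sub_ne_zero.2 (Finset.ne_of_mem_erase hl).symm
  let sp : Polynomial ℝ := Lagrange.interpolate T id (fun x => 1 / (μ x * w x))
  have hsp : sp.degree < T.card := Lagrange.degree_interpolate_lt _ Function.injective_id.injOn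
  let κp : Polynomial ℂ := Lagrange.interpolate T (fun x : ℝ => (x : ℂ))
    (fun x => (μ x : ℂ) * q x * w x)
  have hκ0 : κp.degree < T.card := Lagrange.degree_interpolate_lt _ hinj
  have hmom : ∀ a < ε, ∑ x ∈ T, (μ x : ℂ) * q x * (x : ℂ) ^ a = 0 := by
    intro a ha
    have h1 := h (Polynomial.X ^ a) (by rw [Polynomial.degree_X_pow]; exact_mod_cast ha)
    have h2 := congrArg (starRingEnd ℂ) h1
    rw [map_sum, map_zero] at h2
    rw [← h2]
    apply Finset.sum_congr rfl
    intro x _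
    simp [mul_assoc]
  have hκ : κp.degree < (T.card - ε : ℕ) := by
    by_contra hge
    push Not at hge
    have hne : κp ≠ 0 := by
      intro h0
      rw [h0, Polynomial.degree_zero] at hge
      simp at hge
    have hnd1 : κp.natDegree < T.card := (Polynomial.natDegree_lt_iff_degree_lt hne).2 hκ0
    have hnd2 : T.card - ε ≤ κp.natDegree := Polynomial.le_natDegree_of_coe_le_degree hge
    let a := T.card - 1 - κp.natDegree
    have ha : a < ε := by
      have := hT.card_pos
      omega
    have hd : (κp * Polynomial.X ^ a).natDegree = T.card - 1 := by
      rw [Polynomial.natDegree_mul hne (by simp), Polynomial.natDegree_X_pow]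
      omega
    have hne' : κp * Polynomial.X ^ a ≠ 0 := mul_ne_zero hne (by simp)
    have hc := Lagrange.coeff_eq_sum (P := κp * Polynomial.X ^ a) hinj (by
      rw [← Polynomial.natDegree_lt_iff_degree_lt hne', hd]
      have := hT.card_pos
      omega)
    rw [← hd] at hc
    apply Polynomial.leadingCoeff_ne_zero.2 hne'
    rw [Polynomial.leadingCoeff, hc, ← hmom a ha]
    apply Finset.sum_congr rfl
    intro x hx
    have : (∏ l ∈ T.erase x, ((x : ℂ) - (l : ℂ))) = (w x : ℂ) := by
      simp [w]
    rw [this, Polynomial.eval_mul, Polynomial.eval_pow, Polynomial.eval_X,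
      Lagrange.eval_interpolate_at_node _ hinj hx]
    have : (w x : ℂ) ≠ 0 := by exact_mod_cast hw x
    field_simp
  refine ⟨fun i => sp.coeff i, coefVec _ κp, fun x hx => ?_⟩
  rw [lowPoly_coefVec _ hκ]
  have h1 : (fun i : Fin T.card => ((sp.coeff i : ℝ) : ℂ)) = coefVec _ (sp.map (algebraMap ℝ ℂ)) := by
    ext i; simp [coefVec]
  rw [h1, lowPoly_coefVec _ (by rwa [Polynomial.degree_map]),
    Lagrange.eval_interpolate_at_node _ hinj hx]
  have h2 : (sp.map (algebraMap ℝ ℂ)).eval (x : ℂ) = ((sp.eval x : ℝ) : ℂ) := by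
    have := Polynomial.eval_map_apply (p := sp) (f := algebraMap ℝ ℂ) x
    simpa using this
  have h3 : sp.eval x = 1 / (μ x * w x) := by
    have := Lagrange.eval_interpolate_at_node (s := T) (v := (id : ℝ → ℝ))
      (fun x => 1 / (μ x * w x)) Function.injective_id.injOn hx
    simpa only [id] using this
  rw [h2, h3]
  have : (w x : ℂ) ≠ 0 := by exact_mod_cast hw x
  have : (μ x : ℂ) ≠ 0 := by exact_mod_cast (hμ x hx).ne'
  push_cast
  field_simp

lemma dvd_prod_nodes {ι : Type*} (J : Finset ι) (x : ι → ℝ) (hx : Function.Injective x)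
    (P : Polynomial ℂ) (h : ∀ j ∈ J, P.eval (x j : ℂ) = 0) :
    (∏ j ∈ J, (Polynomial.X - Polynomial.C (x j : ℂ))) ∣ P := by
  apply Finset.prod_dvd_of_coprime
  · intro i _ j _ hij
    apply Polynomial.pairwise_coprime_X_sub_C (s := fun j => (x j : ℂ)) _ hij
    exact Complex.ofReal_injective.comp hx
  · intro j hj
    exact Polynomial.dvd_iff_isRoot.2 (h j hj)

/-- factor a monic polynomial plus correction -/
lemma factor_nodes {ι : Type*} (J : Finset ι) (x : ι → ℝ) (hx : Function.Injective x)
    {d : ℕ} (a : Fin d → ℂ) (R : Polynomial ℂ) (hR : R.degree < d)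
    (h : ∀ j ∈ J, (toPoly a).eval (x j : ℂ) = R.eval (x j : ℂ)) :
    J.card ≤ d ∧ ∃ b : Fin (d - J.card) → ℂ,
      toPoly a = R + (∏ j ∈ J, (Polynomial.X - Polynomial.C (x j : ℂ))) * toPoly b := by
  obtain ⟨Q, hQ⟩ := dvd_prod_nodes J x hx (toPoly a - R) (by
    intro j hj
    rw [Polynomial.eval_sub, h j hj, sub_self])
  have hdeg : (toPoly a).degree = d := by
    rw [Polynomial.degree_eq_natDegree (toPoly_monic a).ne_zero, toPoly_natDegree]
  have hmon : (toPoly a - R).Monic := (toPoly_monic a).sub_of_left (by rwa [hdeg])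
  have hω : (∏ j ∈ J, (Polynomial.X - Polynomial.C (x j : ℂ))).Monic :=
    Polynomial.monic_prod_of_monic _ _ fun j _ => Polynomial.monic_X_sub_C _
  have hQm : Q.Monic := by
    rw [hQ] at hmon
    exact hω.of_mul_monic_left hmon
  have hnd : (toPoly a - R).natDegree = d := by
    apply Polynomial.natDegree_eq_of_degree_eq_some
    rw [Polynomial.degree_sub_eq_left_of_degree_lt (by rwa [hdeg]), hdeg]
  have hωd : (∏ j ∈ J, (Polynomial.X - Polynomial.C (x j : ℂ))).natDegree = J.card := by
    rw [Polynomial.natDegree_prod_of_monic _ _ fun j _ => Polynomial.monic_X_sub_C _]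
    simp
  rw [hQ, hω.natDegree_mul hQm, hωd] at hnd
  refine ⟨by omega, coefVec _ Q, ?_⟩
  rw [toPoly_coefVec Q hQm (by omega), ← hQ]
  ring

/-- the parameter space -/
abbrev ParE (m n ε : ℕ) {r : ℕ} (e g : Fin r → ℕ) : Type :=
  (Fin m → ℝ) × (Fin n → ℝ) × (Fin n → ℝ) × (Fin (n - ε) → ℂ) × (∀ i, Fin (e i - g i) → ℂ)

/-- index sets -/
def JSet {n r : ℕ} (σ : Fin n → Finset (Fin r)) (i : Fin r) : Finset (Fin n) :=
  Finset.univ.filter fun j => i ∈ σ j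

/-- the parametrisation of bad perturbations -/
def parMap {m r : ℕ} (n ε : ℕ) (k : Fin r) (e : Fin r → ℕ) (σ : Fin n → Finset (Fin r))
    (v : (Fin m → ℝ) → ∀ i, Fin (e i) → ℂ)
    (z : ParE m n ε e fun i => (JSet σ i).card) : ∀ i, Fin (e i) → ℂ :=
  fun i => coefVec (e i) ((if i = k then
      lowPoly (fun j => (z.2.2.1 j : ℂ)) * lowPoly z.2.2.2.1 else 0) +
    (∏ j ∈ JSet σ i, (Polynomial.X - Polynomial.C (z.2.1 j : ℂ))) * toPoly (z.2.2.2.2 i)) - v z.1 i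

lemma parMap_contDiff {m r : ℕ} (n ε : ℕ) (k : Fin r) (e : Fin r → ℕ) (σ : Fin n → Finset (Fin r))
    (v : (Fin m → ℝ) → ∀ i, Fin (e i) → ℂ) (hv : ContDiff ℝ 1 v) :
    ContDiff ℝ 1 (parMap n ε k e σ v) := by
  have hof : ContDiff ℝ 1 (fun x : ℝ => (x : ℂ)) := Complex.ofRealCLM.contDiff
  refine contDiff_pi.2 fun i => ?_
  unfold parMap
  refine ContDiff.sub (SmP.coefVec (SmP.add ?_ (SmP.mul (SmP.prod _ fun j => ?_) ?_)) _) ?_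
  · split_ifs
    · refine SmP.mul (SmP.lowPoly ?_) (SmP.lowPoly ?_)
      · refine contDiff_pi.2 fun j => hof.comp ?_
        fun_prop
      · fun_prop
    · exact SmP.const 0
  · refine SmP.sub (SmP.const _) (SmP.C (hof.comp ?_))
    fun_prop
  · apply SmP.toPoly
    have h1 : ContDiff ℝ 1 fun z : ParE m n ε e fun i => (JSet σ i).card => z.2.2.2.2 := by
      fun_prop
    exact contDiff_pi.1 h1 i
  · exact (contDiff_pi.1 hv i).comp contDiff_fst

lemma finrank_piC {r : ℕ} (e : Fin r → ℕ) :
    Module.finrank ℝ (∀ i, Fin (e i) → ℂ) = 2 * ∑ i, e i := by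
  rw [Module.finrank_pi_fintype, Finset.mul_sum]
  apply Finset.sum_congr rfl
  intro i _
  rw [Module.finrank_pi_fintype]
  simp [Complex.finrank_real_complex, mul_comm]

lemma finrank_parE (m n ε : ℕ) {r : ℕ} (e g : Fin r → ℕ) :
    Module.finrank ℝ (ParE m n ε e g) = m + n + n + 2 * (n - ε) + 2 * ∑ i, (e i - g i) := by
  unfold ParE
  rw [Module.finrank_prod, Module.finrank_prod, Module.finrank_prod, Module.finrank_prod,
    finrank_piC]
  have : Module.finrank ℝ (Fin (n - ε) → ℂ) = 2 * (n - ε) := by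
    rw [Module.finrank_pi_fintype]
    simp [Complex.finrank_real_complex, mul_comm]
  rw [this]
  simp
  ring

/-- The perturbations that work. -/
def GoodPert {m r : ℕ} (K : Set (Finset (Fin r))) (k : Fin r) (e : Fin r → ℕ) (ε : ℕ)
    (v : (Fin m → ℝ) → ∀ i, Fin (e i) → ℂ) : Set (∀ i, Fin (e i) → ℂ) :=
  {c | ∀ b, (∀ x ∈ SSet K k (v b + c), (toPoly ((v b + c) k)).eval (x : ℂ) ≠ 0) →
      ∃ p : Polynomial ℂ, p.degree < ε ∧ ∀ x ∈ SSet K k (v b + c),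
        0 < ((starRingEnd ℂ) ((toPoly ((v b + c) k)).eval (x : ℂ)) * p.eval (x : ℂ)).re}

lemma SSet_finite {r : ℕ} (K : Set (Finset (Fin r))) (hcard : ∀ σ, σ ∉ K → 2 ≤ σ.card)
    (k : Fin r) {e : Fin r → ℕ} (u : ∀ i, Fin (e i) → ℂ) : (SSet K k u).Finite := by
  have h1 : ∀ i, {x : ℝ | (toPoly (u i)).eval (x : ℂ) = 0}.Finite := by
    intro i
    have := (toPoly (u i)).roots.toFinset.finite_toSet
    refine (this.preimage (f := fun x : ℝ => (x : ℂ)) Complex.ofReal_injective.injOn).subset ?_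
    intro x hx
    simp [(toPoly_monic (u i)).ne_zero]
    exact hx
  refine (Set.finite_iUnion h1).subset ?_
  rintro x ⟨σ, hσ, hk, hx⟩
  obtain ⟨i, hi, hik⟩ := Finset.exists_mem_ne (hcard σ hσ) k
  exact Set.mem_iUnion.2 ⟨i, hx i hi hik⟩

theorem goodPert_dense {m r : ℕ} (K : Set (Finset (Fin r))) (ρ : ℕ) (hρ : 2 ≤ ρ)
    (hcard : ∀ σ, σ ∉ K → ρ ≤ σ.card) (k : Fin r) (e : Fin r → ℕ) (ε : ℕ)
    (hm : m < 2 * (ρ - 1) * ε) (hN : 2 * ∑ i ∈ Finset.univ.erase k, e i ≤ e k)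
    (v : (Fin m → ℝ) → ∀ i, Fin (e i) → ℂ) (hv : ContDiff ℝ 1 v) :
    Dense (GoodPert K k e ε v) := by
  let Idx : Type := {s : Σ n : ℕ, Fin n → Finset (Fin r) //
    m + s.1 + s.1 + 2 * (s.1 - ε) + 2 * ∑ i, (e i - (JSet s.2 i).card) < 2 * ∑ i, e i}
  have hsub : (⋃ s : Idx, Set.range (parMap s.1.1 ε k e s.1.2 v))ᶜ ⊆ GoodPert K k e ε v := by
    rw [Set.compl_subset_comm]
    intro c hc
    simp only [GoodPert, Set.mem_compl_iff, Set.mem_ofPred_eq, not_forall] at hc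
    obtain ⟨b, hb, hno⟩ := hc
    set u := v b + c with hu
    have hfin := SSet_finite K (fun σ hσ => hρ.trans (hcard σ hσ)) k u
    obtain ⟨T, hTS, hTne, μ, hμ, hμp⟩ := gordan hfin.toFinset
      (fun x => (toPoly (u k)).eval (x : ℂ)) ε (by simpa using hno)
    have hTS' : ∀ x ∈ T, x ∈ SSet K k u := fun x hx => hfin.mem_toFinset.1 (hTS hx)
    set n := T.card with hn
    obtain ⟨hεn, s, κ, hsκ⟩ := decomp_aux T hTne μ hμ _ (fun x hx => hb x (hTS' x hx)) ε hμp
    let x : Fin n → ℝ := T.orderEmbOfFin rfl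
    have hxT : ∀ j, x j ∈ T := fun j => T.orderEmbOfFin_mem rfl j
    have hxinj : Function.Injective x := (T.orderEmbOfFin rfl).injective
    choose σ hσK hσk hσ0 using fun j => hTS' (x j) (hxT j)
    have hJk : JSet σ k = Finset.univ := by
      ext j; simp [JSet, hσk]
    have hfac0 : ∀ i, i ≠ k → (JSet σ i).card ≤ e i ∧ ∃ b : Fin (e i - (JSet σ i).card) → ℂ,
        toPoly (u i) = 0 + (∏ j ∈ JSet σ i, (Polynomial.X - Polynomial.C (x j : ℂ))) * toPoly b := by
      intro i hik
      apply factor_nodes _ x hxinj (u i) 0 (by simp)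
      intro j hj
      rw [hσ0 j i (Finset.mem_filter.1 hj).2 hik]
      simp
    have hJsum : ρ * n ≤ ∑ i, (JSet σ i).card := by
      have h1 : ∑ i, (JSet σ i).card = ∑ j, (σ j).card := by
        simp only [JSet, Finset.card_filter]
        rw [Finset.sum_comm]
        apply Finset.sum_congr rfl
        intro j _
        simp
      rw [h1]
      calc ρ * n = ∑ j : Fin n, ρ := by simp [mul_comm]
        _ ≤ _ := Finset.sum_le_sum fun j _ => hcard _ (hσK j)
    have hJk' : (JSet σ k).card = n := by rw [hJk]; simp
    have hsplit : ∑ i, (JSet σ i).card = (JSet σ k).card + ∑ i ∈ Finset.univ.erase k, (JSet σ i).card :=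
      (Finset.add_sum_erase _ _ (Finset.mem_univ k)).symm
    have h2n : 2 * n ≤ e k := by
      have h1 : ∑ i ∈ Finset.univ.erase k, (JSet σ i).card ≤ ∑ i ∈ Finset.univ.erase k, e i :=
        Finset.sum_le_sum fun i hi => (hfac0 i (Finset.ne_of_mem_erase hi)).1
      have h2 : 2 * n ≤ ρ * n := Nat.mul_le_mul_right _ hρ
      omega
    have hnpos : 0 < n := hTne.card_pos
    have hfac : ∀ i, (JSet σ i).card ≤ e i ∧ ∃ b : Fin (e i - (JSet σ i).card) → ℂ,
        toPoly (u i) = (if i = k then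
          lowPoly (fun j => (s j : ℂ)) * lowPoly κ else 0) +
          (∏ j ∈ JSet σ i, (Polynomial.X - Polynomial.C (x j : ℂ))) * toPoly b := by
      intro i
      by_cases hik : i = k
      · subst hik
        rw [if_pos rfl]
        apply factor_nodes _ x hxinj (u i)
        · rw [Polynomial.degree_lt_iff_coeff_zero]
          intro a ha
          apply Polynomial.coeff_eq_zero_of_degree_lt
          by_cases h0 : lowPoly κ = 0
          · rw [h0]; simp
          by_cases h1 : lowPoly (fun j => (s j : ℂ)) = 0
          · rw [h1]; simp
          have h2 := degree_lowPoly_lt κ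
          have h3 := degree_lowPoly_lt (fun j => (s j : ℂ))
          rw [← Polynomial.natDegree_lt_iff_degree_lt h0] at h2
          rw [← Polynomial.natDegree_lt_iff_degree_lt h1] at h3
          rw [← Polynomial.natDegree_lt_iff_degree_lt (mul_ne_zero h1 h0),
            Polynomial.natDegree_mul h1 h0]
          omega
        · intro j _
          rw [Polynomial.eval_mul]
          exact hsκ _ (hxT j)
      · rw [if_neg hik]
        exact hfac0 i hik
    choose hle hcoef hcoefeq using hfac
    refine Set.mem_iUnion.2 ⟨⟨⟨n, σ⟩, ?_⟩, ⟨b, x, s, κ, hcoef⟩, ?_⟩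
    · show m + n + n + 2 * (n - ε) + 2 * ∑ i, (e i - (JSet σ i).card) < 2 * ∑ i, e i
      have h1 : ∑ i, (e i - (JSet σ i).card) + ∑ i, (JSet σ i).card = ∑ i, e i := by
        rw [← Finset.sum_add_distrib]
        exact Finset.sum_congr rfl fun i _ => Nat.sub_add_cancel (hle i)
      obtain ⟨q, rfl⟩ := Nat.exists_eq_add_of_le hρ
      have h3 : 2 * (2 + q - 1) * ε = 2 * ε + 2 * (q * ε) := by
        rw [show 2 + q - 1 = 1 + q by omega]; ring
      rw [h3] at hm
      have h4 : (2 + q) * n = 2 * n + q * n := by ring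
      rw [h4] at hJsum
      have h5 : q * ε ≤ q * n := Nat.mul_le_mul_left _ hεn
      omega
    · ext1 i
      show coefVec (e i) (_) - v b i = c i
      rw [← hcoefeq i, coefVec_toPoly, hu]
      simp
  by_cases hemp : IsEmpty Idx
  · rw [Set.iUnion_of_empty, Set.compl_empty] at hsub
    exact dense_univ.mono hsub
  refine Dense.mono hsub (dense_compl_of_dimH_lt_finrank ?_)
  have hcount : Countable Idx := inferInstance
  rw [dimH_iUnion, finrank_piC]
  rw [not_isEmpty_iff] at hemp
  have hpos : 0 < 2 * ∑ i, e i := by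
    obtain ⟨s⟩ := hemp
    have := s.2
    omega
  refine lt_of_le_of_lt (iSup_le (a := ((2 * ∑ i, e i - 1 : ℕ) : ENNReal)) fun s => ?_) ?_
  · refine (parMap_contDiff _ _ _ _ _ _ hv).dimH_range_le.trans ?_
    rw [finrank_parE]
    have := s.2
    exact_mod_cast (by omega)
  · exact_mod_cast (by omega)

theorem polSp_pert_dense {r : ℕ} (K : Set (Finset (Fin r)))
    (hcard : ∀ σ, σ ∉ K → 2 ≤ σ.card) (e : Fin r → ℕ)
    (v : (Fin 1 → ℝ) → ∀ i, Fin (e i) → ℂ) (hv : ContDiff ℝ 1 v) :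
    Dense {c | ∀ b, v b + c ∈ PolSp K e} := by
  let Idx : Type := {s : (Fin 1 → Finset (Fin r)) × Fin r //
    1 + 1 + 1 + 2 * (1 - 1) + 2 * ∑ i, (e i - (JSet s.1 i).card) < 2 * ∑ i, e i}
  have hsub : (⋃ s : Idx, Set.range (parMap 1 1 s.1.2 e s.1.1 v))ᶜ ⊆
      {c | ∀ b, v b + c ∈ PolSp K e} := by
    rw [Set.compl_subset_comm]
    intro c hc
    simp only [PolSp, Set.mem_compl_iff, Set.mem_ofPred_eq, not_forall, not_exists, not_and,
      not_not] at hc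
    obtain ⟨b, σ, hσK, t, ht⟩ := hc
    set u := v b + c with hu
    have hk : σ.Nonempty := by
      rw [← Finset.card_pos]
      have := hcard σ hσK
      omega
    obtain ⟨k, hk⟩ := hk
    have hfac : ∀ i, (JSet (fun _ : Fin 1 => σ) i).card ≤ e i ∧
        ∃ b : Fin (e i - (JSet (fun _ : Fin 1 => σ) i).card) → ℂ,
        toPoly (u i) = 0 + (∏ j ∈ JSet (fun _ : Fin 1 => σ) i,
          (Polynomial.X - Polynomial.C (t : ℂ))) * toPoly b := by
      intro i
      apply factor_nodes _ (fun _ => t) (fun a b _ => Subsingleton.elim a b) (u i) 0 (by simp)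
      intro j hj
      rw [ht i (Finset.mem_filter.1 hj).2]
      simp
    choose hle hcoef hcoefeq using hfac
    refine Set.mem_iUnion.2 ⟨⟨(fun _ => σ, k), ?_⟩, ⟨b, fun _ => t, 0, 0, hcoef⟩, ?_⟩
    · show 1 + 1 + 1 + 2 * (1 - 1) + 2 * ∑ i, (e i - (JSet (fun _ : Fin 1 => σ) i).card) < 2 * ∑ i, e i
      have h1 : ∑ i, (e i - (JSet (fun _ : Fin 1 => σ) i).card)
          + ∑ i, (JSet (fun _ : Fin 1 => σ) i).card = ∑ i, e i := by
        rw [← Finset.sum_add_distrib]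
        exact Finset.sum_congr rfl fun i _ => Nat.sub_add_cancel (hle i)
      have h2 : ∑ i, (JSet (fun _ : Fin 1 => σ) i).card = σ.card := by
        simp only [JSet, Finset.card_filter]
        rw [Finset.sum_comm]
        simp
      have := hcard σ hσK
      omega
    · ext1 i
      show coefVec (e i) (_) - v b i = c i
      have h0 : (if i = k then lowPoly (fun j : Fin 1 => (((0 : Fin 1 → ℝ) j : ℝ) : ℂ)) *
          lowPoly (0 : Fin (1 - 1) → ℂ) else 0) = 0 := by
        split_ifs
        · simp [lowPoly]
        · rfl
      simp only [h0]
      rw [← hcoefeq i, coefVec_toPoly, hu]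
      simp
  by_cases hemp : IsEmpty Idx
  · rw [Set.iUnion_of_empty, Set.compl_empty] at hsub
    exact dense_univ.mono hsub
  refine Dense.mono hsub (dense_compl_of_dimH_lt_finrank ?_)
  rw [dimH_iUnion, finrank_piC]
  rw [not_isEmpty_iff] at hemp
  have hpos : 0 < 2 * ∑ i, e i := by
    obtain ⟨s⟩ := hemp
    have := s.2
    omega
  refine lt_of_le_of_lt (iSup_le (a := ((2 * ∑ i, e i - 1 : ℕ) : ENNReal)) fun s => ?_) ?_
  · refine (parMap_contDiff _ _ _ _ _ _ hv).dimH_range_le.trans ?_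
    rw [finrank_parE]
    have := s.2
    exact_mod_cast (by omega)
  · exact_mod_cast (by omega)

/-! ### Model functions on the circle -/

lemma xmi_ne (x : ℝ) : (x : ℂ) - Complex.I ≠ 0 := by
  intro h
  have := congrArg Complex.im h
  simp at this

lemma xpi_ne (x : ℝ) : (x : ℂ) + Complex.I ≠ 0 := by
  intro h
  have := congrArg Complex.im h
  simp at this

/-- `1/(x-i)` on the circle -/
def uC : C(OnePoint ℝ, ℂ) :=
  OnePoint.continuousMapMk ⟨fun x : ℝ => ((x : ℂ) - Complex.I)⁻¹, by
    apply Continuous.inv₀ (by fun_prop) xmi_ne⟩ 0 (by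
    rw [Filter.coclosedCompact_eq_cocompact]
    have h1 : Filter.Tendsto (fun x : ℝ => (x : ℂ)) (Filter.cocompact ℝ) (Bornology.cobounded ℂ) := by
      rw [← Metric.cobounded_eq_cocompact]
      exact RCLike.tendsto_ofReal_cobounded_cobounded ℂ
    have h2 : Filter.Tendsto (fun x : ℝ => (x : ℂ) - Complex.I) (Filter.cocompact ℝ)
        (Bornology.cobounded ℂ) := by
      have := (tendsto_sub_const_cobounded (Complex.I)).comp h1
      exact this
    exact Filter.tendsto_inv₀_cobounded.comp h2)

lemma uC_coe (x : ℝ) : uC (x : OnePoint ℝ) = ((x : ℂ) - Complex.I)⁻¹ := rfl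
lemma uC_infty : uC OnePoint.infty = 0 := rfl

/-- `x/(x-i)` on the circle -/
def thC : C(OnePoint ℝ, ℂ) := 1 + Complex.I • uC

lemma thC_coe (x : ℝ) : thC (x : OnePoint ℝ) = (x : ℂ) / ((x : ℂ) - Complex.I) := by
  simp only [thC, ContinuousMap.add_apply, ContinuousMap.one_apply, ContinuousMap.smul_apply,
    uC_coe, smul_eq_mul]
  have := xmi_ne x
  field_simp
  ring
lemma thC_infty : thC OnePoint.infty = 1 := by
  simp [thC, uC_infty]

/-- monomial `x^s / ((x-i)^α (x+i)^β)` -/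
def Mon (α β s : ℕ) : C(OnePoint ℝ, ℂ) :=
  thC ^ (min s α) * uC ^ (α - min s α) * (star thC) ^ (s - min s α) *
    (star uC) ^ (β - (s - min s α))

lemma Mon_coe {α β s : ℕ} (h : s ≤ α + β) (x : ℝ) :
    Mon α β s (x : OnePoint ℝ) =
      (x : ℂ) ^ s / (((x : ℂ) - Complex.I) ^ α * ((x : ℂ) + Complex.I) ^ β) := by
  obtain ⟨p, q, hp, hq, h1, h2⟩ : ∃ p q, p = min s α ∧ q = s - min s α ∧ p ≤ α ∧ q ≤ β :=
    ⟨_, _, rfl, rfl, by omega, by omega⟩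
  have hs : s = p + q := by omega
  simp only [Mon, ContinuousMap.mul_apply, ContinuousMap.pow_apply, ContinuousMap.star_apply,
    uC_coe, thC_coe, ← hp, ← hq]
  obtain ⟨a, rfl⟩ := Nat.exists_eq_add_of_le h1
  obtain ⟨b, rfl⟩ := Nat.exists_eq_add_of_le h2
  have e1 := xmi_ne x
  have e2 := xpi_ne x
  simp only [RCLike.star_def, map_div₀, map_inv₀, map_sub, Complex.conj_ofReal, Complex.conj_I,
    sub_neg_eq_add, Nat.add_sub_cancel_left, hs, div_pow, inv_pow, pow_add]
  field_simp

lemma Mon_infty {α β s : ℕ} (h : s ≤ α + β) :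
    Mon α β s OnePoint.infty = if s = α + β then 1 else 0 := by
  simp only [Mon, ContinuousMap.mul_apply, ContinuousMap.pow_apply, ContinuousMap.star_apply,
    uC_infty, thC_infty]
  split_ifs with h1
  · have : α - min s α = 0 := by omega
    have : β - (s - min s α) = 0 := by omega
    simp [*]
  · by_cases h2 : s < α
    · have : α - min s α ≠ 0 := by omega
      simp [this]
    · have : β - (s - min s α) ≠ 0 := by omega
      simp [this]

/-- model function -/
def Lam (α β : ℕ) {d : ℕ} (v : Fin d → ℂ) : C(OnePoint ℝ, ℂ) :=
  Mon α β d + ∑ i, v i • Mon α β i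

lemma Lam_coe {α β d : ℕ} (h : d = α + β) (v : Fin d → ℂ) (x : ℝ) :
    Lam α β v (x : OnePoint ℝ) =
      (toPoly v).eval (x : ℂ) / (((x : ℂ) - Complex.I) ^ α * ((x : ℂ) + Complex.I) ^ β) := by
  unfold Lam toPoly
  rw [ContinuousMap.add_apply, ContinuousMap.sum_apply, Mon_coe h.le, Polynomial.eval_add, add_div,
    Polynomial.eval_finsetSum, Finset.sum_div]
  congr 1
  · simp
  · apply Finset.sum_congr rfl
    intro i _
    rw [ContinuousMap.smul_apply, Mon_coe (by omega)]
    simp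
    ring

lemma Lam_infty {α β d : ℕ} (h : d = α + β) (v : Fin d → ℂ) :
    Lam α β v OnePoint.infty = 1 := by
  unfold Lam
  rw [ContinuousMap.add_apply, ContinuousMap.sum_apply, Mon_infty h.le, if_pos h]
  rw [Finset.sum_eq_zero, add_zero]
  intro i _
  rw [ContinuousMap.smul_apply, Mon_infty (by omega), if_neg (by omega)]
  simp

lemma Lam_continuous (α β d : ℕ) : Continuous (Lam α β : (Fin d → ℂ) → C(OnePoint ℝ, ℂ)) := by
  unfold Lam
  fun_prop

lemma Lam_combo (α β : ℕ) {d : ℕ} (v w : Fin d → ℂ) (a b : ℝ) (hab : a + b = 1) :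
    Lam α β (a • v + b • w) = a • Lam α β v + b • Lam α β w := by
  have hab' : (a : ℂ) + b = 1 := by exact_mod_cast hab
  ext x
  simp only [Lam, ContinuousMap.add_apply, ContinuousMap.sum_apply, ContinuousMap.smul_apply,
    Pi.add_apply, Pi.smul_apply, Complex.real_smul, smul_eq_mul, add_mul, Finset.sum_add_distrib,
    mul_add, Finset.mul_sum, mul_assoc]
  linear_combination (-(Mon α β d x)) * hab'

lemma Lam_injective {α β d : ℕ} (h : d = α + β) :
    Function.Injective (Lam α β : (Fin d → ℂ) → C(OnePoint ℝ, ℂ)) := by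
  intro v w hvw
  have : toPoly v = toPoly w := by
    apply Polynomial.eq_of_infinite_eval_eq
    apply Set.Infinite.mono (s := Set.range fun x : ℝ => (x : ℂ))
    · rintro _ ⟨x, rfl⟩
      have h1 := congrArg (fun f : C(OnePoint ℝ, ℂ) => f (x : OnePoint ℝ)) hvw
      simp only [Lam_coe h] at h1
      have := xmi_ne x
      have := xpi_ne x
      rwa [div_left_inj' (by positivity)] at h1
    · exact Set.infinite_range_of_injective Complex.ofReal_injective
  rw [← coefVec_toPoly v, this, coefVec_toPoly]

lemma ext_onePoint {Y : Type*} [TopologicalSpace Y] {f g : C(OnePoint ℝ, Y)}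
    (h0 : f OnePoint.infty = g OnePoint.infty) (h : ∀ x : ℝ, f (x : OnePoint ℝ) = g (x : OnePoint ℝ)) :
    f = g := by
  ext x
  induction x using OnePoint.rec with
  | infty => exact h0
  | coe x => exact h x

/-! ### Density -/

/-- functions that are rational with powers of `x^2+1` as denominators -/
def RatF (f : C(OnePoint ℝ, ℂ)) (a : ℕ) : Prop :=
  ∃ p : Polynomial ℂ, p.natDegree ≤ 2 * a ∧ f OnePoint.infty = p.coeff (2 * a) ∧
    ∀ x : ℝ, f (x : OnePoint ℝ) * (((x : ℂ) - Complex.I) * ((x : ℂ) + Complex.I)) ^ a =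
      p.eval (x : ℂ)

/-- `x^2+1` -/
def qq : Polynomial ℂ :=
  (Polynomial.X - Polynomial.C Complex.I) * (Polynomial.X - Polynomial.C (-Complex.I))

lemma qq_monic : qq.Monic := (Polynomial.monic_X_sub_C _).mul (Polynomial.monic_X_sub_C _)
lemma qq_natDegree : qq.natDegree = 2 := by
  unfold qq
  rw [(Polynomial.monic_X_sub_C _).natDegree_mul (Polynomial.monic_X_sub_C _)]
  simp
lemma qq_eval (x : ℂ) : qq.eval x = (x - Complex.I) * (x + Complex.I) := by
  simp [qq]

lemma RatF.mono {f : C(OnePoint ℝ, ℂ)} {a b : ℕ} (h : RatF f a) (hab : a ≤ b) : RatF f b := by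
  obtain ⟨c, rfl⟩ := Nat.exists_eq_add_of_le hab
  obtain ⟨p, h1, h2, h3⟩ := h
  have hd : (qq ^ c).natDegree = 2 * c := by
    rw [qq_monic.natDegree_pow, qq_natDegree, mul_comm]
  refine ⟨p * qq ^ c, ?_, ?_, ?_⟩
  · refine Polynomial.natDegree_mul_le.trans ?_
    rw [hd]; omega
  · rw [mul_add, Polynomial.coeff_mul_add_eq_of_natDegree_le h1 hd.le, h2, ← hd,
      (qq_monic.pow c).coeff_natDegree, mul_one]
  · intro x
    rw [Polynomial.eval_mul, ← h3, Polynomial.eval_pow, qq_eval, pow_add]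
    ring

lemma RatF.add {f g : C(OnePoint ℝ, ℂ)} {a : ℕ} (hf : RatF f a) (hg : RatF g a) :
    RatF (f + g) a := by
  obtain ⟨p, h1, h2, h3⟩ := hf
  obtain ⟨p', h1', h2', h3'⟩ := hg
  refine ⟨p + p', (Polynomial.natDegree_add_le _ _).trans (max_le h1 h1'), ?_, ?_⟩
  · simp [h2, h2']
  · intro x
    simp only [ContinuousMap.add_apply, add_mul, h3, h3', Polynomial.eval_add]

lemma RatF.mul {f g : C(OnePoint ℝ, ℂ)} {a b : ℕ} (hf : RatF f a) (hg : RatF g b) :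
    RatF (f * g) (a + b) := by
  obtain ⟨p, h1, h2, h3⟩ := hf
  obtain ⟨p', h1', h2', h3'⟩ := hg
  refine ⟨p * p', Polynomial.natDegree_mul_le.trans (by omega), ?_, ?_⟩
  · rw [mul_add, Polynomial.coeff_mul_add_eq_of_natDegree_le h1 h1', ContinuousMap.mul_apply, h2, h2']
  · intro x
    rw [Polynomial.eval_mul, ← h3, ← h3', pow_add, ContinuousMap.mul_apply]
    ring

lemma RatF.star {f : C(OnePoint ℝ, ℂ)} {a : ℕ} (hf : RatF f a) : RatF (star f) a := by
  obtain ⟨p, h1, h2, h3⟩ := hf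
  refine ⟨p.map (starRingEnd ℂ), (Polynomial.natDegree_map_le).trans h1, ?_, ?_⟩
  · simp [h2]
  · intro x
    have h4 := congrArg (starRingEnd ℂ) (h3 x)
    have h5 : (p.map (starRingEnd ℂ)).eval (x : ℂ) = (starRingEnd ℂ) (p.eval (x : ℂ)) := by
      have := Polynomial.eval_map_apply (p := p) (f := starRingEnd ℂ) (x : ℂ)
      simpa using this
    rw [h5, ← h4]
    simp
    left
    ring

lemma RatF_const (c : ℂ) (a : ℕ) : RatF (ContinuousMap.const _ c) a := by
  refine RatF.mono (a := 0) ⟨Polynomial.C c, by simp, by simp, by simp⟩ (Nat.zero_le _)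

lemma RatF_u : RatF uC 1 := by
  refine ⟨Polynomial.X - Polynomial.C (-Complex.I), ?_, ?_, ?_⟩
  · rw [Polynomial.natDegree_X_sub_C]; norm_num
  · rw [uC_infty]
    symm
    apply Polynomial.coeff_eq_zero_of_natDegree_lt
    rw [Polynomial.natDegree_X_sub_C]; norm_num
  · intro x
    rw [uC_coe]
    have := xmi_ne x
    simp
    field_simp

lemma uC_injective : Function.Injective uC := by
  intro x y h
  induction x using OnePoint.rec with
  | infty =>
    induction y using OnePoint.rec with
    | infty => rfl
    | coe y =>
      rw [uC_infty, uC_coe] at h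
      exact absurd h.symm (inv_ne_zero (xmi_ne y))
  | coe x =>
    induction y using OnePoint.rec with
    | infty =>
      rw [uC_infty, uC_coe] at h
      exact absurd h (inv_ne_zero (xmi_ne x))
    | coe y =>
      rw [uC_coe, uC_coe, inv_inj] at h
      have : x = y := by
        have := congrArg Complex.re h
        simpa using this
      rw [this]

lemma ratF_approx (h : C(OnePoint ℝ, ℂ)) (h1 : h OnePoint.infty = 1) (ε : ℝ) (hε : 0 < ε) :
    ∃ f : C(OnePoint ℝ, ℂ), f OnePoint.infty = 1 ∧ dist f h < ε ∧ ∃ a, RatF f a := by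
  let A : StarSubalgebra ℂ C(OnePoint ℝ, ℂ) := StarAlgebra.adjoin ℂ {uC}
  have hA : A.topologicalClosure = ⊤ := by
    apply ContinuousMap.starSubalgebra_topologicalClosure_eq_top_of_separatesPoints
    intro x y hxy
    exact ⟨uC, ⟨uC, StarAlgebra.subset_adjoin ℂ _ rfl, rfl⟩, fun h => hxy (uC_injective h)⟩
  have hmem : h ∈ closure (A : Set C(OnePoint ℝ, ℂ)) := by
    rw [← StarSubalgebra.topologicalClosure_coe, hA]
    trivial
  obtain ⟨f, hfA, hf⟩ := Metric.mem_closure_iff.1 hmem (ε / 2) (by linarith)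
  have hR : ∃ a, RatF f a := by
    refine StarAlgebra.adjoin_induction (p := fun f _ => ∃ a, RatF f a) ?_ ?_ ?_ ?_ ?_ hfA
    · rintro x rfl
      exact ⟨1, RatF_u⟩
    · intro c
      exact ⟨0, RatF_const c 0⟩
    · rintro x y _ _ ⟨a, ha⟩ ⟨b, hb⟩
      exact ⟨max a b, (ha.mono (le_max_left _ _)).add (hb.mono (le_max_right _ _))⟩
    · rintro x y _ _ ⟨a, ha⟩ ⟨b, hb⟩
      exact ⟨_, ha.mul hb⟩
    · rintro x _ ⟨a, ha⟩
      exact ⟨_, ha.star⟩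
  obtain ⟨a, ha⟩ := hR
  refine ⟨f + ContinuousMap.const _ (1 - f OnePoint.infty), by simp, ?_, a, ha.add (RatF_const _ a)⟩
  have h2 : ∀ x, dist (h x) (f x) < ε / 2 := fun x =>
    lt_of_le_of_lt (ContinuousMap.dist_apply_le_dist x) hf
  rw [ContinuousMap.dist_lt_iff hε]
  intro x
  have h3 := h2 x
  have h4 := h2 OnePoint.infty
  rw [h1] at h4
  rw [dist_eq_norm] at *
  calc ‖(f + ContinuousMap.const (OnePoint ℝ) (1 - f OnePoint.infty)) x - h x‖
      = ‖-(h x - f x) + (1 - f OnePoint.infty)‖ := by simp; ring_nf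
    _ ≤ ‖-(h x - f x)‖ + ‖1 - f OnePoint.infty‖ := norm_add_le _ _
    _ < ε := by rw [norm_neg]; linarith

lemma RatF.eq_Lam {f : C(OnePoint ℝ, ℂ)} {a : ℕ} (hf : RatF f a) (h1 : f OnePoint.infty = 1)
    (e : ℕ) {d : ℕ} (hd : d = (a + e) + a) : ∃ v : Fin d → ℂ, Lam (a + e) a v = f := by
  obtain ⟨p, hp1, hp2, hp3⟩ := hf
  have hpm : p.Monic := Polynomial.monic_of_natDegree_le_of_coeff_eq_one _ hp1 (hp2 ▸ h1)
  have hpd : p.natDegree = 2 * a := by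
    refine le_antisymm hp1 (Polynomial.le_natDegree_of_ne_zero ?_)
    rw [← hp2, h1]; exact one_ne_zero
  let P := p * (Polynomial.X - Polynomial.C Complex.I) ^ e
  have hPm : P.Monic := hpm.mul ((Polynomial.monic_X_sub_C _).pow e)
  have hPd : P.natDegree = d := by
    rw [hpm.natDegree_mul ((Polynomial.monic_X_sub_C _).pow e), hpd,
      (Polynomial.monic_X_sub_C _).natDegree_pow, Polynomial.natDegree_X_sub_C]
    omega
  refine ⟨coefVec d P, ext_onePoint ?_ ?_⟩
  · rw [Lam_infty hd, h1]
  · intro x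
    rw [Lam_coe hd, toPoly_coefVec P hPm hPd]
    have := xmi_ne x
    have := xpi_ne x
    simp only [P, Polynomial.eval_mul, Polynomial.eval_pow, Polynomial.eval_sub,
      Polynomial.eval_X, Polynomial.eval_C, ← hp3]
    rw [div_eq_iff (by positivity), mul_pow]
    ring

/-- Uniform approximation over a compact family. -/
lemma Lam_approx {B : Type*} [TopologicalSpace B] [CompactSpace B] (g : C(B, C(OnePoint ℝ, ℂ)))
    (hg : ∀ b, g b OnePoint.infty = 1) (ε : ℝ) (hε : 0 < ε) :
    ∃ a₀, ∀ a, a₀ ≤ a → ∀ e d, d = (a + e) + a → ∀ b, ∃ v : Fin d → ℂ,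
      dist (Lam (a + e) a v) (g b) < ε := by
  choose f hf1 hf2 a hfa using fun b => ratF_approx (g b) (hg b) (ε / 2) (by linarith)
  obtain ⟨t, ht⟩ := isCompact_univ.elim_nhds_subcover
    (fun b => {b' | dist (g b') (g b) < ε / 2})
    (fun b _ => (isOpen_lt (by fun_prop) continuous_const).mem_nhds (by simpa using hε))
  refine ⟨t.sup a, fun A hA e d hd b => ?_⟩
  obtain ⟨b', hb', hbb⟩ := Set.mem_iUnion₂.1 (ht.2 (Set.mem_univ b))
  obtain ⟨v, hv⟩ := ((hfa b').mono ((Finset.le_sup hb').trans hA)).eq_Lam (hf1 b') e hd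
  refine ⟨v, ?_⟩
  rw [hv]
  calc dist (f b') (g b) ≤ dist (f b') (g b') + dist (g b') (g b) := dist_triangle _ _ _
    _ < ε := by
      have h1 := hf2 b'
      have h2 : dist (g b) (g b') < ε / 2 := hbb
      rw [dist_comm (g b)] at h2
      linarith

/-- tuples of functions on the circle -/
abbrev FS (r : ℕ) : Type := Fin r → C(OnePoint ℝ, ℂ)

/-- polynomial functions of degree `d` -/
def VV (d : ℕ) : Set C(OnePoint ℝ, ℂ) := Set.range (Lam d 0 : (Fin d → ℂ) → C(OnePoint ℝ, ℂ))

/-- good tuples -/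
def Gd {r : ℕ} (K : Set (Finset (Fin r))) (D : Fin r → ℕ) (T : Set (Fin r)) : Set (FS r) :=
  {F | (∀ i, F i OnePoint.infty = 1) ∧ (∀ x, (fun i => F i x) ∈ UK K) ∧ ∀ i ∈ T, F i ∈ VV (D i)}

lemma VV_convex (d : ℕ) : Convex ℝ (VV d) := by
  rintro _ ⟨v, rfl⟩ _ ⟨w, rfl⟩ a b _ _ hab
  exact ⟨a • v + b • w, Lam_combo _ _ _ _ _ _ hab⟩

lemma isOpen_UK {r : ℕ} (K : Set (Finset (Fin r))) : IsOpen (UK K) := by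
  unfold UK
  rw [isOpen_compl_iff]
  refine Set.Finite.isClosed_biUnion (Set.toFinite _) fun σ _ => ?_
  have : LSub σ = ⋂ i ∈ σ, {x : Fin r → ℂ | x i = 0} := by
    ext x; simp [LSub]
  rw [this]
  exact isClosed_biInter fun i _ => isClosed_eq (continuous_apply i) continuous_const

lemma continuous_evalFS {r : ℕ} {B : Type*} [TopologicalSpace B] (Φ : C(B, FS r)) :
    Continuous fun p : B × OnePoint ℝ => (fun i => Φ p.1 i p.2 : Fin r → ℂ) := by
  refine continuous_pi fun i => ?_
  have h : Continuous fun b => Φ b i := (continuous_apply i).comp Φ.continuous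
  exact (h.comp continuous_fst).eval continuous_snd

/-- degenerate points -/
def SS {r : ℕ} (K : Set (Finset (Fin r))) (k : Fin r) (F : FS r) : Set (OnePoint ℝ) :=
  {x | ∃ σ : Finset (Fin r), σ ∉ K ∧ k ∈ σ ∧ ∀ i ∈ σ, i ≠ k → F i x = 0}

lemma uniform_eps {r : ℕ} (K : Set (Finset (Fin r))) {B : Type*} [TopologicalSpace B]
    [CompactSpace B] (Φ : C(B, FS r)) (hΦ : ∀ b x, (fun i => Φ b i x) ∈ UK K) :
    ∃ ε > 0, ∀ b x (y : Fin r → ℂ), (∀ i, dist (y i) (Φ b i x) < ε) → y ∈ UK K := by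
  have hc : IsCompact (Set.range fun p : B × OnePoint ℝ => (fun i => Φ p.1 i p.2 : Fin r → ℂ)) :=
    isCompact_range (continuous_evalFS Φ)
  obtain ⟨ε, hε, h⟩ := hc.exists_thickening_subset_open (isOpen_UK K) (by
    rintro _ ⟨p, rfl⟩
    exact hΦ _ _)
  refine ⟨ε, hε, fun b x y hy => h (Metric.mem_thickening_iff.2 ⟨_, ⟨(b, x), rfl⟩, ?_⟩)⟩
  exact (dist_pi_lt_iff hε).2 hy

lemma re_pos_of_close {g h : ℂ} {ε : ℝ} (h1 : ε ≤ ‖g‖) (h2 : dist h g < ε) :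
    0 < ((starRingEnd ℂ) h * g).re := by
  rw [dist_eq_norm] at h2
  have h3 : ‖h - g‖ ^ 2 < ‖g‖ ^ 2 := by
    apply pow_lt_pow_left₀ (by linarith) (norm_nonneg _) (by norm_num)
  rw [← Complex.normSq_eq_norm_sq, ← Complex.normSq_eq_norm_sq, Complex.normSq_apply,
    Complex.normSq_apply] at h3
  simp at h3 ⊢
  nlinarith [sq_nonneg h.re, sq_nonneg h.im]

/-- the selection of polynomial replacements for the coordinate `k` -/
lemma select_poly {r : ℕ} (K : Set (Finset (Fin r))) (k : Fin r)
    {B : Type*} [TopologicalSpace B] [CompactSpace B] [NormalSpace B] [ParacompactSpace B]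
    (Φ : C(B, FS r)) (d : ℕ)
    (hex : ∀ b, ∃ w : Fin d → ℂ, ∀ x ∈ SS K k (Φ b),
      0 < ((starRingEnd ℂ) (Φ b k x) * Lam d 0 w x).re) :
    ∃ w : C(B, Fin d → ℂ), ∀ b, ∀ x ∈ SS K k (Φ b),
      0 < ((starRingEnd ℂ) (Φ b k x) * Lam d 0 (w b) x).re := by
  apply exists_continuous_forall_mem_convex_of_local_const
    (t := fun b => {w : Fin d → ℂ | ∀ x ∈ SS K k (Φ b),
      0 < ((starRingEnd ℂ) (Φ b k x) * Lam d 0 w x).re})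
  · intro b w hw w' hw' s s' hs hs' hss x hx
    have h1 := hw x hx
    have h2 := hw' x hx
    rw [Lam_combo _ _ _ _ _ _ hss]
    have h3 : ((starRingEnd ℂ) (Φ b k x) * (s • Lam d 0 w + s' • Lam d 0 w') x).re =
        s * ((starRingEnd ℂ) (Φ b k x) * Lam d 0 w x).re +
        s' * ((starRingEnd ℂ) (Φ b k x) * Lam d 0 w' x).re := by
      simp
      ring
    rw [h3]
    rcases hs.eq_or_lt with h | h
    · rw [← h] at hss ⊢
      have : s' = 1 := by linarith
      rw [this]; linarith
    · have := mul_pos h h1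
      have := mul_nonneg hs' h2.le
      linarith
  · intro b
    obtain ⟨w, hw⟩ := hex b
    refine ⟨w, ?_⟩
    let C : Set (B × OnePoint ℝ) := {p | p.2 ∈ SS K k (Φ p.1) ∧
      ((starRingEnd ℂ) (Φ p.1 k p.2) * Lam d 0 w p.2).re ≤ 0}
    have hev : ∀ i, Continuous fun p : B × OnePoint ℝ => Φ p.1 i p.2 := fun i =>
      (continuous_apply i).comp (continuous_evalFS Φ)
    have hC : IsClosed C := by
      refine IsClosed.inter ?_ ?_
      · have : {p : B × OnePoint ℝ | p.2 ∈ SS K k (Φ p.1)} =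
            ⋃ σ ∈ {σ : Finset (Fin r) | σ ∉ K ∧ k ∈ σ},
              ⋂ i ∈ {i | i ∈ σ ∧ i ≠ k}, {p : B × OnePoint ℝ | Φ p.1 i p.2 = 0} := by
          ext p
          simp [SS, and_assoc]
        show IsClosed {p : B × OnePoint ℝ | p.2 ∈ SS K k (Φ p.1)}
        rw [this]
        refine Set.Finite.isClosed_biUnion (Set.toFinite _) fun σ _ => ?_
        exact isClosed_biInter fun i _ => isClosed_eq (hev i) continuous_const
      · refine isClosed_le (f := fun p : B × OnePoint ℝ =>
          ((starRingEnd ℂ) (Φ p.1 k p.2) * Lam d 0 w p.2).re) (g := fun _ => 0) ?_ continuous_const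
        exact Complex.continuous_re.comp ((Complex.continuous_conj.comp (hev k)).mul
          ((Lam d 0 w).continuous.comp continuous_snd))
    have hP : IsClosed (Prod.fst '' C) := isClosedMap_fst_of_compactSpace _ hC
    have hb : b ∈ (Prod.fst '' C)ᶜ := by
      rintro ⟨⟨b', x⟩, ⟨h1, h2⟩, h3⟩
      simp only at h3 h1 h2
      subst h3
      exact absurd (hw x h1) (not_lt.2 h2)
    filter_upwards [hP.isOpen_compl.mem_nhds hb] with y hy x hx
    by_contra hlt
    exact hy ⟨(y, x), ⟨hx, not_lt.1 hlt⟩, rfl⟩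

lemma infty_not_SS {r : ℕ} (K : Set (Finset (Fin r))) (hcard : ∀ σ, σ ∉ K → 2 ≤ σ.card)
    (k : Fin r) (F : FS r) (h : ∀ i, F i OnePoint.infty = 1) : OnePoint.infty ∉ SS K k F := by
  rintro ⟨σ, hσ, hk, h0⟩
  obtain ⟨i, hi, hik⟩ := Finset.exists_mem_ne (hcard σ hσ) k
  have := h0 i hi hik
  rw [h i] at this
  exact one_ne_zero this

/-- existence of one polynomial replacement -/
lemma exists_poly {r : ℕ} (K : Set (Finset (Fin r))) (hcard : ∀ σ, σ ∉ K → 2 ≤ σ.card)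
    (k : Fin r) (α β : Fin r → ℕ) (u : ∀ i, Fin (α i + β i) → ℂ) (d : ℕ) (hk : α k = β k + d)
    (p : Polynomial ℂ) (hp : p.degree < d)
    (hpos : ∀ x ∈ SSet K k u,
        0 < ((starRingEnd ℂ) ((toPoly (u k)).eval (x : ℂ)) * p.eval (x : ℂ)).re) :
    ∃ w : Fin d → ℂ, ∀ x ∈ SS K k (fun i => Lam (α i) (β i) (u i)),
      0 < ((starRingEnd ℂ) (Lam (α k) (β k) (u k) x) * Lam d 0 w x).re := by
  set F : FS r := fun i => Lam (α i) (β i) (u i) with hF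
  have hinf : OnePoint.infty ∉ SS K k F :=
    infty_not_SS K hcard k F fun i => Lam_infty rfl _
  have hmem : ∀ x : ℝ, (x : OnePoint ℝ) ∈ SS K k F → x ∈ SSet K k u := by
    rintro x ⟨σ, hσ, hkσ, h0⟩
    refine ⟨σ, hσ, hkσ, fun i hi hik => ?_⟩
    have h1 := h0 i hi hik
    simp only [hF, Lam_coe rfl] at h1
    rw [div_eq_zero_iff] at h1
    refine h1.resolve_right ?_
    have := xmi_ne x
    have := xpi_ne x
    positivity
  have hfin := SSet_finite K hcard k u
  -- numbers
  let A : ℝ → ℝ := fun x => ((starRingEnd ℂ) (Lam (α k) (β k) (u k) (x : OnePoint ℝ)) *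
    (p.eval (x : ℂ) / ((x : ℂ) - Complex.I) ^ d)).re
  have hA : ∀ x ∈ SSet K k u, 0 < A x := by
    intro x hx
    have h1 := hpos x hx
    have e1 := xmi_ne x
    have e2 := xpi_ne x
    have h2 : (starRingEnd ℂ) (Lam (α k) (β k) (u k) (x : OnePoint ℝ)) *
        (p.eval (x : ℂ) / ((x : ℂ) - Complex.I) ^ d) =
        (((x ^ 2 + 1) ^ (α k))⁻¹ : ℝ) *
          ((starRingEnd ℂ) ((toPoly (u k)).eval (x : ℂ)) * p.eval (x : ℂ)) := by
      rw [Lam_coe rfl]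
      have e3 : ((x : ℂ) ^ 2 + 1) = ((x : ℂ) - Complex.I) * ((x : ℂ) + Complex.I) := by
        ring_nf; simp [add_comm]
      simp only [map_div₀, map_mul, map_pow, map_sub, map_add, Complex.conj_ofReal, Complex.conj_I,
        sub_neg_eq_add, Complex.ofReal_inv]
      push_cast
      generalize (toPoly (u k)).eval (x : ℂ) = z
      rw [e3, hk]
      simp only [mul_pow, pow_add]
      rw [← sub_eq_add_neg]
      field_simp
    show 0 < (_ : ℂ).re
    rw [h2, Complex.re_ofReal_mul]
    positivity
  let Bv : ℝ → ℝ := fun x => ((starRingEnd ℂ) (Lam (α k) (β k) (u k) (x : OnePoint ℝ))).re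
  obtain ⟨R, hR⟩ : ∃ R : ℝ, ∀ x ∈ SSet K k u, 0 < Bv x + R * A x := by
    obtain ⟨R, hR⟩ := (hfin.image fun x => -Bv x / A x).bddAbove
    refine ⟨R + 1, fun x hx => ?_⟩
    have h1 := hR ⟨x, hx, rfl⟩
    simp only at h1
    rw [div_le_iff₀ (hA x hx)] at h1
    nlinarith [hA x hx]
  let P : Polynomial ℂ := (Polynomial.X - Polynomial.C Complex.I) ^ d + Polynomial.C (R : ℂ) * p
  have hdeg : (((Polynomial.X - Polynomial.C Complex.I) ^ d : Polynomial ℂ)).degree = (d : WithBot ℕ) := by simp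
  have hlt : (Polynomial.C (R : ℂ) * p).degree < ((Polynomial.X - Polynomial.C Complex.I) ^ d : Polynomial ℂ).degree := by
    rw [hdeg]
    refine lt_of_le_of_lt (Polynomial.degree_mul_le _ _) ?_
    refine lt_of_le_of_lt (add_le_add_left (Polynomial.degree_C_le) _) ?_
    simpa using hp
  have hPm : P.Monic := ((Polynomial.monic_X_sub_C _).pow d).add_of_left hlt
  have hPd : P.natDegree = d := by
    apply Polynomial.natDegree_eq_of_degree_eq_some
    rw [Polynomial.degree_add_eq_left_of_degree_lt hlt, hdeg]
  refine ⟨coefVec d P, fun x hx => ?_⟩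
  induction x using OnePoint.rec with
  | infty => exact absurd hx hinf
  | coe x =>
    have h1 := hR x (hmem x hx)
    have e1 := xmi_ne x
    rw [Lam_coe (d := d) (by simp), toPoly_coefVec P hPm hPd]
    have h2 : (starRingEnd ℂ) (Lam (α k) (β k) (u k) (x : OnePoint ℝ)) *
      (P.eval (x : ℂ) / (((x : ℂ) - Complex.I) ^ d * ((x : ℂ) + Complex.I) ^ 0)) =
      (starRingEnd ℂ) (Lam (α k) (β k) (u k) (x : OnePoint ℝ)) + (R : ℂ) *
      ((starRingEnd ℂ) (Lam (α k) (β k) (u k) (x : OnePoint ℝ)) *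
    (p.eval (x : ℂ) / ((x : ℂ) - Complex.I) ^ d)) := by
      simp only [P, Polynomial.eval_add, Polynomial.eval_pow, Polynomial.eval_sub, Polynomial.eval_X,
        Polynomial.eval_C, Polynomial.eval_mul]
      field_simp
    rw [h2, Complex.add_re, Complex.re_ofReal_mul]
    exact h1

lemma mem_VV_of {α β d e : ℕ} (v : Fin e → ℂ) (he : e = α + β) (h1 : α = d) (h2 : β = 0) :
    Lam α β v ∈ VV d := by
  subst h1 h2
  simp only [add_zero] at he
  subst he
  exact ⟨v, rfl⟩

lemma choose_models {r : ℕ} {B : Type*} [TopologicalSpace B] [CompactSpace B]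
    (K : Set (Finset (Fin r))) (D : Fin r → ℕ) (k : Fin r)
    (T : Set (Fin r)) (hkT : k ∉ T) (Φ : C(B, FS r)) (hΦ : ∀ b, Φ b ∈ Gd K D T) (δ : ℝ)
    (hδ : 0 < δ) :
    ∃ α β : Fin r → ℕ, (∀ i b, ∃ v : Fin (α i + β i) → ℂ, dist (Lam (α i) (β i) v) (Φ b i) < δ) ∧
      α k = β k + D k ∧ (∀ i ∈ T, α i = D i ∧ β i = 0) ∧
      2 * ∑ i ∈ Finset.univ.erase k, (α i + β i) ≤ α k + β k := by
  have key : ∀ i, ∃ a₀, ∀ a, a₀ ≤ a → ∀ e d, d = (a + e) + a → ∀ b, ∃ v : Fin d → ℂ,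
      dist (Lam (a + e) a v) (Φ b i) < δ := fun i =>
    Lam_approx ⟨fun b => Φ b i, (continuous_apply i).comp Φ.continuous⟩ (fun b => (hΦ b).1 i) δ hδ
  choose a₀ ha₀ using key
  let α' : Fin r → ℕ := fun i => if i ∈ T then D i else a₀ i
  let β' : Fin r → ℕ := fun i => if i ∈ T then 0 else a₀ i
  let a := max (a₀ k) (∑ i ∈ Finset.univ.erase k, (α' i + β' i))
  refine ⟨Function.update α' k (a + D k), Function.update β' k a, ?_, by simp, ?_, ?_⟩
  · intro i b
    by_cases hik : i = k
    · subst hik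
      have := ha₀ i a (le_max_left _ _) (D i) (Function.update α' i (a + D i) i + Function.update β' i a i)
        (by simp) b
      simpa using this
    · rw [Function.update_of_ne hik, Function.update_of_ne hik]
      by_cases hiT : i ∈ T
      · have e1 : α' i = D i := if_pos hiT
        have e2 : β' i = 0 := if_pos hiT
        rw [e1, e2]
        obtain ⟨v, hv⟩ := (hΦ b).2.2 i hiT
        refine ⟨v, ?_⟩
        rw [← hv]
        show dist (Lam (D i) 0 v) _ < δ
        simpa using hδ
      · have e1 : α' i = a₀ i := if_neg hiT
        have e2 : β' i = a₀ i := if_neg hiT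
        rw [e1, e2]
        exact ha₀ i (a₀ i) le_rfl 0 _ (by simp) b
  · intro i hi
    have hik : i ≠ k := fun h => hkT (h ▸ hi)
    rw [Function.update_of_ne hik, Function.update_of_ne hik]
    exact ⟨if_pos hi, if_pos hi⟩
  · have : ∑ i ∈ Finset.univ.erase k, (Function.update α' k (a + D k) i + Function.update β' k a i)
        = ∑ i ∈ Finset.univ.erase k, (α' i + β' i) := by
      apply Finset.sum_congr rfl
      intro i hi
      rw [Function.update_of_ne (Finset.ne_of_mem_erase hi),
        Function.update_of_ne (Finset.ne_of_mem_erase hi)]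
    rw [this]
    simp only [Function.update_self]
    have : (∑ i ∈ Finset.univ.erase k, (α' i + β' i)) ≤ a := le_max_right _ _
    omega

/-- clamping to the cube -/
def clampI (m : ℕ) : C(Fin m → ℝ, Fin m → unitInterval) :=
  ⟨fun y i => Set.projIcc 0 1 zero_le_one (y i), by
    refine continuous_pi fun i => continuous_projIcc.comp (continuous_apply i)⟩

lemma clampI_coe {m : ℕ} (b : Fin m → unitInterval) : clampI m (fun i => (b i : ℝ)) = b := by
  funext i
  exact Set.projIcc_val zero_le_one (b i)

lemma smooth_approx {m r : ℕ} (α β : Fin r → ℕ) (Φ : C(Fin m → unitInterval, FS r)) (δ : ℝ)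
    (h : ∀ i b, ∃ v : Fin (α i + β i) → ℂ, dist (Lam (α i) (β i) v) (Φ b i) < δ) :
    ∃ v : (Fin m → ℝ) → ∀ i, Fin (α i + β i) → ℂ, ContDiff ℝ 1 v ∧
      ∀ (b : Fin m → unitInterval) i,
        dist (Lam (α i) (β i) (v (fun i => (b i : ℝ)) i)) (Φ b i) < δ := by
  have h' : ∀ b, ∃ v : ∀ i, Fin (α i + β i) → ℂ, ∀ i, dist (Lam (α i) (β i) (v i)) (Φ b i) < δ :=
    fun b => ⟨fun i => (h i b).choose, fun i => (h i b).choose_spec⟩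
  obtain ⟨g, hg⟩ := exists_contMDiffMap_forall_mem_convex_of_local_const (n := 1)
    (modelWithCornersSelf ℝ (Fin m → ℝ)) (M := Fin m → ℝ) (F := ∀ i, Fin (α i + β i) → ℂ)
    (t := fun y => {v | ∀ i, dist (Lam (α i) (β i) (v i)) (Φ (clampI m y) i) < δ}) (by
      intro y v hv w hw a b ha hb hab i
      have h1 : Lam (α i) (β i) ((a • v + b • w) i) ∈ Metric.ball (Φ (clampI m y) i) δ := by
        have : (a • v + b • w) i = a • v i + b • w i := rfl
        rw [this, Lam_combo _ _ _ _ _ _ hab]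
        exact convex_ball _ _ (hv i) (hw i) ha hb hab
      exact h1) (by
      intro y
      obtain ⟨v, hv⟩ := h' (clampI m y)
      refine ⟨v, ?_⟩
      have : ∀ i, ∀ᶠ y' in nhds y, dist (Lam (α i) (β i) (v i)) (Φ (clampI m y') i) < δ := by
        intro i
        have hc : Continuous fun y' => dist (Lam (α i) (β i) (v i)) (Φ (clampI m y') i) :=
          continuous_const.dist ((continuous_apply i).comp (Φ.continuous.comp (clampI m).continuous))
        exact hc.continuousAt.eventually (gt_mem_nhds (hv i))
      exact Filter.eventually_all.2 this)
  refine ⟨g, contMDiff_iff_contDiff.1 g.contMDiff, fun b i => ?_⟩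
  have := hg (fun i => (b i : ℝ)) i
  rwa [clampI_coe] at this

lemma Lam_add_sub (α β : ℕ) {d : ℕ} (v c : Fin d → ℂ) :
    Lam α β (v + c) - Lam α β v = Lam α β c - Lam α β (0 : Fin d → ℂ) := by
  simp [Lam, add_smul, Finset.sum_add_distrib]

/-- model approximations -/
lemma exists_model {m r : ℕ} (K : Set (Finset (Fin r))) (ρ : ℕ) (hρ : 2 ≤ ρ)
    (hcard : ∀ σ, σ ∉ K → ρ ≤ σ.card) (D : Fin r → ℕ) (k : Fin r) (T : Set (Fin r)) (hkT : k ∉ T)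
    (hm : m < 2 * (ρ - 1) * D k) (Φ : C(Fin m → unitInterval, FS r)) (hΦ : ∀ b, Φ b ∈ Gd K D T)
    (ε : ℝ) (hε : 0 < ε) :
    ∃ (Ψ : C(Fin m → unitInterval, FS r)), (∀ b i, Ψ b i OnePoint.infty = 1) ∧
      (∀ b, ∀ i ∈ T, Ψ b i ∈ VV (D i)) ∧ (∀ b i, dist (Ψ b i) (Φ b i) < ε) ∧
      ∀ b, (∀ x ∈ SS K k (Ψ b), Ψ b k x ≠ 0) →
      ∃ w : Fin (D k) → ℂ, ∀ x ∈ SS K k (Ψ b),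
      0 < ((starRingEnd ℂ) (Ψ b k x) * Lam (D k) 0 w x).re := by
  obtain ⟨α, β, h1, h2, h3, h4⟩ := choose_models K D k T hkT Φ hΦ (ε / 2) (by linarith)
  obtain ⟨v, hv, hvΦ⟩ := smooth_approx α β Φ (ε / 2) h1
  have hd := goodPert_dense K ρ hρ hcard k (fun i => α i + β i) (D k) hm h4 v hv
  obtain ⟨c, hc, hcG⟩ : ∃ c : ∀ i, Fin (α i + β i) → ℂ,
      (∀ i, dist (Lam (α i) (β i) (c i)) (Lam (α i) (β i) (0 : Fin (α i + β i) → ℂ)) < ε / 2) ∧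
      c ∈ GoodPert K k (fun i => α i + β i) (D k) v := by
    have ho : IsOpen {c : ∀ i, Fin (α i + β i) → ℂ |
        ∀ i, dist (Lam (α i) (β i) (c i)) (Lam (α i) (β i) (0 : Fin (α i + β i) → ℂ)) < ε / 2} := by
      rw [Set.ofPred_forall]
      refine isOpen_iInter_of_finite fun i => isOpen_lt ?_ continuous_const
      exact ((Lam_continuous _ _ _).comp (continuous_apply i)).dist continuous_const
    obtain ⟨c, hc1, hc2⟩ := hd.inter_open_nonempty _ ho ⟨0, fun i => by simpa using hε⟩
    exact ⟨c, hc1, hc2⟩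
  have hce : Continuous fun b : Fin m → unitInterval => (fun i => (b i : ℝ)) :=
    continuous_pi fun i => continuous_subtype_val.comp (continuous_apply i)
  let u : (Fin m → unitInterval) → ∀ i, Fin (α i + β i) → ℂ := fun b => v (fun i => (b i : ℝ)) + c
  have hu : Continuous u := (hv.continuous.comp hce).add continuous_const
  let Ψ : C(Fin m → unitInterval, FS r) := ⟨fun b i => Lam (α i) (β i) (u b i),
    continuous_pi fun i => (Lam_continuous _ _ _).comp ((continuous_apply i).comp hu)⟩
  refine ⟨Ψ, fun b i => Lam_infty rfl _, fun b i hi => mem_VV_of _ rfl (h3 i hi).1 (h3 i hi).2, ?_, ?_⟩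
  · intro b i
    have e1 : dist (Ψ b i) (Lam (α i) (β i) (v (fun i => (b i : ℝ)) i)) < ε / 2 := by
      rw [dist_eq_norm]
      show ‖Lam (α i) (β i) (v (fun i => (b i : ℝ)) i + c i) - _‖ < _
      rw [Lam_add_sub, ← dist_eq_norm]
      exact hc i
    have := dist_triangle (Ψ b i) (Lam (α i) (β i) (v (fun i => (b i : ℝ)) i)) (Φ b i)
    have := hvΦ b i
    linarith
  · intro b hb
    have hcard2 : ∀ σ, σ ∉ K → 2 ≤ σ.card := fun σ hσ => hρ.trans (hcard σ hσ)
    obtain ⟨p, hp, hp2⟩ := hcG (fun i => (b i : ℝ)) (by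
      rintro x ⟨σ, hσ, hkσ, h0⟩ hx
      refine hb (x : OnePoint ℝ) ⟨σ, hσ, hkσ, fun i hi hik => ?_⟩ ?_
      · show Lam (α i) (β i) (u b i) _ = 0
        rw [Lam_coe rfl, show (toPoly (u b i)).eval (x : ℂ) = 0 from h0 i hi hik, zero_div]
      · show Lam (α k) (β k) (u b k) _ = 0
        rw [Lam_coe rfl, show (toPoly (u b k)).eval (x : ℂ) = 0 from hx, zero_div])
    exact exists_poly K hcard2 k α β (u b) (D k) h2 p hp hp2

/-- Compression of one coordinate. -/
theorem compress {m r : ℕ} (K : Set (Finset (Fin r))) (ρ : ℕ) (hρ : 2 ≤ ρ)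
    (hcard : ∀ σ, σ ∉ K → ρ ≤ σ.card) (D : Fin r → ℕ) (k : Fin r) (T : Set (Fin r)) (hkT : k ∉ T)
    (hm : m < 2 * (ρ - 1) * D k) (Φ : C(Fin m → unitInterval, FS r)) (hΦ : ∀ b, Φ b ∈ Gd K D T)
    (hk : ∀ b ∈ Cube.boundary (Fin m), Φ b k ∈ VV (D k)) :
    ∃ H : C(unitInterval × (Fin m → unitInterval), FS r), (∀ b, H (0, b) = Φ b) ∧
      (∀ s b, H (s, b) ∈ Gd K D T) ∧ (∀ s, ∀ b ∈ Cube.boundary (Fin m), H (s, b) k ∈ VV (D k)) ∧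
      ∀ b, H (1, b) k ∈ VV (D k) := by
  obtain ⟨ε, hε, hεU⟩ := uniform_eps K Φ fun b x => (hΦ b).2.1 x
  obtain ⟨Ψ, hΨ1, hΨT, hΨΦ, hΨw⟩ := exists_model K ρ hρ hcard D k T hkT hm Φ hΦ ε hε
  have hdx : ∀ b i x, dist (Ψ b i x) (Φ b i x) < ε := fun b i x =>
    lt_of_le_of_lt (ContinuousMap.dist_apply_le_dist x) (hΨΦ b i)
  have hposΦ : ∀ b, ∀ x ∈ SS K k (Ψ b), 0 < ((starRingEnd ℂ) (Ψ b k x) * Φ b k x).re := by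
    rintro b x ⟨σ, hσ, hkσ, h0⟩
    apply re_pos_of_close _ (hdx b k x)
    by_contra hlt
    push Not at hlt
    have h1 := hεU b x (Function.update (fun i => Ψ b i x) k 0) (by
      intro i
      by_cases hik : i = k
      · subst hik
        simpa using hlt
      · rw [Function.update_of_ne hik]
        exact hdx b i x)
    obtain ⟨i, hi, hne⟩ := mem_UK.1 h1 σ hσ
    by_cases hik : i = k
    · subst hik; simp at hne
    · rw [Function.update_of_ne hik] at hne
      exact hne (h0 i hi hik)
  obtain ⟨w, hw⟩ := select_poly K k Ψ (D k) fun b => hΨw b fun x hx h0 => by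
    have := hposΦ b x hx
    rw [h0] at this
    simp at this
  let a : unitInterval → ℝ := fun s => min (2 * (s : ℝ)) 1
  let c : unitInterval → ℝ := fun s => max (2 * (s : ℝ) - 1) 0
  have ha : Continuous a := by fun_prop
  have hc : Continuous c := by fun_prop
  have ha0 : ∀ s, 0 ≤ a s := fun s => le_min (by have := s.2.1; linarith) zero_le_one
  have ha1 : ∀ s, a s ≤ 1 := fun s => min_le_right _ _
  have hc0 : ∀ s, 0 ≤ c s := fun s => le_max_right _ _
  have hc1 : ∀ s, c s ≤ 1 := fun s => max_le (by have := s.2.2; linarith) zero_le_one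
  have hac : ∀ s, c s = 0 ∨ a s = 1 := by
    intro s
    rcases le_total (2 * (s : ℝ)) 1 with h | h
    · left; exact max_eq_right (by linarith)
    · right; exact min_eq_right h
  let Hf : unitInterval × (Fin m → unitInterval) → FS r := fun p i =>
    if i = k then (1 - c p.1) • Φ p.2 k + c p.1 • Lam (D k) 0 (w p.2)
    else (1 - a p.1) • Φ p.2 i + a p.1 • Ψ p.2 i
  have hHf : Continuous Hf := by
    refine continuous_pi fun i => ?_
    by_cases hik : i = k
    · simp only [Hf, if_pos hik]
      have h1 : Continuous fun p : unitInterval × (Fin m → unitInterval) => Φ p.2 k :=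
        (continuous_apply k).comp (Φ.continuous.comp continuous_snd)
      have h2 : Continuous fun p : unitInterval × (Fin m → unitInterval) => Lam (D k) 0 (w p.2) :=
        (Lam_continuous _ _ _).comp (w.continuous.comp continuous_snd)
      exact ((continuous_const.sub (hc.comp continuous_fst)).smul h1).add
        ((hc.comp continuous_fst).smul h2)
    · simp only [Hf, if_neg hik]
      have h1 : Continuous fun p : unitInterval × (Fin m → unitInterval) => Φ p.2 i :=
        (continuous_apply i).comp (Φ.continuous.comp continuous_snd)
      have h2 : Continuous fun p : unitInterval × (Fin m → unitInterval) => Ψ p.2 i :=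
        (continuous_apply i).comp (Ψ.continuous.comp continuous_snd)
      exact ((continuous_const.sub (ha.comp continuous_fst)).smul h1).add
        ((ha.comp continuous_fst).smul h2)
  have hHk : ∀ s b, Hf (s, b) k = (1 - c s) • Φ b k + c s • Lam (D k) 0 (w b) := fun s b => if_pos rfl
  have hHi : ∀ s b i, i ≠ k → Hf (s, b) i = (1 - a s) • Φ b i + a s • Ψ b i :=
    fun s b i h => if_neg h
  refine ⟨⟨Hf, hHf⟩, ?_, ?_, ?_, ?_⟩
  · intro b
    funext i
    show Hf (0, b) i = _
    by_cases hik : i = k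
    · rw [hik, hHk]; simp [c]
    · rw [hHi _ _ _ hik]; simp [a]
  · intro s b
    show Hf (s, b) ∈ _
    refine ⟨?_, ?_, ?_⟩
    · intro i
      by_cases hik : i = k
      · rw [hik, hHk]
        simp [(hΦ b).1 k, Lam_infty (show D k = D k + 0 from rfl)]
      · rw [hHi _ _ _ hik]
        simp [(hΦ b).1 i, hΨ1 b i]
    · intro x
      rcases hac s with h | h
      · refine hεU b x _ fun i => ?_
        by_cases hik : i = k
        · rw [hik, hHk, h]; simpa using hε
        · rw [hHi _ _ _ hik]
          have h1 : Φ b i x ∈ Metric.ball (Φ b i x) ε := Metric.mem_ball_self hε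
          have h2 : Ψ b i x ∈ Metric.ball (Φ b i x) ε := hdx b i x
          exact convex_ball _ _ h1 h2 (sub_nonneg.2 (ha1 s)) (ha0 s)
            (sub_add_cancel 1 (a s))
      · have hi1 : ∀ i, i ≠ k → Hf (s, b) i = Ψ b i := by
          intro i hik
          rw [hHi _ _ _ hik, h]; simp
        rw [mem_UK]
        intro σ hσ
        by_contra hno
        push Not at hno
        by_cases hkσ : k ∈ σ
        · have hx : x ∈ SS K k (Ψ b) := ⟨σ, hσ, hkσ, fun i hi hik => by
            rw [← hi1 i hik]; exact hno i hi⟩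
          have h1 := hposΦ b x hx
          have h2 := hw b x hx
          have h3 := hno k hkσ
          rw [hHk] at h3
          have h4 : ((starRingEnd ℂ) (Ψ b k x) * ((1 - c s) • Φ b k + c s • Lam (D k) 0 (w b)) x).re
            = (1 - c s) * ((starRingEnd ℂ) (Ψ b k x) * Φ b k x).re +
              c s * ((starRingEnd ℂ) (Ψ b k x) * Lam (D k) 0 (w b) x).re := by
            simp
            ring
          rw [h3, mul_zero, Complex.zero_re] at h4
          have h5 := hc0 s
          have h6 := hc1 s
          rcases h6.eq_or_lt with h7 | h7
          · rw [h7] at h4; linarith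
          · have := mul_pos (sub_pos.2 h7) h1
            have := mul_nonneg h5 h2.le
            linarith
        · obtain ⟨i, hi, hne⟩ := mem_UK.1 (hεU b x (fun i => Ψ b i x) fun i => hdx b i x) σ hσ
          have hik : i ≠ k := fun h => hkσ (h ▸ hi)
          apply hne
          rw [← hi1 i hik]
          exact hno i hi
    · intro i hi
      have hik : i ≠ k := fun h => hkT (h ▸ hi)
      rw [hHi _ _ _ hik]
      exact VV_convex _ ((hΦ b).2.2 i hi) (hΨT b i hi) (sub_nonneg.2 (ha1 s)) (ha0 s) (by ring)
  · intro s b hb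
    show Hf (s, b) k ∈ _
    rw [hHk]
    exact VV_convex _ (hk b hb) ⟨_, rfl⟩ (sub_nonneg.2 (hc1 s)) (hc0 s) (by ring)
  · intro b
    show Hf (1, b) k ∈ _
    rw [hHk]
    have : c 1 = 1 := by simp [c]; norm_num
    rw [this]
    simp only [sub_self, zero_smul, zero_add, one_smul]
    exact ⟨_, rfl⟩

/-- the stretching map -/
lemma cube_norm {m : ℕ} (b : Fin m → unitInterval) (i : Fin m) :
    |(b i : ℝ) - 1 / 2| ≤ ‖fun i => (b i : ℝ) - 1 / 2‖ :=
  norm_le_pi_norm (fun i => (b i : ℝ) - 1 / 2) i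

lemma cube_norm_le {m : ℕ} (b : Fin m → unitInterval) :
    ‖fun i => (b i : ℝ) - 1 / 2‖ ≤ 1 / 2 := by
  refine (pi_norm_le_iff_of_nonneg (by norm_num)).2 fun i => ?_
  rw [Real.norm_eq_abs, abs_le]
  have := (b i).2.1
  have := (b i).2.2
  constructor <;> linarith

lemma cube_norm_bdry {m : ℕ} {b : Fin m → unitInterval} (hb : b ∈ Cube.boundary (Fin m)) :
    ‖fun i => (b i : ℝ) - 1 / 2‖ = 1 / 2 := by
  refine le_antisymm (cube_norm_le b) ?_
  obtain ⟨i, hi⟩ := hb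
  refine le_trans ?_ (cube_norm b i)
  rcases hi with h | h <;> rw [h] <;> norm_num [abs_of_pos, abs_of_neg]

lemma rel_of_htpy {m : ℕ} {Z : Type*} [TopologicalSpace Z] (A B : Set Z)
    (Φ : C(Fin m → unitInterval, Z)) (H : C(unitInterval × (Fin m → unitInterval), Z))
    (h0 : ∀ b, H (0, b) = Φ b) (hA : ∀ s b, H (s, b) ∈ A)
    (hB : ∀ s, ∀ b ∈ Cube.boundary (Fin m), H (s, b) ∈ B) (h1 : ∀ b, H (1, b) ∈ B) :
    ∃ ψ : C(unitInterval × (Fin m → unitInterval), Z), (∀ b, ψ (0, b) = Φ b) ∧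
      (∀ s b, ψ (s, b) ∈ A) ∧ (∀ s, ∀ b ∈ Cube.boundary (Fin m), ψ (s, b) = Φ b) ∧
      ∀ b, ψ (1, b) ∈ B := by
  let Nn : (Fin m → unitInterval) → ℝ := fun b => 2 * ‖fun i => (b i : ℝ) - 1 / 2‖
  have hcu : Continuous fun b : Fin m → unitInterval => (fun i => (b i : ℝ) - 1 / 2) :=
    continuous_pi fun i => (continuous_subtype_val.comp (continuous_apply i)).sub continuous_const
  have hNc : Continuous Nn := continuous_const.mul hcu.norm
  let sg : unitInterval × (Fin m → unitInterval) → unitInterval := fun p =>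
    Set.projIcc 0 1 zero_le_one (min (p.1 : ℝ) (2 * (1 - Nn p.2)))
  let cg : unitInterval × (Fin m → unitInterval) → (Fin m → unitInterval) := fun p =>
    clampI m (fun i => 1 / 2 + ((p.2 i : ℝ) - 1 / 2) * ((1 + (p.1 : ℝ)) /
      max 1 ((1 + (p.1 : ℝ)) * Nn p.2)))
  have hNc' : Continuous fun p : unitInterval × (Fin m → unitInterval) => Nn p.2 :=
    hNc.comp continuous_snd
  have h1c : Continuous fun p : unitInterval × (Fin m → unitInterval) => (p.1 : ℝ) :=
    continuous_subtype_val.comp continuous_fst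
  have hsg : Continuous sg := by
    refine continuous_projIcc.comp ?_
    fun_prop
  have hcg : Continuous cg := by
    refine (clampI m).continuous.comp (continuous_pi fun i => ?_)
    refine continuous_const.add (((continuous_subtype_val.comp
      ((continuous_apply i).comp continuous_snd)).sub continuous_const).mul ?_)
    refine (continuous_const.add h1c).div (continuous_const.max ((continuous_const.add h1c).mul hNc')) ?_
    intro p
    have : (1 : ℝ) ≤ max 1 ((1 + (p.1 : ℝ)) * Nn p.2) := le_max_left _ _
    positivity
  have hNle : ∀ b, Nn b ≤ 1 := fun b => by
    have := cube_norm_le b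
    simp only [Nn]; linarith
  have hN0 : ∀ b, 0 ≤ Nn b := fun b => by simp only [Nn]; positivity
  refine ⟨⟨fun p => H (sg p, cg p), H.continuous.comp (hsg.prodMk hcg)⟩, ?_, fun s b => hA _ _, ?_, ?_⟩
  · intro b
    show H (sg (0, b), cg (0, b)) = _
    have e1 : sg (0, b) = 0 := by
      have : min ((0 : unitInterval) : ℝ) (2 * (1 - Nn b)) = 0 := by
        have := hNle b
        simp; linarith
      simp only [sg, this]
      exact Set.projIcc_left _
    have e2 : cg (0, b) = b := by
      have : max (1 : ℝ) ((1 + ((0 : unitInterval) : ℝ)) * Nn b) = 1 := by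
        have := hNle b
        simp; linarith
      simp only [cg, this]
      conv_rhs => rw [← clampI_coe b]
      congr 1
      funext i
      simp
    rw [e1, e2, h0]
  · intro s b hb
    show H (sg (s, b), cg (s, b)) = _
    have hN1 : Nn b = 1 := by simp only [Nn, cube_norm_bdry hb]; norm_num
    have hs0 : (0 : ℝ) ≤ s := s.2.1
    have e1 : sg (s, b) = 0 := by
      have : min (s : ℝ) (2 * (1 - Nn b)) = 0 := by
        rw [hN1]; simp [hs0]
      simp only [sg, this]
      exact Set.projIcc_left _
    have e2 : cg (s, b) = b := by
      have : max (1 : ℝ) ((1 + (s : ℝ)) * Nn b) = 1 + s := by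
        rw [hN1]; simp [hs0]
      simp only [cg, this]
      conv_rhs => rw [← clampI_coe b]
      congr 1
      funext i
      have : (1 + (s : ℝ)) ≠ 0 := by positivity
      field_simp
      ring
    rw [e1, e2, h0]
  · intro b
    show H (sg (1, b), cg (1, b)) ∈ B
    rcases le_total (Nn b) (1 / 2) with h | h
    · have e1 : sg (1, b) = 1 := by
        have : min ((1 : unitInterval) : ℝ) (2 * (1 - Nn b)) = 1 := by
          simp; linarith
        simp only [sg, this]
        exact Set.projIcc_right _
      rw [e1]
      exact h1 _
    · apply hB
      have hne : Nonempty (Fin m) := by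
        by_contra hne
        rw [not_nonempty_iff] at hne
        have : Nn b = 0 := by
          have : (fun i => (b i : ℝ) - 1 / 2) = 0 := Subsingleton.elim _ _
          simp only [Nn, this, norm_zero, mul_zero]
        linarith
      obtain ⟨i, hi⟩ := Finite.exists_max fun i => |(b i : ℝ) - 1 / 2|
      have hNi : ‖fun i => (b i : ℝ) - 1 / 2‖ = |(b i : ℝ) - 1 / 2| :=
        le_antisymm ((pi_norm_le_iff_of_nonneg (abs_nonneg _)).2 hi) (cube_norm b i)
      have hNN : Nn b = 2 * |(b i : ℝ) - 1 / 2| := by simp only [Nn, hNi]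
      have hmx : max (1 : ℝ) ((1 + ((1 : unitInterval) : ℝ)) * Nn b) = 2 * Nn b := by
        rw [max_eq_right]
        · simp; left; norm_num
        · simp; linarith
      have hcgi : cg (1, b) i = Set.projIcc 0 1 zero_le_one
          (1 / 2 + ((b i : ℝ) - 1 / 2) * ((1 + ((1 : unitInterval) : ℝ)) /
      max 1 ((1 + ((1 : unitInterval) : ℝ)) * Nn b))) := rfl
      rw [hmx] at hcgi
      refine ⟨i, ?_⟩
      rcases le_total 0 ((b i : ℝ) - 1 / 2) with hs | hs
      · right
        rw [abs_of_nonneg hs] at hNN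
        have : ((b i : ℝ) - 1 / 2) ≠ 0 := by intro h0; rw [h0] at hNN; linarith
        have e : (1 / 2 + ((b i : ℝ) - 1 / 2) * ((1 + ((1 : unitInterval) : ℝ)) / (2 * Nn b))) = 1 := by
          rw [hNN]
          generalize (b i : ℝ) - 1 / 2 = z at this
          simp only [Set.Icc.coe_one]
          field_simp
          norm_num
        rw [hcgi, e]
        exact Set.projIcc_right _
      · left
        rw [abs_of_nonpos hs] at hNN
        have : ((b i : ℝ) - 1 / 2) ≠ 0 := by intro h0; rw [h0] at hNN; linarith
        have e : (1 / 2 + ((b i : ℝ) - 1 / 2) * ((1 + ((1 : unitInterval) : ℝ)) / (2 * Nn b))) = 0 := by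
          rw [hNN]
          generalize (b i : ℝ) - 1 / 2 = z at this
          simp only [Set.Icc.coe_one]
          field_simp
          norm_num
        rw [hcgi, e]
        exact Set.projIcc_left _

theorem compress_all {m r : ℕ} (K : Set (Finset (Fin r))) (ρ : ℕ) (hρ : 2 ≤ ρ)
    (hcard : ∀ σ, σ ∉ K → ρ ≤ σ.card) (D : Fin r → ℕ)
    (hm : ∀ k, m < 2 * (ρ - 1) * D k) (Φ : C(Fin m → unitInterval, FS r))
    (hΦ : ∀ b, Φ b ∈ Gd K D ∅)
    (hk : ∀ b ∈ Cube.boundary (Fin m), Φ b ∈ Gd K D Set.univ) (T : Finset (Fin r)) :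
    ∃ Ψ : C(Fin m → unitInterval, FS r), (∀ b, Ψ b ∈ Gd K D ↑T) ∧
      ContinuousMap.HomotopicWith Φ Ψ (fun f => (∀ b, f b ∈ Gd K D ∅) ∧
        ∀ b ∈ Cube.boundary (Fin m), f b = Φ b) := by
  induction T using Finset.induction_on with
  | empty =>
    refine ⟨Φ, by simpa using hΦ, ContinuousMap.HomotopicWith.refl _ ⟨hΦ, fun _ _ => rfl⟩⟩
  | insert k T hkT ih =>
    obtain ⟨Ψ, hΨ, hΨh⟩ := ih
    have hΨb : ∀ b ∈ Cube.boundary (Fin m), Ψ b = Φ b := by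
      obtain ⟨G⟩ := hΨh
      intro b hb
      have := (G.prop' 1).2 b hb
      simpa using this
    obtain ⟨H, H0, H1, H2, H3⟩ := compress K ρ hρ hcard D k ↑T (by simpa using hkT) (hm k) Ψ hΨ
      (fun b hb => by rw [hΨb b hb]; exact (hk b hb).2.2 k trivial)
    obtain ⟨ψ, P0, P1, P2, P3⟩ := rel_of_htpy (Gd K D ↑T) {F | F k ∈ VV (D k)} Ψ H H0 H1 H2 H3
    refine ⟨⟨fun b => ψ (1, b), by fun_prop⟩, ?_, hΨh.trans ⟨⟨⟨ψ, P0, fun b => rfl⟩, ?_⟩⟩⟩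
    · intro b
      refine ⟨(P1 1 b).1, (P1 1 b).2.1, fun i hi => ?_⟩
      rcases Finset.mem_insert.1 hi with h | h
      · rw [h]; exact P3 b
      · exact (P1 1 b).2.2 i h
    · intro t
      refine ⟨fun b => ⟨(P1 t b).1, (P1 t b).2.1, fun i hi => hi.elim⟩, fun b hb => ?_⟩
      rw [← hΨb b hb]
      exact P2 t b hb

/-- coordinates of a loop in `U(K)` -/
def FSof {r : ℕ} {K : Set (Finset (Fin r))} {hE : (∅ : Finset (Fin r)) ∈ K} :
    C(Loop ↥(UK K) (onesUK hE), FS r) where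
  toFun γ i := ⟨fun x => (γ.1 x).1 i, (continuous_apply i).comp
    (continuous_subtype_val.comp γ.1.continuous)⟩
  continuous_toFun := by
    refine continuous_pi fun i => ?_
    refine ContinuousMap.continuous_of_continuous_uncurry _ ?_
    have : Continuous fun p : Loop ↥(UK K) (onesUK hE) × OnePoint ℝ => p.1.1 p.2 :=
      (continuous_subtype_val.comp continuous_fst).eval continuous_snd
    exact (continuous_apply i).comp (continuous_subtype_val.comp this)

lemma FSof_apply {r : ℕ} {K : Set (Finset (Fin r))} {hE : (∅ : Finset (Fin r)) ∈ K}
    (γ : Loop ↥(UK K) (onesUK hE)) (i : Fin r) (x : OnePoint ℝ) : FSof γ i x = (γ.1 x).1 i := rfl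

lemma FSof_mem {r : ℕ} {K : Set (Finset (Fin r))} {hE : (∅ : Finset (Fin r)) ∈ K} (D : Fin r → ℕ)
    (γ : Loop ↥(UK K) (onesUK hE)) : FSof γ ∈ Gd K D ∅ := by
  refine ⟨fun i => ?_, fun x => (γ.1 x).2, fun i hi => hi.elim⟩
  rw [FSof_apply, γ.2]; rfl

lemma FSof_injective {r : ℕ} {K : Set (Finset (Fin r))} {hE : (∅ : Finset (Fin r)) ∈ K}
    {γ γ' : Loop ↥(UK K) (onesUK hE)} (h : FSof γ = FSof γ') : γ = γ' := by
  apply Subtype.ext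
  ext x i
  have := congrArg (fun F : FS r => F i x) h
  exact this

lemma Gd_mono {r : ℕ} {K : Set (Finset (Fin r))} {D : Fin r → ℕ} {S T : Set (Fin r)} (h : S ⊆ T) :
    Gd K D T ⊆ Gd K D S := fun _ hF => ⟨hF.1, hF.2.1, fun i hi => hF.2.2 i (h hi)⟩

/-- building loops -/
def toLp {r : ℕ} {K : Set (Finset (Fin r))} (hE : (∅ : Finset (Fin r)) ∈ K) {D : Fin r → ℕ}
    {B : Type*} [TopologicalSpace B] (Φ : C(B, FS r)) (hΦ : ∀ b, Φ b ∈ Gd K D ∅) :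
    C(B, Loop ↥(UK K) (onesUK hE)) where
  toFun b := ⟨⟨fun x => ⟨fun i => Φ b i x, (hΦ b).2.1 x⟩,
    Continuous.subtype_mk (continuous_pi fun i => (Φ b i).continuous) _⟩, by
      apply Subtype.ext; funext i; exact (hΦ b).1 i⟩
  continuous_toFun := by
    refine Continuous.subtype_mk ?_ _
    refine ContinuousMap.continuous_of_continuous_uncurry _ ?_
    exact Continuous.subtype_mk (continuous_evalFS Φ) _

lemma FSof_toLp {r : ℕ} {K : Set (Finset (Fin r))} (hE : (∅ : Finset (Fin r)) ∈ K) {D : Fin r → ℕ}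
    {B : Type*} [TopologicalSpace B] (Φ : C(B, FS r)) (hΦ : ∀ b, Φ b ∈ Gd K D ∅) (b : B) :
    FSof (toLp hE Φ hΦ b) = Φ b := rfl

/-- the polynomial map -/
def j0F {r : ℕ} (D : Fin r → ℕ) : C((∀ i, Fin (D i) → ℂ), FS r) :=
  ⟨fun f i => Lam (D i) 0 (f i), continuous_pi fun i =>
    (Lam_continuous _ _ _).comp (continuous_apply i)⟩

lemma j0F_apply {r : ℕ} (D : Fin r → ℕ) (f : ∀ i, Fin (D i) → ℂ) (i : Fin r) (x : ℝ) :
    j0F D f i (x : OnePoint ℝ) = (toPoly (f i)).eval (x : ℂ) / ((x : ℂ) - Complex.I) ^ (D i) := by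
  show Lam (D i) 0 (f i) _ = _
  rw [Lam_coe (by simp)]
  simp

lemma j0F_mem_iff {r : ℕ} (K : Set (Finset (Fin r))) (hE : (∅ : Finset (Fin r)) ∈ K) (D : Fin r → ℕ)
    (f : ∀ i, Fin (D i) → ℂ) :
    j0F D f ∈ Gd K D ∅ ↔ f ∈ PolSp K D := by
  constructor
  · intro h σ hσ t
    obtain ⟨i, hi, hne⟩ := mem_UK.1 (h.2.1 (t : OnePoint ℝ)) σ hσ
    refine ⟨i, hi, fun h0 => hne ?_⟩
    rw [j0F_apply, h0, zero_div]
  · intro h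
    refine ⟨fun i => Lam_infty (by simp) _, fun x => ?_, fun i hi => hi.elim⟩
    induction x using OnePoint.rec with
    | infty =>
      have : (fun i => j0F D f i OnePoint.infty) = onesC := by
        funext i; exact Lam_infty (by simp) _
      rw [this]
      exact ones_mem_UK hE
    | coe x =>
      rw [mem_UK]
      intro σ hσ
      obtain ⟨i, hi, hne⟩ := h σ hσ x
      refine ⟨i, hi, ?_⟩
      rw [j0F_apply]
      have := xmi_ne x
      positivity

/-- the canonical lift -/
def j0 {r : ℕ} (K : Set (Finset (Fin r))) (hE : (∅ : Finset (Fin r)) ∈ K) (D : Fin r → ℕ) :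
    C(↥(PolSp K D), Loop ↥(UK K) (onesUK hE)) :=
  toLp (D := D) hE ((j0F D).comp ⟨Subtype.val, continuous_subtype_val⟩)
    (fun f => (j0F_mem_iff K hE D f.1).2 f.2)

lemma FSof_j0 {r : ℕ} (K : Set (Finset (Fin r))) (hE : (∅ : Finset (Fin r)) ∈ K) (D : Fin r → ℕ)
    (f : ↥(PolSp K D)) : FSof (j0 K hE D f) = j0F D f.1 := rfl

lemma Lam_emb (d : ℕ) : Topology.IsEmbedding (Lam d 0 : (Fin d → ℂ) → C(OnePoint ℝ, ℂ)) := by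
  let L : (Fin d → ℂ) →ₗ[ℂ] C(OnePoint ℝ, ℂ) :=
    { toFun := fun v => Lam d 0 v - Lam d 0 (0 : Fin d → ℂ)
      map_add' := by
        intro v w
        simp [Lam, add_smul, Finset.sum_add_distrib]
      map_smul' := by
        intro a v
        simp [Lam, Finset.smul_sum, mul_smul] }
  have hinj : Function.Injective L := by
    intro v w h
    have h' : Lam d 0 v - Lam d 0 (0 : Fin d → ℂ) = Lam d 0 w - Lam d 0 (0 : Fin d → ℂ) := h
    exact Lam_injective (by simp) (sub_left_injective h')
  have hL := (L.isClosedEmbedding_of_injective (LinearMap.ker_eq_bot.2 hinj)).isEmbedding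
  have := (Homeomorph.addRight (Lam d 0 (0 : Fin d → ℂ))).isEmbedding.comp hL
  convert this using 1
  funext v
  show _ = Lam d 0 v - Lam d 0 (0 : Fin d → ℂ) + Lam d 0 (0 : Fin d → ℂ)
  rw [sub_add_cancel]

lemma j0F_emb {r : ℕ} (D : Fin r → ℕ) : Topology.IsEmbedding (j0F D) :=
  Topology.IsEmbedding.piMap (f := fun i => (Lam (D i) 0 : (Fin (D i) → ℂ) → C(OnePoint ℝ, ℂ)))
    fun i => Lam_emb (D i)

/-- the relative lifting property -/
def LiftP {X Y : Type*} [TopologicalSpace X] [TopologicalSpace Y] (f : C(X, Y)) (m : ℕ) : Prop :=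
  ∀ (p : C(Fin m → unitInterval, Y)) (pt : (Fin m → unitInterval) → X),
    ContinuousOn pt (Cube.boundary (Fin m)) → (∀ b ∈ Cube.boundary (Fin m), f (pt b) = p b) →
    ∃ P : C(Fin m → unitInterval, X), (∀ b ∈ Cube.boundary (Fin m), P b = pt b) ∧
      (f.comp P).HomotopicRel p (Cube.boundary (Fin m))

theorem liftP_j0 {m r : ℕ} (K : Set (Finset (Fin r))) (hE : (∅ : Finset (Fin r)) ∈ K)
    (ρ : ℕ) (hρ : 2 ≤ ρ)
    (hcard : ∀ σ, σ ∉ K → ρ ≤ σ.card) (D : Fin r → ℕ)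
    (hm : ∀ k, m < 2 * (ρ - 1) * D k) : LiftP (j0 K hE D) m := by
  intro p pt _ hpt
  have hp : ∀ b, (FSof.comp p) b ∈ Gd K D ∅ := fun b => FSof_mem D (p b)
  obtain ⟨Ψ, hΨ, ⟨G⟩⟩ := compress_all K ρ hρ hcard D hm (FSof.comp p) hp (by
    intro b hb
    show FSof (p b) ∈ _
    rw [← hpt b hb, FSof_j0]
    have := (j0F_mem_iff K hE D (pt b).1).2 (pt b).2
    exact ⟨this.1, this.2.1, fun i _ => ⟨_, rfl⟩⟩) Finset.univ
  choose f hf using fun b i => (hΨ b).2.2 i (by simp)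
  have hfF : ∀ b, j0F D (f b) = Ψ b := fun b => funext fun i => hf b i
  have hfc : Continuous f := by
    rw [(j0F_emb D).continuous_iff]
    convert Ψ.continuous using 1
    funext b
    exact hfF b
  have hfP : ∀ b, f b ∈ PolSp K D := fun b => by
    rw [← j0F_mem_iff K hE, hfF]
    exact Gd_mono (by simp) (hΨ b)
  let P : C(Fin m → unitInterval, ↥(PolSp K D)) := ⟨fun b => ⟨f b, hfP b⟩, hfc.subtype_mk _⟩
  have hPΨ : ∀ b, FSof (j0 K hE D (P b)) = Ψ b := fun b => hfF b
  refine ⟨P, fun b hb => ?_, ?_⟩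
  · apply Subtype.ext
    apply (j0F_emb D).injective
    show j0F D (f b) = _
    rw [hfF]
    have h1 := (G.prop' 1).2 b hb
    have h2 : Ψ b = FSof (p b) := by simpa using h1
    rw [h2, ← hpt b hb, FSof_j0]
  · refine ContinuousMap.HomotopicRel.symm ?_
    let H := toLp hE (D := D) G.toContinuousMap (fun tb => (G.prop' tb.1).1 tb.2)
    have hH : ∀ t b, FSof (H (t, b)) = G (t, b) := fun t b => rfl
    refine ⟨⟨⟨H, ?_, ?_⟩, ?_⟩⟩
    · intro b
      apply FSof_injective
      show FSof (H (0, b)) = _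
      rw [hH, G.apply_zero]; rfl
    · intro b
      apply FSof_injective
      show FSof (H (1, b)) = _
      rw [hH, G.apply_one]; exact (hPΨ b).symm
    · intro t b hb
      apply FSof_injective
      show FSof (H (t, b)) = _
      rw [hH]
      exact (G.prop' t).2 b hb

lemma piMap_mk {X Y : Type*} [TopologicalSpace X] [TopologicalSpace Y] (f : C(X, Y)) (k : ℕ) (x : X)
    (p : GenLoop (Fin k) X x) (h : f.comp p.1 ∈ GenLoop (Fin k) Y (f x)) :
    piMap k f x (Quotient.mk _ p) = Quotient.mk _ ⟨f.comp p.1, h⟩ := rfl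

lemma piMap_surj_of_liftP {X Y : Type*} [TopologicalSpace X] [TopologicalSpace Y] (f : C(X, Y))
    (k : ℕ) (h : LiftP f k) (x : X) : Function.Surjective (piMap k f x) := by
  intro c
  induction c using Quotient.inductionOn with
  | _ q =>
  obtain ⟨P, hP1, hP2⟩ := h q.1 (fun _ => x) continuousOn_const (fun b hb => (q.2 b hb).symm)
  refine ⟨Quotient.mk _ ⟨P, fun b hb => hP1 b hb⟩, ?_⟩
  exact Quotient.sound hP2

lemma piMap_inj_of_liftP {X Y : Type*} [TopologicalSpace X] [TopologicalSpace Y] (f : C(X, Y))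
    (k : ℕ) (h : LiftP f (k + 1)) (x : X) : Function.Injective (piMap k f x) := by
  intro c c' hcc
  induction c using Quotient.inductionOn with
  | _ p1 =>
  induction c' using Quotient.inductionOn with
  | _ p2 =>
  obtain ⟨H⟩ := Quotient.exact hcc
  let p : C(Fin (k + 1) → unitInterval, Y) :=
    ⟨fun b => H (b 0, Fin.tail b), by
      refine H.continuous.comp ((continuous_apply 0).prodMk ?_)
      exact continuous_pi fun i => continuous_apply _⟩
  have htail : Continuous fun b : Fin (k + 1) → unitInterval => (Fin.tail b : Fin k → unitInterval) :=
    continuous_pi fun i => continuous_apply _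
  let pt : (Fin (k + 1) → unitInterval) → X := fun b =>
    if b 0 = 0 then p1.1 (Fin.tail b) else if b 0 = 1 then p2.1 (Fin.tail b) else x
  have hpt0 : ∀ b, b 0 = 0 → pt b = p1.1 (Fin.tail b) := fun b hb => if_pos hb
  have hpt1 : ∀ b, b 0 = 1 → pt b = p2.1 (Fin.tail b) := fun b hb => by
    have : b 0 ≠ 0 := by rw [hb]; exact one_ne_zero
    simp only [pt, if_neg this, if_pos hb]
  have hptt : ∀ b, (Fin.tail b : Fin k → unitInterval) ∈ Cube.boundary (Fin k) → pt b = x := by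
    intro b hb
    simp only [pt]
    rw [p1.2 _ hb, p2.2 _ hb]
    simp
  have hbd : Cube.boundary (Fin (k + 1)) = ({b | b 0 = 0} ∪ {b | b 0 = 1}) ∪
      {b | (Fin.tail b : Fin k → unitInterval) ∈ Cube.boundary (Fin k)} := by
    ext b
    simp only [Cube.boundary, Set.mem_ofPred_eq, Set.mem_union, Fin.exists_fin_succ, Fin.tail]
  have hc0 : IsClosed {b : Fin (k + 1) → unitInterval | b 0 = 0} :=
    isClosed_eq (continuous_apply 0) continuous_const
  have hc1 : IsClosed {b : Fin (k + 1) → unitInterval | b 0 = 1} :=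
    isClosed_eq (continuous_apply 0) continuous_const
  have hbk : IsClosed (Cube.boundary (Fin k)) := by
    have : Cube.boundary (Fin k) = ⋃ i, ({y | y i = 0} ∪ {y | y i = 1}) := by
      ext y; simp [Cube.boundary]
    rw [this]
    exact isClosed_iUnion_of_finite fun i => (isClosed_eq (continuous_apply i) continuous_const).union
      (isClosed_eq (continuous_apply i) continuous_const)
  have hc2 : IsClosed {b : Fin (k + 1) → unitInterval | Fin.tail b ∈ Cube.boundary (Fin k)} :=
    hbk.preimage htail
  have hcont : ContinuousOn pt (Cube.boundary (Fin (k + 1))) := by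
    rw [hbd]
    refine ContinuousOn.union_of_isClosed (ContinuousOn.union_of_isClosed ?_ ?_ hc0 hc1) ?_
      (hc0.union hc1) hc2
    · exact ((p1.1.continuous.comp htail).continuousOn).congr fun b hb => hpt0 b hb
    · exact ((p2.1.continuous.comp htail).continuousOn).congr fun b hb => hpt1 b hb
    · exact (continuousOn_const (c := x)).congr fun b hb => hptt b hb
  obtain ⟨P, hP, -⟩ := h p pt hcont (by
    intro b hb
    rw [hbd] at hb
    rcases hb with (hb | hb) | hb
    · rw [hpt0 b hb]
      show _ = H (b 0, Fin.tail b)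
      rw [show b 0 = 0 from hb, H.apply_zero]; rfl
    · rw [hpt1 b hb]
      show _ = H (b 0, Fin.tail b)
      rw [show b 0 = 1 from hb, H.apply_one]; rfl
    · rw [hptt b hb]
      show _ = H (b 0, Fin.tail b)
      have h3 := H.prop' (b 0) (Fin.tail b) hb
      have h4 : f.comp p1.1 (Fin.tail b) = f x := by
        show f (p1.1 _) = _
        rw [p1.2 _ hb]
      exact (h3.trans h4).symm)
  apply Quotient.sound
  have hcons : Continuous fun q : unitInterval × (Fin k → unitInterval) =>
      (Fin.cons q.1 q.2 : Fin (k + 1) → unitInterval) := by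
    refine continuous_pi fun i => ?_
    refine Fin.cases ?_ (fun i => ?_) i
    · exact continuous_fst
    · exact (continuous_apply i).comp continuous_snd
  refine ⟨⟨⟨⟨fun q => P (Fin.cons q.1 q.2), P.continuous.comp hcons⟩, ?_, ?_⟩, ?_⟩⟩
  · intro y
    show P (Fin.cons 0 y) = _
    rw [hP _ ⟨0, Or.inl rfl⟩, hpt0 _ rfl, Fin.tail_cons]
  · intro y
    show P (Fin.cons 1 y) = _
    rw [hP _ ⟨0, Or.inr rfl⟩, hpt1 _ rfl, Fin.tail_cons]
  · intro t y hy
    show P (Fin.cons t y) = _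
    have h5 : (Fin.tail (Fin.cons t y : Fin (k + 1) → unitInterval)) ∈ Cube.boundary (Fin k) := by
      rw [Fin.tail_cons]; exact hy
    rw [hP _ (by rw [hbd]; right; exact h5), hptt _ h5]
    exact (p1.2 y hy).symm

lemma prim_mem_basis {n r : ℕ} (F : Fan n) (N : Fin r → Fin n → ℤ) (hPG : IsPrimGens F N)
    (s : Finset (Fin r)) (hs : s ∈ KC F N)
    (b : Module.Basis (Fin n) ℤ (Fin n → ℤ)) (s' : Finset (Fin n))
    (hb : coneIdx N s = {x | ∃ lam : Fin n → ℝ, (∀ i, 0 ≤ lam i) ∧ x = ∑ i ∈ s', lam i • zr (b i)})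
    (l : Fin r) (hl : l ∈ s) : ∃ i, b i = N l := by
  have hC : coneIdx N s ∈ F.cones := hs
  have hmemC : ∀ t : ℝ, 0 ≤ t → t • zr (N l) ∈ coneIdx N s := by
    intro t ht
    refine ⟨fun i => if i = l then t else 0, fun i => by dsimp only; split_ifs <;> simp [ht], ?_⟩
    simp [ite_smul, hl]
  obtain ⟨L, hL0, hL⟩ := F.inter_face _ hC _ (hPG.ray_mem l)
  have hray : coneIdx N s ∩ ray (zr (N l)) = ray (zr (N l)) := by
    apply Set.inter_eq_right.2
    rintro _ ⟨t, ht, rfl⟩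
    exact hmemC t ht
  rw [hray] at hL
  have hNl : zr (N l) ∈ ray (zr (N l)) := ⟨1, zero_le_one, by simp⟩
  have hNl2 := hNl
  rw [hL] at hNl2
  have hNlC := hNl2.1
  have hLN : L (zr (N l)) = 0 := hNl2.2
  rw [hb] at hNlC
  obtain ⟨lam, hlam, hsum⟩ := hNlC
  have hbC : ∀ i ∈ s', zr (b i) ∈ coneIdx N s := by
    intro i hi
    rw [hb]
    refine ⟨fun j => if j = i then 1 else 0, fun j => by dsimp only; split_ifs <;> simp, ?_⟩
    simp [ite_smul, hi]
  rw [hsum, map_sum] at hLN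
  have hz := (Finset.sum_eq_zero_iff_of_nonneg (fun i hi => by
    rw [map_smul]; exact mul_nonneg (hlam i) (hL0 _ (hbC i hi)))).1 hLN
  obtain ⟨i, hi, hlami⟩ : ∃ i ∈ s', lam i ≠ 0 := by
    by_contra hno
    push Not at hno
    have : zr (N l) = 0 := by
      rw [hsum]; exact Finset.sum_eq_zero fun i hi => by rw [hno i hi, zero_smul]
    apply hPG.ne_zero l
    funext j
    have := congrFun this j
    simpa [zr] using this
  have hLb : L (zr (b i)) = 0 := by
    have := hz i hi
    rw [map_smul, smul_eq_mul] at this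
    exact (mul_eq_zero.1 this).resolve_left hlami
  have hbr : zr (b i) ∈ ray (zr (N l)) := by
    rw [hL]; exact ⟨hbC i hi, hLb⟩
  have hbl : zr (b i) ∈ ray (zr (N l)) ∩ {x | IsLatticePoint x} := ⟨hbr, fun j => ⟨b i j, rfl⟩⟩
  rw [hPG.primitive l] at hbl
  obtain ⟨c, hc⟩ := hbl
  have hc' : b i = (c : ℤ) • N l := by
    funext j
    have := congrFun hc j
    simp [zr] at this
    simp
    exact_mod_cast this
  have h1 : (1 : ℤ) = c * b.coord i (N l) := by
    have := congrArg (b.coord i) hc'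
    rw [map_smul] at this
    simpa using this
  have h2 : (c : ℤ) = 1 := by
    have : (c : ℤ) ∣ 1 := ⟨_, h1⟩
    exact Int.eq_one_of_dvd_one (by positivity) this
  exact ⟨i, by rw [hc', h2, one_smul]⟩

lemma exists_dual {n r : ℕ} (F : Fan n) (N : Fin r → Fin n → ℤ) (hPG : IsPrimGens F N)
    (hNS : F.NonSingular) (h2 : Cond2 N)
    (s : Finset (Fin r)) (hs : s ∈ KC F N) :
    ∃ m : Fin r → Fin n → ℤ, (∀ i, ∀ l ∈ s, ∑ j, N l j * m i j = if i = l then 1 else 0) ∧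
      ∀ l, ∑ i, (∑ j, N l j * m i j) • N i = N l := by
  obtain ⟨b, s', hb⟩ := hNS _ hs
  have hmem := prim_mem_basis F N hPG s hs b s' hb
  have hsurj : ∀ v : Fin n → ℤ, ∃ c : Fin r → ℤ, ∑ i, c i • N i = v := by
    intro v
    have : v ∈ Submodule.span ℤ (Set.range N) := by rw [h2]; trivial
    exact (Submodule.mem_span_range_iff_exists_fun ℤ).1 this
  choose c hc using hsurj
  let g : Fin n → (Fin r → ℤ) := fun i =>
    if h : ∃ l ∈ s, b i = N l then Pi.single h.choose 1 else c (b i)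
  have hg : ∀ i, ∑ k, g i k • N k = b i := by
    intro i
    by_cases h : ∃ l ∈ s, b i = N l
    · simp only [g, dif_pos h]
      have := h.choose_spec.2
      refine Eq.trans ?_ this.symm
      simp [Pi.single_apply, ite_smul]
    · simp only [g, dif_neg h]
      exact hc _
  have hgl : ∀ i, ∀ l ∈ s, b i = N l → g i = Pi.single l 1 := by
    intro i l hl hil
    have h : ∃ l ∈ s, b i = N l := ⟨l, hl, hil⟩
    simp only [g, dif_pos h]
    have := h.choose_spec.2
    rw [hPG.inj (hil.symm.trans this)]
  let S : (Fin n → ℤ) →ₗ[ℤ] (Fin r → ℤ) := b.constr ℤ g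
  let π : (Fin r → ℤ) →ₗ[ℤ] (Fin n → ℤ) := Fintype.linearCombination ℤ N
  have hπS : π ∘ₗ S = LinearMap.id := by
    apply b.ext
    intro i
    show π (S (b i)) = b i
    rw [show S (b i) = g i from b.constr_basis ℤ g i, Fintype.linearCombination_apply]
    exact hg i
  have hSexp : ∀ v i, S v i = ∑ j, v j * S (Pi.single j 1) i := by
    intro v i
    conv_lhs => rw [LinearMap.pi_apply_eq_sum_univ S v]
    simp only [Finset.sum_apply, Pi.smul_apply, smul_eq_mul]
    refine Finset.sum_congr rfl fun x _ => ?_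
    rw [show (fun j => if x = j then (1:ℤ) else 0) = Pi.single x 1 from by
      funext j
      simp [Pi.single_apply, eq_comm]]
  refine ⟨fun i j => S (Pi.single j 1) i, ?_, ?_⟩
  · intro i l hl
    rw [← hSexp]
    obtain ⟨k, hk⟩ := hmem l hl
    rw [← hk, show S (b k) = g k from b.constr_basis ℤ g k, hgl k l hl hk, Pi.single_apply]
  · intro l
    have := LinearMap.congr_fun hπS (N l)
    simp only [LinearMap.comp_apply, π, Fintype.linearCombination_apply, LinearMap.id_apply] at this
    simp only [← hSexp]
    exact this

lemma G_one {n r : ℕ} (N : Fin r → Fin n → ℤ) : (1 : Fin r → ℂ) ∈ GSet N :=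
  ⟨fun k => one_ne_zero, fun m => by simp⟩

lemma G_mul {n r : ℕ} {N : Fin r → Fin n → ℤ} {μ ν : Fin r → ℂ} (h : μ ∈ GSet N) (h' : ν ∈ GSet N) :
    μ * ν ∈ GSet N :=
  ⟨fun k => mul_ne_zero (h.1 k) (h'.1 k), fun m => by
    simp only [Pi.mul_apply, mul_zpow, Finset.prod_mul_distrib, h.2 m, h'.2 m, mul_one]⟩

lemma G_inv {n r : ℕ} {N : Fin r → Fin n → ℤ} {μ : Fin r → ℂ} (h : μ ∈ GSet N) :
    μ⁻¹ ∈ GSet N :=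
  ⟨fun k => inv_ne_zero (h.1 k), fun m => by
    simp only [Pi.inv_apply, inv_zpow, Finset.prod_inv_distrib, h.2 m, inv_one]⟩

/-- where the coordinates outside `s` do not vanish -/
def Us {r : ℕ} (s : Finset (Fin r)) : Set (Fin r → ℂ) := {x | ∀ l, l ∉ s → x l ≠ 0}

lemma isOpen_Us {r : ℕ} (s : Finset (Fin r)) : IsOpen (Us s) := by
  have : Us s = ⋂ l ∈ {l | l ∉ s}, {x : Fin r → ℂ | x l ≠ 0} := by
    ext x; simp [Us]
  rw [this]
  exact (Set.toFinite _).isOpen_biInter fun l _ => isOpen_ne_fun (continuous_apply l) continuous_const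

lemma mul_mem_Us {r : ℕ} {s : Finset (Fin r)} {μ x : Fin r → ℂ} (hμ : ∀ k, μ k ≠ 0) :
    μ * x ∈ Us s ↔ x ∈ Us s := by
  simp [Us, hμ]

/-- zero sets -/
def Zs {r : ℕ} (x : Fin r → ℂ) : Finset (Fin r) := Finset.univ.filter fun i => x i = 0

lemma mem_Us_Zs {r : ℕ} (x : Fin r → ℂ) : x ∈ Us (Zs x) := by
  intro l hl h0
  exact hl (by simp [Zs, h0])

lemma Zs_mem {r : ℕ} {K : Set (Finset (Fin r))} {x : Fin r → ℂ} (hx : x ∈ UK K) : Zs x ∈ K := by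
  by_contra h
  obtain ⟨i, hi, hne⟩ := mem_UK.1 hx _ h
  simp [Zs] at hi
  exact hne hi

/-- property of the structure maps -/
def HasTau {n r : ℕ} (N : Fin r → Fin n → ℤ) (K : Set (Finset (Fin r))) : Prop :=
  ∀ s ∈ K, ∃ τ : (Fin r → ℂ) → (Fin r → ℂ), ContinuousOn τ (Us s) ∧ (∀ x ∈ Us s, τ x ∈ GSet N) ∧
    ∀ μ ∈ GSet N, ∀ x, τ (μ * x) = μ * τ x

lemma hasTau {n r : ℕ} (F : Fan n) (N : Fin r → Fin n → ℤ) (hPG : IsPrimGens F N)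
    (hNS : F.NonSingular) (h2 : Cond2 N) : HasTau N (KC F N) := by
  intro s hs
  obtain ⟨m, hm1, hm2⟩ := exists_dual F N hPG hNS h2 s hs
  let a : Fin r → Fin r → ℤ := fun i l => (if i = l then 1 else 0) - ∑ j, N l j * m i j
  have ha : ∀ i, ∀ l ∈ s, a i l = 0 := fun i l hl => by simp only [a, hm1 i l hl, sub_self]
  refine ⟨fun x i => ∏ l, x l ^ a i l, ?_, ?_, ?_⟩
  · refine continuousOn_pi.2 fun i => continuousOn_finsetProd _ fun l _ => ?_
    by_cases hl : l ∈ s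
    · simp only [ha i l hl, zpow_zero]
      exact continuousOn_const
    · exact (continuous_apply l).continuousOn.zpow₀ _ fun x hx => Or.inl (hx l hl)
  · intro x hx
    have hne : ∀ i l, x l ^ a i l ≠ 0 := by
      intro i l
      by_cases hl : l ∈ s
      · simp [ha i l hl]
      · exact zpow_ne_zero _ (hx l hl)
    refine ⟨fun i => Finset.prod_ne_zero_iff.2 fun l _ => hne i l, fun w => ?_⟩
    have e1 : ∀ k, (∏ l, x l ^ a k l) ^ (∑ j, N k j * w j) = ∏ l, (x l ^ (a k l * ∑ j, N k j * w j)) := by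
      intro k
      rw [← Finset.prod_zpow]
      simp only [zpow_mul]
    simp only [e1]
    rw [Finset.prod_comm]
    apply Finset.prod_eq_one
    intro l _
    by_cases hl : l ∈ s
    · simp [ha _ l hl]
    · have e2 : ∏ k, x l ^ (a k l * ∑ j, N k j * w j) = x l ^ (∑ k, a k l * ∑ j, N k j * w j) := by
        have hl0 := hx l hl
        induction (Finset.univ : Finset (Fin r)) using Finset.induction_on with
        | empty => simp
        | insert i t hi ih => rw [Finset.prod_insert hi, Finset.sum_insert hi, zpow_add₀ hl0, ih]
      have e3 : ∑ k, a k l * ∑ j, N k j * w j = 0 := by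
        have h3 := hm2 l
        have h4 : ∑ k, (∑ j, N l j * m k j) * (∑ j, N k j * w j) = ∑ j, N l j * w j := by
          have key : ∀ A : Fin r → ℤ, ∑ i, A i • N i = N l →
              ∑ k, A k * (∑ j, N k j * w j) = ∑ j, N l j * w j := by
            intro A h3
            have h5 : ∀ j, N l j = ∑ k, A k * N k j := fun j => by
              rw [← congrFun h3 j]; simp
            simp only [h5, Finset.sum_mul, Finset.mul_sum]
            rw [Finset.sum_comm]
            refine Finset.sum_congr rfl fun j _ => Finset.sum_congr rfl fun k _ => ?_
            ring
          exact key _ h3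
        simp only [a, sub_mul, Finset.sum_sub_distrib, h4]
        simp
      rw [e2, e3, zpow_zero]
  · intro μ hμ x
    funext i
    simp only [Pi.mul_apply, mul_zpow, Finset.prod_mul_distrib]
    congr 1
    have h5 := hμ.2 (m i)
    simp only [a, zpow_sub₀ (hμ.1 _), Finset.prod_div_distrib, h5, div_one]
    rw [Finset.prod_eq_single i]
    · simp
    · intro l _ hl; simp [Ne.symm hl]
    · simp

section Quot

variable {n r : ℕ} {N : Fin r → Fin n → ℤ} {K : Set (Finset (Fin r))}

lemma mul_mem_UK {μ x : Fin r → ℂ} (hμ : ∀ k, μ k ≠ 0) (hx : x ∈ UK K) : μ * x ∈ UK K := by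
  rw [mem_UK] at hx ⊢
  intro σ hσ
  obtain ⟨i, hi, h⟩ := hx σ hσ
  exact ⟨i, hi, mul_ne_zero (hμ i) h⟩

lemma toricRel_equiv : Equivalence (toricRel N K) where
  refl x := ⟨1, G_one N, by simp⟩
  symm := by
    rintro x y ⟨μ, hμ, h⟩
    refine ⟨μ⁻¹, G_inv hμ, ?_⟩
    rw [← h]
    funext i
    simp [hμ.1 i]
  trans := by
    rintro x y z ⟨μ, hμ, h⟩ ⟨ν, hν, h'⟩
    refine ⟨ν * μ, G_mul hν hμ, ?_⟩
    rw [← h', ← h]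
    funext i
    simp [mul_assoc]

lemma qmap_eq_iff {x y : ↥(UK K)} :
    qmap N K x = qmap N K y ↔ ∃ μ ∈ GSet N, μ * (x : Fin r → ℂ) = y :=
  toricRel_equiv.quot_mk_eq_iff x y

lemma G_free (hT : HasTau N K) {μ ν x : Fin r → ℂ} (hμ : μ ∈ GSet N) (hν : ν ∈ GSet N)
    (hx : x ∈ UK K) (h : μ * x = ν * x) : μ = ν := by
  obtain ⟨τ, -, h1, h2⟩ := hT _ (Zs_mem hx)
  have h3 := h2 μ hμ x
  rw [h, h2 ν hν x] at h3
  funext i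
  exact (mul_right_cancel₀ ((h1 x (mem_Us_Zs x)).1 i) (congrFun h3 i)).symm

lemma exists_mu (hT : HasTau N K) {B : Type*} [TopologicalSpace B] (S : Set B)
    (x y : B → Fin r → ℂ) (hx : ContinuousOn x S) (hy : ContinuousOn y S)
    (hxU : ∀ b ∈ S, x b ∈ UK K) (hxy : ∀ b ∈ S, ∃ μ ∈ GSet N, μ * x b = y b) :
    ∃ μ : B → Fin r → ℂ, ContinuousOn μ S ∧ ∀ b ∈ S, μ b ∈ GSet N ∧ μ b * x b = y b := by
  have : ∀ b, ∃ μ : Fin r → ℂ, b ∈ S → μ ∈ GSet N ∧ μ * x b = y b := by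
    intro b
    by_cases hb : b ∈ S
    · obtain ⟨μ, h⟩ := hxy b hb
      exact ⟨μ, fun _ => h⟩
    · exact ⟨1, fun h => absurd h hb⟩
  choose μ hμ using this
  refine ⟨μ, ?_, hμ⟩
  intro b hb
  obtain ⟨τ, h0, h1, h2⟩ := hT _ (Zs_mem (hxU b hb))
  have hxs : x b ∈ Us (Zs (x b)) := mem_Us_Zs _
  have hys : y b ∈ Us (Zs (x b)) := by
    rw [← (hμ b hb).2]; exact (mul_mem_Us (hμ b hb).1.1).2 hxs
  have cx : ContinuousWithinAt (fun b => τ (x b)) S b :=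
    (h0.continuousAt ((isOpen_Us _).mem_nhds hxs)).comp_continuousWithinAt (hx b hb)
  have cy : ContinuousWithinAt (fun b => τ (y b)) S b :=
    (h0.continuousAt ((isOpen_Us _).mem_nhds hys)).comp_continuousWithinAt (hy b hb)
  have cc : ContinuousWithinAt (fun b i => τ (y b) i / τ (x b) i) S b :=
    continuousWithinAt_pi.2 fun i => ((continuousWithinAt_pi.1 cy) i).div ((continuousWithinAt_pi.1 cx) i)
      ((h1 _ hxs).1 i)
  have hev : ∀ᶠ b' in nhdsWithin b S, x b' ∈ Us (Zs (x b)) :=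
    (hx b hb).eventually ((isOpen_Us _).mem_nhds hxs)
  have key : ∀ b', b' ∈ S → x b' ∈ Us (Zs (x b)) → μ b' = fun i => τ (y b') i / τ (x b') i := by
    intro b' hb' hx'
    funext i
    rw [eq_div_iff ((h1 _ hx').1 i), ← (hμ b' hb').2, h2 _ (hμ b' hb').1]
    rfl
  refine cc.congr_of_eventuallyEq ?_ (key b hb hxs)
  filter_upwards [hev, self_mem_nhdsWithin] with b' h h' using key b' h' h

lemma qmap_isOpenMap : IsOpenMap (qmap N K) := by
  intro V hV
  have hq : Topology.IsQuotientMap (qmap N K) := isQuotientMap_quot_mk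
  rw [← hq.isOpen_preimage]
  have : qmap N K ⁻¹' (qmap N K '' V) = ⋃ μ : GSet N,
      (fun x : ↥(UK K) => (⟨μ.1 * x.1, mul_mem_UK μ.2.1 x.2⟩ : ↥(UK K))) ⁻¹' V := by
    ext y
    simp only [Set.mem_preimage, Set.mem_image, Set.mem_iUnion]
    constructor
    · rintro ⟨x, hx, hxy⟩
      obtain ⟨μ, hμ, h⟩ := qmap_eq_iff.1 hxy.symm
      refine ⟨⟨μ, hμ⟩, ?_⟩
      have : (⟨μ * y.1, mul_mem_UK hμ.1 y.2⟩ : ↥(UK K)) = x := Subtype.ext h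
      rw [this]; exact hx
    · rintro ⟨μ, h⟩
      exact ⟨_, h, (qmap_eq_iff.2 ⟨μ.1, μ.2, rfl⟩).symm⟩
  rw [this]
  refine isOpen_iUnion fun μ => hV.preimage ?_
  exact Continuous.subtype_mk (continuous_const.mul continuous_subtype_val) _

lemma exists_section (hT : HasTau N K) (x₀ : XS N K) : ∃ O : Set (XS N K), IsOpen O ∧ x₀ ∈ O ∧
    ∃ σ : XS N K → Fin r → ℂ, ContinuousOn σ O ∧ ∀ x ∈ O, ∃ h : σ x ∈ UK K, qmap N K ⟨σ x, h⟩ = x := by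
  obtain ⟨u, rfl⟩ : ∃ u, qmap N K u = x₀ := Quot.exists_rep x₀
  obtain ⟨τ, h0, h1, h2⟩ := hT _ (Zs_mem u.2)
  let V : Set ↥(UK K) := {v | (v : Fin r → ℂ) ∈ Us (Zs u.1)}
  have hV : IsOpen V := (isOpen_Us _).preimage continuous_subtype_val
  let f : ↥(UK K) → Fin r → ℂ := fun v => (τ v.1)⁻¹ * v.1
  have hf : ∀ v w, toricRel N K v w → f v = f w := by
    rintro v w ⟨μ, hμ, h⟩
    have hw : w.1 = μ * v.1 := h.symm
    simp only [f, hw, h2 μ hμ]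
    funext i
    simp only [Pi.mul_apply, Pi.inv_apply, mul_inv]
    have := hμ.1 i
    field_simp
  have hfU : ∀ v ∈ V, f v ∈ UK K := fun v hv => mul_mem_UK (G_inv (h1 _ hv)).1 v.2
  refine ⟨qmap N K '' V, qmap_isOpenMap _ hV, ⟨u, mem_Us_Zs _, rfl⟩, Quot.lift f hf, ?_, ?_⟩
  · rintro _ ⟨v, hv, rfl⟩
    apply ContinuousAt.continuousWithinAt
    have hoq : IsOpenQuotientMap (qmap N K) :=
      ⟨Quot.exists_rep, continuous_quot_mk, qmap_isOpenMap⟩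
    refine hoq.continuousAt_comp_iff.1 ?_
    have : ContinuousOn f V := by
      have hh : ContinuousOn (fun v : ↥(UK K) => τ v.1) V :=
        h0.comp continuous_subtype_val.continuousOn fun v hv => hv
      refine ContinuousOn.mul ?_ continuous_subtype_val.continuousOn
      refine continuousOn_pi.2 fun i => ((continuousOn_pi.1 hh) i).inv₀ fun v hv => (h1 _ hv).1 i
    exact this.continuousAt (hV.mem_nhds hv)
  · rintro _ ⟨v, hv, rfl⟩
    refine ⟨hfU v hv, ?_⟩
    exact (qmap_eq_iff.2 ⟨(τ v.1)⁻¹, G_inv (h1 _ hv), rfl⟩).symm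

/-- liftability over a subset -/
def LiftQ {ι : Type} (h : C(ι → ℝ, XS N K)) (S : Set (ι → ℝ)) : Prop :=
  ∃ g : (ι → ℝ) → Fin r → ℂ, ContinuousOn g S ∧ ∀ y ∈ S, ∃ hy : g y ∈ UK K, qmap N K ⟨g y, hy⟩ = h y

lemma LiftQ.glue (hT : HasTau N K) {ι : Type} (h : C(ι → ℝ, XS N K)) (lo hi : ι → ℝ)
    (i : ι) (t : ℝ) (h1 : lo i ≤ t) (h2 : t ≤ hi i)
    (H1 : LiftQ h (Set.Icc lo (Function.update hi i t)))
    (H2 : LiftQ h (Set.Icc (Function.update lo i t) hi)) : LiftQ h (Set.Icc lo hi) := by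
  obtain ⟨g1, c1, e1⟩ := H1
  obtain ⟨g2, c2, e2⟩ := H2
  set S1 := Set.Icc lo (Function.update hi i t) with hS1
  set S2 := Set.Icc (Function.update lo i t) hi with hS2
  have hm1 : ∀ y, y ∈ S1 ↔ y ∈ Set.Icc lo hi ∧ y i ≤ t := by
    intro y
    rw [hS1, Set.mem_Icc, Set.mem_Icc, le_update_iff]
    constructor
    · rintro ⟨a, b, c⟩
      refine ⟨⟨a, fun j => ?_⟩, b⟩
      by_cases hj : j = i
      · subst hj; exact b.trans h2
      · exact c j hj
    · rintro ⟨⟨a, b⟩, c⟩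
      exact ⟨a, c, fun j _ => b j⟩
  have hm2 : ∀ y, y ∈ S2 ↔ y ∈ Set.Icc lo hi ∧ t ≤ y i := by
    intro y
    rw [hS2, Set.mem_Icc, Set.mem_Icc, update_le_iff]
    constructor
    · rintro ⟨⟨b, c⟩, a⟩
      refine ⟨⟨fun j => ?_, a⟩, b⟩
      by_cases hj : j = i
      · subst hj; exact h1.trans b
      · exact c j hj
    · rintro ⟨⟨a, b⟩, c⟩
      exact ⟨⟨c, fun j _ => a j⟩, b⟩
  let pr : (ι → ℝ) → (ι → ℝ) := fun y => Function.update y i t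
  have hpr : Continuous pr := continuous_id.update i continuous_const
  have hprI : ∀ y ∈ Set.Icc lo hi, pr y ∈ Set.Icc lo hi := by
    rintro y ⟨a, b⟩
    exact ⟨le_update_iff.2 ⟨h1, fun j _ => a j⟩, update_le_iff.2 ⟨h2, fun j _ => b j⟩⟩
  have hp1 : ∀ y ∈ Set.Icc lo hi, pr y ∈ S1 := fun y hy => (hm1 _).2 ⟨hprI y hy, by simp [pr]⟩
  have hp2 : ∀ y ∈ Set.Icc lo hi, pr y ∈ S2 := fun y hy => (hm2 _).2 ⟨hprI y hy, by simp [pr]⟩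
  obtain ⟨μ, cμ, hμ⟩ := exists_mu hT (Set.Icc lo hi) (fun y => g2 (pr y)) (fun y => g1 (pr y))
    (c2.comp hpr.continuousOn hp2) (c1.comp hpr.continuousOn hp1) (fun y hy => (e2 _ (hp2 y hy)).1)
    (fun y hy => by
      obtain ⟨a, ha⟩ := e2 _ (hp2 y hy)
      obtain ⟨b, hb⟩ := e1 _ (hp1 y hy)
      exact qmap_eq_iff.1 (ha.trans hb.symm))
  have hprs : ∀ y, y i = t → pr y = y := fun y hy => by simp [pr, ← hy]
  let g : (ι → ℝ) → Fin r → ℂ := fun y => if y i ≤ t then g1 y else μ y * g2 y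
  have hg1 : ∀ y ∈ S1, g y = g1 y := fun y hy => if_pos ((hm1 y).1 hy).2
  have hg2 : ∀ y ∈ S2, g y = μ y * g2 y := by
    intro y hy
    rw [hm2] at hy
    by_cases hyt : y i ≤ t
    · have hyt' := le_antisymm hyt hy.2
      have := (hμ y hy.1).2
      simp only [hprs y hyt'] at this
      rw [this]; exact if_pos hyt
    · exact if_neg hyt
  have hun : Set.Icc lo hi = S1 ∪ S2 := by
    ext y
    rw [Set.mem_union, hm1, hm2, ← and_or_left]
    simp [le_total]
  have hs2 : S2 ⊆ Set.Icc lo hi := fun y hy => ((hm2 y).1 hy).1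
  refine ⟨g, ?_, ?_⟩
  · rw [hun]
    refine ContinuousOn.union_of_isClosed (c1.congr hg1) (((cμ.mono hs2).mul c2).congr hg2)
      isClosed_Icc isClosed_Icc
  · intro y hy
    rw [hun] at hy
    rcases hy with hy | hy
    · rw [hg1 y hy]; exact e1 y hy
    · rw [hg2 y hy]
      obtain ⟨a, b⟩ := e2 y hy
      have hG := (hμ y (hs2 hy)).1
      exact ⟨mul_mem_UK hG.1 a, by
        rw [← b]; exact (qmap_eq_iff.2 ⟨μ y, hG, rfl⟩).symm⟩

lemma liftQ_cube (hT : HasTau N K) {ι : Type} [Fintype ι] (h : C(ι → ℝ, XS N K)) :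
    LiftQ h (Set.Icc 0 1) := by
  choose O hO hxO σ hσ hσq using exists_section (N := N) hT
  obtain ⟨δ, hδ, hleb⟩ := lebesgue_number_lemma_of_metric (isCompact_Icc (a := (0 : ι → ℝ)) (b := 1))
    (c := fun x => h ⁻¹' (O x)) (fun x => (hO x).preimage h.continuous)
    (fun y _ => Set.mem_iUnion.2 ⟨h y, hxO _⟩)
  have main : ∀ s : Finset ι, ∀ lo hi : ι → ℝ, 0 ≤ lo → hi ≤ 1 → lo ≤ hi →
      (∀ i, i ∉ s → hi i - lo i ≤ δ / 2) → LiftQ h (Set.Icc lo hi) := by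
    intro s
    induction s using Finset.induction_on with
    | empty =>
      intro lo hi h0 h1 hle hw
      obtain ⟨x, hx⟩ := hleb lo ⟨h0, hle.trans h1⟩
      have hsub : Set.Icc lo hi ⊆ h ⁻¹' (O x) := by
        intro y hy
        apply hx
        rw [Metric.mem_ball]
        refine lt_of_le_of_lt ((dist_pi_le_iff (by positivity : (0 : ℝ) ≤ δ / 2)).2 fun i => ?_)
          (half_lt_self hδ)
        have := hw i (by simp)
        have a := hy.1 i
        have b := hy.2 i
        rw [Real.dist_eq, abs_of_nonneg (by linarith)]
        linarith
      exact ⟨fun y => σ x (h y), (hσ x).comp h.continuous.continuousOn hsub,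
        fun y hy => hσq x _ (hsub hy)⟩
    | insert i s hi ih =>
      have key : ∀ k : ℕ, ∀ lo hi : ι → ℝ, 0 ≤ lo → hi ≤ 1 → lo ≤ hi →
        (∀ j, j ∉ insert i s → hi j - lo j ≤ δ / 2) → hi i - lo i ≤ (k + 1) * (δ / 2) →
          LiftQ h (Set.Icc lo hi) := by
        intro k
        induction k with
        | zero =>
          intro lo hi' h0 h1 hle hw hwi
          refine ih lo hi' h0 h1 hle fun j hj => ?_
          by_cases hji : j = i
          · subst hji; simpa using hwi
          · exact hw j (by simp [hji, hj])
        | succ k ihk =>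
          intro lo hi' h0 h1 hle hw hwi
          by_cases hc : hi' i - lo i ≤ δ / 2
          · refine ih lo hi' h0 h1 hle fun j hj => ?_
            by_cases hji : j = i
            · subst hji; exact hc
            · exact hw j (by simp [hji, hj])
          · push Not at hc
            have t1 : lo i ≤ lo i + δ / 2 := by linarith
            have t2 : lo i + δ / 2 ≤ hi' i := by linarith
            refine LiftQ.glue hT h lo hi' i (lo i + δ / 2) t1 t2 ?_ ?_
            · refine ih _ _ h0 ?_ ?_ ?_
              · exact (update_le_iff.2 ⟨t2, fun j _ => le_rfl⟩).trans h1
              · exact le_update_iff.2 ⟨t1, fun j _ => hle j⟩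
              · intro j hj
                by_cases hji : j = i
                · subst hji; simp
                · rw [Function.update_of_ne hji]; exact hw j (by simp [hji, hj])
            · refine ihk _ _ ?_ h1 ?_ ?_ ?_
              · exact h0.trans (le_update_iff.2 ⟨t1, fun j _ => le_rfl⟩)
              · exact update_le_iff.2 ⟨t2, fun j _ => hle j⟩
              · intro j hj
                have hji : j ≠ i := fun e => hj (by simp [e])
                rw [Function.update_of_ne hji]; exact hw j hj
              · rw [Function.update_self]
                push_cast at hwi
                linarith
      intro lo hi' h0 h1 hle hw
      obtain ⟨k, hk⟩ := exists_nat_ge ((hi' i - lo i) / (δ / 2))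
      refine key k lo hi' h0 h1 hle hw ?_
      rw [div_le_iff₀ (by positivity)] at hk
      linarith
  exact main Finset.univ 0 1 le_rfl le_rfl zero_le_one (by simp)

lemma exists_lift_cube (hT : HasTau N K) (m : ℕ) (h : C((Fin m → unitInterval) × unitInterval, XS N K)) :
    ∃ L : C((Fin m → unitInterval) × unitInterval, Fin r → ℂ), ∀ z, ∃ hz : L z ∈ UK K,
      qmap N K ⟨L z, hz⟩ = h z := by
  let a : C(Option (Fin m) → ℝ, (Fin m → unitInterval) × unitInterval) :=
    ⟨fun z => (fun i => Set.projIcc 0 1 zero_le_one (z (some i)),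
      Set.projIcc 0 1 zero_le_one (z none)), by fun_prop⟩
  let b : C((Fin m → unitInterval) × unitInterval, Option (Fin m) → ℝ) :=
    ⟨fun z o => Option.elim o (z.2 : ℝ) fun i => (z.1 i : ℝ), by
      refine continuous_pi fun o => ?_
      cases o with
      | none => simp only [Option.elim]; fun_prop
      | some i => simp only [Option.elim]; fun_prop⟩
  have hb : ∀ z, b z ∈ Set.Icc (0 : Option (Fin m) → ℝ) 1 := by
    intro z
    constructor
    · rintro (_ | i)
      · exact z.2.2.1
      · exact (z.1 i).2.1
    · rintro (_ | i)
      · exact z.2.2.2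
      · exact (z.1 i).2.2
  have hab : ∀ z, a (b z) = z := by
    rintro ⟨y, t⟩
    simp [a, b]
  obtain ⟨g, cg, hg⟩ := liftQ_cube hT (h.comp a)
  refine ⟨⟨fun z => g (b z), cg.comp_continuous b.continuous hb⟩, fun z => ?_⟩
  obtain ⟨hy, e⟩ := hg _ (hb z)
  exact ⟨hy, e.trans (congrArg h (hab z))⟩

end Quot

/-- angle -/
def uu (t : unitInterval) : ℝ := Real.pi * ((t : ℝ) - 1 / 2)

lemma uu_cont : Continuous uu := by unfold uu; fun_prop

lemma uu_mem (t : unitInterval) (h0 : t ≠ 0) (h1 : t ≠ 1) :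
    uu t ∈ Set.Ioo (-(Real.pi / 2)) (Real.pi / 2) := by
  have a : 0 < (t : ℝ) := unitInterval.pos_iff_ne_zero.2 h0
  have b : (t : ℝ) < 1 := unitInterval.lt_one_iff_ne_one.2 h1
  have := Real.pi_pos
  unfold uu
  constructor <;> nlinarith

lemma cos_uu (t : unitInterval) : Real.cos (uu t) = 0 ↔ t = 0 ∨ t = 1 := by
  constructor
  · intro h
    by_contra hc
    push Not at hc
    exact (Real.cos_pos_of_mem_Ioo (uu_mem t hc.1 hc.2)).ne' h
  · rintro (rfl | rfl)
    · rw [show uu 0 = -(Real.pi / 2) by simp [uu]; ring]; simp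
    · rw [show uu 1 = Real.pi / 2 by simp [uu]; ring]; simp

/-- The parametrization of the circle by the interval. -/
def thF (t : unitInterval) : OnePoint ℝ :=
  if Real.cos (uu t) = 0 then OnePoint.infty else ((Real.tan (uu t) : ℝ) : OnePoint ℝ)

lemma thF_cont : Continuous thF := by
  rw [continuous_iff_continuousAt]
  intro t
  have hc : Continuous fun t => Real.cos (uu t) := Real.continuous_cos.comp uu_cont
  have hs : Continuous fun t => Real.sin (uu t) := Real.continuous_sin.comp uu_cont
  by_cases h : Real.cos (uu t) = 0
  · have hst : Real.sin (uu t) ≠ 0 := by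
      intro h'
      have := Real.sin_sq_add_cos_sq (uu t)
      rw [h, h'] at this; simp at this
    have e : thF t = OnePoint.infty := if_pos h
    unfold ContinuousAt
    rw [e]
    unfold thF
    refine Filter.Tendsto.if tendsto_const_nhds ?_
    have hcc : Filter.Tendsto (fun t => Real.cos (uu t) / Real.sin (uu t)) (nhds t) (nhds 0) := by
      have := (hc.continuousAt (x := t)).div (hs.continuousAt (x := t)) hst
      unfold ContinuousAt at this
      simp only [Pi.div_apply, h, zero_div] at this
      exact this
    have h1 : Filter.Tendsto (fun t => Real.cos (uu t) / Real.sin (uu t))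
        (nhds t ⊓ Filter.principal {x | ¬Real.cos (uu x) = 0}) (nhdsWithin 0 {0}ᶜ) := by
      refine tendsto_nhdsWithin_iff.2 ⟨hcc.mono_left inf_le_left, ?_⟩
      have ev : ∀ᶠ x in nhds t, Real.sin (uu x) ≠ 0 := hs.continuousAt.eventually_ne hst
      filter_upwards [ev.filter_mono inf_le_left, Filter.mem_inf_of_right (Filter.mem_principal_self _)] with x hx hx'
      exact div_ne_zero hx' hx
    have h2 := Filter.tendsto_inv₀_nhdsNE_zero.comp h1
    rw [Metric.cobounded_eq_cocompact, ← Filter.coclosedCompact_eq_cocompact] at h2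
    refine (OnePoint.tendsto_coe_infty.comp h2).congr fun x => ?_
    simp [Real.tan_eq_sin_div_cos]
  · have ev : ∀ᶠ x in nhds t, Real.cos (uu x) ≠ 0 := hc.continuousAt.eventually_ne h
    have : ContinuousAt (fun t => ((Real.tan (uu t) : ℝ) : OnePoint ℝ)) t :=
      OnePoint.continuous_coe.continuousAt.comp ((Real.continuousAt_tan.2 h).comp uu_cont.continuousAt)
    refine this.congr ?_
    filter_upwards [ev] with x hx
    exact (if_neg hx).symm

/-- continuous version -/
def th : C(unitInterval, OnePoint ℝ) := ⟨thF, thF_cont⟩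

lemma th_zero : th 0 = OnePoint.infty := if_pos ((cos_uu 0).2 (Or.inl rfl))
lemma th_one : th 1 = OnePoint.infty := if_pos ((cos_uu 1).2 (Or.inr rfl))

lemma th_surj : Function.Surjective th := by
  intro x
  induction x using OnePoint.rec with
  | infty => exact ⟨0, th_zero⟩
  | coe x =>
    have hp := Real.pi_pos
    have a := Real.neg_pi_div_two_lt_arctan x
    have b := Real.arctan_lt_pi_div_two x
    let t : unitInterval := ⟨Real.arctan x / Real.pi + 1 / 2, by
      constructor
      · rw [← sub_le_iff_le_add, le_div_iff₀ hp]; linarith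
      · rw [← le_sub_iff_add_le, div_le_iff₀ hp]; linarith⟩
    have hu : uu t = Real.arctan x := by
      simp only [uu, t]; field_simp; ring
    refine ⟨t, ?_⟩
    show thF t = _
    unfold thF
    rw [hu, if_neg (Real.cos_arctan_pos x).ne', Real.tan_arctan]

lemma th_inj (s t : unitInterval) (h : th s = th t) :
    s = t ∨ ((s = 0 ∨ s = 1) ∧ (t = 0 ∨ t = 1)) := by
  by_cases hs : Real.cos (uu s) = 0
  · by_cases ht : Real.cos (uu t) = 0
    · exact Or.inr ⟨(cos_uu s).1 hs, (cos_uu t).1 ht⟩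
    · exfalso
      have h' : thF s = thF t := h
      simp [thF, hs, ht] at h'
  · by_cases ht : Real.cos (uu t) = 0
    · exfalso
      have h' : thF s = thF t := h
      simp [thF, hs, ht] at h'
    · left
      have h' : thF s = thF t := h
      simp only [thF, hs, ht, if_false, OnePoint.coe_eq_coe] at h'
      rw [cos_uu] at hs ht
      push Not at hs ht
      have a := uu_mem s hs.1 hs.2
      have b := uu_mem t ht.1 ht.2
      have e := congrArg Real.arctan h'
      rw [Real.arctan_tan a.1 a.2, Real.arctan_tan b.1 b.2] at e
      unfold uu at e
      have := mul_left_cancel₀ Real.pi_pos.ne' e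
      exact Subtype.ext (by linarith)

lemma descend {m : ℕ} {Y : Type*} [TopologicalSpace Y] (y₀ : Y)
    (G : C((Fin m → unitInterval) × unitInterval, Y)) (h0 : ∀ y, G (y, 0) = y₀) (h1 : ∀ y, G (y, 1) = y₀) :
    ∃ P : C(Fin m → unitInterval, Loop Y y₀), ∀ y t, (P y).1 (th t) = G (y, t) := by
  choose s hs using th_surj
  have hG : ∀ y t, G (y, s (th t)) = G (y, t) := by
    intro y t
    rcases th_inj _ _ (hs (th t)) with h | ⟨h, h'⟩
    · rw [h]
    · rcases h with h | h <;> rcases h' with h' | h' <;> rw [h, h'] <;> simp [h0, h1]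
  let Q : (Fin m → unitInterval) × unitInterval → (Fin m → unitInterval) × OnePoint ℝ :=
    Prod.map id th
  have hQc : Continuous Q := continuous_id.prodMap th.continuous
  have hQ : Topology.IsQuotientMap Q :=
    (hQc.isClosedMap).isQuotientMap hQc (Function.surjective_id.prodMap th_surj)
  let H : (Fin m → unitInterval) × OnePoint ℝ → Y := fun z => G (z.1, s z.2)
  have hH : Continuous H := by
    rw [hQ.continuous_iff]
    refine G.continuous.congr fun z => ?_
    exact (hG z.1 z.2).symm
  let HC : C((Fin m → unitInterval) × OnePoint ℝ, Y) := ⟨H, hH⟩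
  refine ⟨⟨fun y => ⟨HC.curry y, ?_⟩, ?_⟩, ?_⟩
  · show G (y, s OnePoint.infty) = y₀
    rw [← th_zero, hG, h0]
  · exact Continuous.subtype_mk HC.curry.continuous _
  · intro y t
    exact hG y t

lemma isClosed_bdry (k : ℕ) : IsClosed (Cube.boundary (Fin k)) := by
  have : Cube.boundary (Fin k) = ⋃ i : Fin k, {y : Fin k → unitInterval | y i = 0 ∨ y i = 1} := by
    ext y; simp [Cube.boundary]
  rw [this]
  exact isClosed_iUnion_of_finite fun i =>
    (isClosed_eq (continuous_apply i) continuous_const).union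
      (isClosed_eq (continuous_apply i) continuous_const)

lemma bdry_preconnected (m : ℕ) (hm : 2 ≤ m) : IsPreconnected (Cube.boundary (Fin m)) := by
  have face : ∀ (i : Fin m) (c : unitInterval),
      IsPreconnected {y : Fin m → unitInterval | y i = c} := by
    intro i c
    have : {y : Fin m → unitInterval | y i = c} =
        (fun y : Fin m → unitInterval => Function.update y i c) '' Set.univ := by
      ext y
      constructor
      · intro h
        refine ⟨y, trivial, ?_⟩
        have h' : y i = c := h
        simp [← h']
      · rintro ⟨z, -, rfl⟩
        simp
    rw [this]
    exact isPreconnected_univ.image _ (continuous_id.update i continuous_const).continuousOn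
  refine isPreconnected_of_forall (0 : Fin m → unitInterval) fun y hy => ?_
  obtain ⟨i, hi⟩ := hy
  obtain ⟨j, hj⟩ : ∃ j : Fin m, j ≠ i := by
    have : Nontrivial (Fin m) := Fin.nontrivial_iff_two_le.2 hm
    exact exists_ne i
  refine ⟨{z | z i = y i} ∪ {z | z j = 0}, ?_, Or.inr rfl, Or.inl rfl, ?_⟩
  · rintro z (hz | hz)
    · refine ⟨i, ?_⟩
      have hz' : z i = y i := hz
      rw [hz']; exact hi
    · exact ⟨j, Or.inl hz⟩
  · refine IsPreconnected.union (Function.update y j 0) ?_ ?_ (face _ _) (face _ _)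
    · show Function.update y j 0 i = y i
      rw [Function.update_of_ne hj.symm]
    · show Function.update y j 0 j = 0
      simp

lemma exists_log_htpy {A : Type*} [TopologicalSpace A] {r : ℕ} (H : C(unitInterval × A, Fin r → ℂ))
    (hne : ∀ z k, H z k ≠ 0) (f : C(A, Fin r → ℂ)) (h0 : ∀ a k, H (0, a) k = Complex.exp (f a k)) :
    ∃ ℓ : C(unitInterval × A, Fin r → ℂ), (∀ z k, Complex.exp (ℓ z k) = H z k) ∧ ∀ a, ℓ (0, a) = f a := by
  have key : ∀ k, ∃ ℓ : C(unitInterval × A, ℂ), (∀ z, Complex.exp (ℓ z) = H z k) ∧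
      ∀ a, ℓ (0, a) = f a k := by
    intro k
    let Hk : C(unitInterval × A, {z : ℂ // z ≠ 0}) :=
      ⟨fun z => ⟨H z k, hne z k⟩, by
        exact Continuous.subtype_mk ((continuous_apply k).comp H.continuous) _⟩
    let fk : C(A, ℂ) := ⟨fun a => f a k, (continuous_apply k).comp f.continuous⟩
    have H0 : ∀ a, Hk (0, a) = (fun z : ℂ ↦ (⟨_, z.exp_ne_zero⟩ : {z : ℂ // z ≠ 0})) (fk a) :=
      fun a => Subtype.ext (h0 a k)
    refine ⟨Complex.isCoveringMap_exp.liftHomotopy Hk fk H0, fun z => ?_, fun a => ?_⟩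
    · exact congrArg Subtype.val (congrFun (Complex.isCoveringMap_exp.liftHomotopy_lifts Hk fk H0) z)
    · exact Complex.isCoveringMap_exp.liftHomotopy_zero Hk fk H0 a
  choose ℓ h1 h2 using key
  refine ⟨⟨fun z k => ℓ k z, continuous_pi fun k => (ℓ k).continuous⟩, fun z k => h1 k z, fun a => ?_⟩
  funext k
  exact h2 k a

lemma exists_log_cube {m r : ℕ} (μ : C(Fin m → unitInterval, Fin r → ℂ)) (hne : ∀ z k, μ z k ≠ 0) :
    ∃ ℓ : C(Fin m → unitInterval, Fin r → ℂ), ∀ z k, Complex.exp (ℓ z k) = μ z k := by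
  let H : C(unitInterval × (Fin m → unitInterval), Fin r → ℂ) :=
    ⟨fun z => μ (fun i => z.1 * z.2 i), by fun_prop⟩
  obtain ⟨ℓ, h1, -⟩ := exists_log_htpy H (fun z k => hne _ k)
    (ContinuousMap.const _ fun k => Complex.log (μ 0 k)) (fun a k => by
      rw [ContinuousMap.const_apply, Complex.exp_log (hne _ _)]
      show μ (fun i => 0 * a i) k = _
      rw [show (fun i => 0 * a i) = (0 : Fin m → unitInterval) from by funext i; simp])
  refine ⟨⟨fun z => ℓ (1, z), by fun_prop⟩, fun z k => ?_⟩
  have := h1 (1, z) k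
  refine this.trans ?_
  show μ (fun i => 1 * z i) k = _
  simp

lemma exp_one_const {A : Type*} [TopologicalSpace A] {S : Set A} (hS : IsPreconnected S) (c : A → ℂ)
    (hc : ContinuousOn c S) (h : ∀ a ∈ S, Complex.exp (c a) = 1) {a b : A} (ha : a ∈ S) (hb : b ∈ S) :
    c a = c b := by
  have hd : IsDiscrete (Set.range ((↑) : ℤ → ℝ)) := by
    have := Int.isClosedEmbedding_coe_real.isEmbedding.toHomeomorph.symm.isEmbedding.discreteTopology
    exact ⟨this⟩
  have hz : ∀ a ∈ S, ∃ n : ℤ, c a = n * (2 * Real.pi * Complex.I) := fun a ha =>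
    Complex.exp_eq_one_iff.1 (h a ha)
  have hpi := Complex.two_pi_I_ne_zero
  have e : ∀ (n : ℤ), ((n * (2 * Real.pi * Complex.I)) / (2 * Real.pi * Complex.I) : ℂ).re = n := by
    intro n
    rw [mul_div_cancel_right₀ _ hpi]; simp
  have := hS.constant_of_mapsTo hd (f := fun a => (c a / (2 * Real.pi * Complex.I)).re)
    (Complex.continuous_re.comp_continuousOn (hc.div_const _))
    (fun a ha => by
      obtain ⟨n, hn⟩ := hz a ha
      exact ⟨n, by show _ = (c a / _).re; rw [hn, e]⟩) ha hb
  obtain ⟨n, hn⟩ := hz a ha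
  obtain ⟨n', hn'⟩ := hz b hb
  simp only [hn, hn', e] at this
  rw [hn, hn']
  have : n = n' := by exact_mod_cast this
  rw [this]

/-- boundary of the `(m+1)`-cube -/
def BdS (m : ℕ) : Set ((Fin m → unitInterval) × unitInterval) :=
  {z | z.1 ∈ Cube.boundary (Fin m) ∨ z.2 = 0 ∨ z.2 = 1}

lemma BdS_eq (m : ℕ) : BdS m = {z | z.1 ∈ Cube.boundary (Fin m)} ∪
    ({z : (Fin m → unitInterval) × unitInterval | z.2 = 0} ∪ {z | z.2 = 1}) := by
  ext z; rfl

lemma isClosed_BdS1 (m : ℕ) :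
    IsClosed {z : (Fin m → unitInterval) × unitInterval | z.1 ∈ Cube.boundary (Fin m)} :=
  (isClosed_bdry m).preimage continuous_fst

lemma isClosed_BdS2 (m : ℕ) (c : unitInterval) :
    IsClosed {z : (Fin m → unitInterval) × unitInterval | z.2 = c} :=
  isClosed_eq continuous_snd continuous_const

lemma isClosed_BdS (m : ℕ) : IsClosed (BdS m) := by
  rw [BdS_eq]
  exact (isClosed_BdS1 m).union ((isClosed_BdS2 m 0).union (isClosed_BdS2 m 1))

lemma zero_bdry {m : ℕ} (hm : 1 ≤ m) : (0 : Fin m → unitInterval) ∈ Cube.boundary (Fin m) :=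
  ⟨⟨0, hm⟩, Or.inl rfl⟩

lemma BdS_preconnected (m : ℕ) (hm : 1 ≤ m) : IsPreconnected (BdS m) := by
  have hor : ∀ c : unitInterval, IsPreconnected ((fun y : Fin m → unitInterval => (y, c)) '' Set.univ) :=
    fun c => isPreconnected_univ.image _ (by fun_prop)
  have hve : ∀ y : Fin m → unitInterval, IsPreconnected ((fun t : unitInterval => (y, t)) '' Set.univ) :=
    fun c => isPreconnected_univ.image _ (by fun_prop)
  refine isPreconnected_of_forall ((0 : Fin m → unitInterval), (0 : unitInterval)) fun z hz => ?_
  have hex : ∃ y ∈ Cube.boundary (Fin m), z.1 = y ∨ z.2 = 0 ∨ z.2 = 1 := by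
    rcases hz with hz | hz
    · exact ⟨z.1, hz, Or.inl rfl⟩
    · exact ⟨0, zero_bdry hm, Or.inr hz⟩
  obtain ⟨y, hy, hzy⟩ := hex
  refine ⟨((fun y : Fin m → unitInterval => (y, (0 : unitInterval))) '' Set.univ ∪
    (fun t : unitInterval => (y, t)) '' Set.univ) ∪
    (fun y : Fin m → unitInterval => (y, (1 : unitInterval))) '' Set.univ, ?_, ?_, ?_, ?_⟩
  · rintro _ ((⟨x, -, rfl⟩ | ⟨x, -, rfl⟩) | ⟨x, -, rfl⟩)
    · exact Or.inr (Or.inl rfl)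
    · exact Or.inl hy
    · exact Or.inr (Or.inr rfl)
  · exact Or.inl (Or.inl ⟨0, trivial, rfl⟩)
  · rcases hzy with h | h | h
    · exact Or.inl (Or.inr ⟨z.2, trivial, Prod.ext h.symm rfl⟩)
    · exact Or.inl (Or.inl ⟨z.1, trivial, Prod.ext rfl h.symm⟩)
    · exact Or.inr ⟨z.1, trivial, Prod.ext rfl h.symm⟩
  · refine IsPreconnected.union (y, 1) (Or.inr ⟨1, trivial, rfl⟩) ⟨y, trivial, rfl⟩ ?_ (hor 1)
    exact IsPreconnected.union (y, 0) ⟨y, trivial, rfl⟩ ⟨0, trivial, rfl⟩ (hor 0) (hve y)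

lemma prod_exp_zpow {r : ℕ} (v : Fin r → ℂ) (a : Fin r → ℤ) :
    ∏ k, Complex.exp (v k) ^ a k = Complex.exp (∑ k, v k * a k) := by
  rw [Complex.exp_sum]
  refine Finset.prod_congr rfl fun k _ => ?_
  rw [← Complex.exp_int_mul, mul_comm]

lemma extend_G {n r m : ℕ} (hm : 2 ≤ m) (N : Fin r → Fin n → ℤ)
    (μ : (Fin m → unitInterval) × unitInterval → Fin r → ℂ) (hc : ContinuousOn μ (BdS m))
    (hG : ∀ z ∈ BdS m, μ z ∈ GSet N) (h0 : ∀ y, μ (y, 0) = 1) :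
    ∃ M : C((Fin m → unitInterval) × unitInterval, Fin r → ℂ), (∀ z, M z ∈ GSet N) ∧
      ∀ z ∈ BdS m, M z = μ z := by
  -- logarithm on the sides
  let H : C(unitInterval × ↥(Cube.boundary (Fin m)), Fin r → ℂ) :=
    ⟨fun z => μ (z.2.1, z.1), hc.comp_continuous (by fun_prop) fun z => Or.inl z.2.2⟩
  obtain ⟨ℓJ, hJ1, hJ0⟩ := exists_log_htpy H (fun z k => (hG _ (Or.inl z.2.2)).1 k)
    (ContinuousMap.const _ 0) (fun a k => by
      show μ (a.1, 0) k = _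
      rw [h0]; simp)
  obtain ⟨ℓ1, h11⟩ := exists_log_cube (⟨fun y => μ (y, 1),
    hc.comp_continuous (by fun_prop) fun z => Or.inr (Or.inr rfl)⟩ :
      C(Fin m → unitInterval, Fin r → ℂ)) (fun z k => (hG _ (Or.inr (Or.inr rfl))).1 k)
  have hcb : ∀ (a b : ↥(Cube.boundary (Fin m))), ℓ1 a.1 - ℓJ (1, a) = ℓ1 b.1 - ℓJ (1, b) := by
    intro a b
    funext k
    have hpc : IsPreconnected (Set.univ : Set ↥(Cube.boundary (Fin m))) :=
      (isPreconnected_iff_preconnectedSpace.1 (bdry_preconnected m hm)).isPreconnected_univ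
    refine exp_one_const hpc (fun a => (ℓ1 a.1 - ℓJ (1, a)) k) ?_ ?_ (Set.mem_univ a) (Set.mem_univ b)
    · exact Continuous.continuousOn (by fun_prop)
    · intro a _
      simp only [Pi.sub_apply]
      rw [Complex.exp_sub, h11, hJ1]
      exact div_self ((hG (a.1, 1) (Or.inl a.2)).1 k)
  let b0 : ↥(Cube.boundary (Fin m)) := ⟨0, zero_bdry (by omega)⟩
  set c : Fin r → ℂ := ℓ1 b0.1 - ℓJ (1, b0) with hcdef
  have hcexp : ∀ k, Complex.exp (c k) = 1 := by
    intro k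
    simp only [hcdef, Pi.sub_apply]
    rw [Complex.exp_sub, h11, hJ1]
    exact div_self ((hG (b0.1, 1) (Or.inl b0.2)).1 k)
  let ℓ : (Fin m → unitInterval) × unitInterval → Fin r → ℂ := fun z =>
    if h : z.1 ∈ Cube.boundary (Fin m) then ℓJ (z.2, ⟨z.1, h⟩) else
      if z.2 = 0 then 0 else ℓ1 z.1 - c
  have eJ : ∀ z (h : z.1 ∈ Cube.boundary (Fin m)), ℓ z = ℓJ (z.2, ⟨z.1, h⟩) := fun z h => dif_pos h
  have e0 : ∀ z, z.2 = 0 → ℓ z = 0 := by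
    intro z hz
    by_cases h : z.1 ∈ Cube.boundary (Fin m)
    · rw [eJ z h, hz, hJ0]; rfl
    · simp only [ℓ, dif_neg h, if_pos hz]
  have e1 : ∀ z, z.2 = 1 → ℓ z = ℓ1 z.1 - c := by
    intro z hz
    by_cases h : z.1 ∈ Cube.boundary (Fin m)
    · rw [eJ z h, hz, hcdef, hcb b0 ⟨z.1, h⟩]; simp
    · have : z.2 ≠ 0 := by rw [hz]; exact one_ne_zero
      simp only [ℓ, dif_neg h, if_neg this]
  have hℓc : ContinuousOn ℓ (BdS m) := by
    rw [BdS_eq]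
    refine ContinuousOn.union_of_isClosed ?_ (ContinuousOn.union_of_isClosed ?_ ?_
      (isClosed_BdS2 m 0) (isClosed_BdS2 m 1)) (isClosed_BdS1 m) ((isClosed_BdS2 m 0).union (isClosed_BdS2 m 1))
    · rw [continuousOn_iff_continuous_restrict]
      have : Continuous fun z : {z : (Fin m → unitInterval) × unitInterval | z.1 ∈ Cube.boundary (Fin m)} =>
          ℓJ (z.1.2, ⟨z.1.1, z.2⟩) := by
        refine ℓJ.continuous.comp ?_
        refine Continuous.prodMk (by fun_prop) ?_
        exact Continuous.subtype_mk (by fun_prop) _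
      exact this.congr fun z => (eJ z.1 z.2).symm
    · exact (continuousOn_const (c := (0 : Fin r → ℂ))).congr fun z hz => e0 z hz
    · have : Continuous fun z : (Fin m → unitInterval) × unitInterval => ℓ1 z.1 - c := by fun_prop
      exact this.continuousOn.congr fun z hz => e1 z hz
  have hexp : ∀ z ∈ BdS m, ∀ k, Complex.exp (ℓ z k) = μ z k := by
    rintro ⟨y, t⟩ (h | h | h) k
    · rw [eJ _ h, hJ1]; rfl
    · have ht : t = 0 := h
      subst ht
      rw [e0 _ rfl, h0]; simp
    · have ht : t = 1 := h
      subst ht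
      rw [e1 _ rfl, Pi.sub_apply, Complex.exp_sub, hcexp, h11, div_one]; rfl
  -- the Lie algebra
  let φ : (Fin r → ℂ) →ₗ[ℂ] (Fin n → ℂ) :=
    LinearMap.pi fun j => ∑ k, (N k j : ℂ) • LinearMap.proj k
  have hφ : ∀ v j, φ v j = ∑ k, v k * (N k j : ℂ) := by
    intro v j
    simp [φ, mul_comm]
  have hker : ∀ z ∈ BdS m, φ (ℓ z) = 0 := by
    intro z hz
    funext j
    have hz0 : (((0 : Fin m → unitInterval), (0 : unitInterval))) ∈ BdS m := Or.inr (Or.inl rfl)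
    have := exp_one_const (BdS_preconnected m (by omega)) (fun z => φ (ℓ z) j) (by
        simp only [hφ]
        exact continuousOn_finsetSum _ fun k _ => ((continuousOn_pi.1 hℓc) k).mul continuousOn_const)
      (fun z hz => by
        simp only [hφ]
        rw [← prod_exp_zpow]
        have hh := (hG z hz).2 (Pi.single j 1)
        simp only [hexp z hz]
        simpa [Pi.single_apply] using hh) hz hz0
    rw [this, e0 _ rfl]
    simp
  obtain ⟨Kc, hKc⟩ := (LinearMap.ker φ).exists_isCompl
  let P : (Fin r → ℂ) →ₗ[ℂ] (Fin r → ℂ) := (LinearMap.ker φ).subtype ∘ₗ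
    Submodule.linearProjOfIsCompl (LinearMap.ker φ) Kc hKc
  have hPk : ∀ v, φ (P v) = 0 := fun v => (Submodule.linearProjOfIsCompl (LinearMap.ker φ) Kc hKc v).2
  have hPid : ∀ v, φ v = 0 → P v = v := by
    intro v hv
    have := Submodule.linearProjOfIsCompl_apply_left hKc (⟨v, hv⟩ : LinearMap.ker φ)
    exact congrArg Subtype.val this
  have hPc : Continuous P := P.continuous_of_finiteDimensional
  obtain ⟨E, hE⟩ := ContinuousMap.exists_restrict_eq (isClosed_BdS m)
    (⟨(BdS m).restrict ℓ, continuousOn_iff_continuous_restrict.1 hℓc⟩ : C(↥(BdS m), Fin r → ℂ))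
  have hE' : ∀ z ∈ BdS m, E z = ℓ z := fun z hz => DFunLike.congr_fun hE ⟨z, hz⟩
  refine ⟨⟨fun z k => Complex.exp (P (E z) k), by fun_prop⟩, fun z => ⟨fun k => Complex.exp_ne_zero _, fun w => ?_⟩,
    fun z hz => ?_⟩
  · show ∏ k, Complex.exp (P (E z) k) ^ _ = 1
    rw [prod_exp_zpow]
    have : ∑ k, P (E z) k * ((∑ j, N k j * w j : ℤ) : ℂ) = ∑ j, φ (P (E z)) j * w j := by
      simp only [hφ, Finset.sum_mul]
      rw [Finset.sum_comm]
      refine Finset.sum_congr rfl fun k _ => ?_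
      push_cast
      rw [Finset.mul_sum]
      refine Finset.sum_congr rfl fun j _ => ?_
      ring
    rw [this, hPk]
    simp
  · funext k
    show Complex.exp (P (E z) k) = _
    rw [hE' z hz, hPid _ (hker z hz), hexp z hz]

section LQ
variable {n r : ℕ} (N : Fin r → Fin n → ℤ) (K : Set (Finset (Fin r)))
  (hE : (∅ : Finset (Fin r)) ∈ K)

/-- The map `Ω q`. -/
def Oq : C(Loop ↥(UK K) (onesUK hE), Loop (XS N K) (baseX N K hE)) :=
  loopMap (qCont N K) rfl

lemma Oq_apply (γ : Loop ↥(UK K) (onesUK hE)) (x : OnePoint ℝ) :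
    (Oq N K hE γ).1 x = qmap N K (γ.1 x) := rfl

lemma loop_eval_cont {X : Type*} [TopologicalSpace X] {x₀ : X} :
    Continuous fun z : Loop X x₀ × OnePoint ℝ => z.1.1 z.2 := by
  have : Continuous fun z : C(OnePoint ℝ, X) × OnePoint ℝ => z.1 z.2 := continuous_eval
  exact this.comp ((continuous_subtype_val.comp continuous_fst).prodMk continuous_snd)

theorem liftP_Oq (hT : HasTau N K) (m : ℕ) (hm : 2 ≤ m) : LiftP (Oq N K hE) m := by
  intro p pt hpt hpq
  let h : C((Fin m → unitInterval) × unitInterval, XS N K) :=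
    ⟨fun z => (p z.1).1 (th z.2), loop_eval_cont.comp
      ((p.continuous.comp continuous_fst).prodMk (th.continuous.comp continuous_snd))⟩
  have hh : ∀ y t, h (y, t) = (p y).1 (th t) := fun _ _ => rfl
  obtain ⟨L, hL⟩ := exists_lift_cube hT m h
  choose hLU hLq using hL
  -- normalization
  obtain ⟨ν, cν, hν⟩ := exists_mu (N := N) hT (Set.univ : Set (Fin m → unitInterval))
    (fun y => L (y, 0)) (fun _ => onesC) (Continuous.continuousOn (by fun_prop))
    continuousOn_const (fun y _ => hLU _) (fun y _ => by
      refine (qmap_eq_iff (x := ⟨L (y, 0), hLU _⟩) (y := onesUK hE)).1 ?_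
      rw [hLq, hh, th_zero, (p y).2]; rfl)
  have cν' : Continuous ν := continuousOn_univ.1 cν
  let L1 : C((Fin m → unitInterval) × unitInterval, Fin r → ℂ) :=
    ⟨fun z => ν z.1 * L z, by fun_prop⟩
  have hL1U : ∀ z, L1 z ∈ UK K := fun z => mul_mem_UK (hν z.1 trivial).1.1 (hLU z)
  have hL1q : ∀ z, qmap N K ⟨L1 z, hL1U z⟩ = h z := fun z => by
    rw [← hLq z]
    exact (qmap_eq_iff.2 ⟨ν z.1, (hν z.1 trivial).1, rfl⟩).symm
  have hL10 : ∀ y, L1 (y, 0) = onesC := fun y => (hν y trivial).2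
  -- target on the boundary
  let g : (Fin m → unitInterval) × unitInterval → Fin r → ℂ := fun z =>
    if z.1 ∈ Cube.boundary (Fin m) then ((pt z.1).1 (th z.2)).1 else onesC
  have gB : ∀ z, z.1 ∈ Cube.boundary (Fin m) → g z = ((pt z.1).1 (th z.2)).1 := fun z hz => if_pos hz
  have gE : ∀ z, th z.2 = OnePoint.infty → g z = onesC := by
    intro z hz
    by_cases hb : z.1 ∈ Cube.boundary (Fin m)
    · rw [gB z hb, hz, (pt z.1).2]; rfl
    · exact if_neg hb
  have g0 : ∀ z, z.2 = 0 → g z = onesC := fun z hz => gE z (by rw [hz, th_zero])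
  have g1 : ∀ z, z.2 = 1 → g z = onesC := fun z hz => gE z (by rw [hz, th_one])
  have hgc : ContinuousOn g (BdS m) := by
    rw [BdS_eq]
    refine ContinuousOn.union_of_isClosed ?_ (ContinuousOn.union_of_isClosed ?_ ?_
      (isClosed_BdS2 m 0) (isClosed_BdS2 m 1)) (isClosed_BdS1 m) ((isClosed_BdS2 m 0).union (isClosed_BdS2 m 1))
    · have c1 : ContinuousOn (fun z : (Fin m → unitInterval) × unitInterval => (pt z.1, th z.2))
          {z | z.1 ∈ Cube.boundary (Fin m)} :=
        (hpt.comp continuous_fst.continuousOn fun z hz => hz).prodMk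
          (th.continuous.comp continuous_snd).continuousOn
      have c2 := (continuous_subtype_val.comp loop_eval_cont).comp_continuousOn c1
      exact c2.congr fun z hz => gB z hz
    · exact (continuousOn_const (c := (onesC : Fin r → ℂ))).congr fun z hz => g0 z hz
    · exact (continuousOn_const (c := (onesC : Fin r → ℂ))).congr fun z hz => g1 z hz
  have hgq : ∀ z ∈ BdS m, ∃ hz : g z ∈ UK K, qmap N K ⟨g z, hz⟩ = h z := by
    rintro ⟨y, t⟩ hz
    by_cases hb : y ∈ Cube.boundary (Fin m)
    · have e := gB (y, t) hb
      refine ⟨by rw [e]; exact ((pt y).1 (th t)).2, ?_⟩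
      simp only [e]
      rw [hh, ← hpq y hb]; rfl
    · have hte : th t = OnePoint.infty := by
        rcases hz with hz | hz | hz
        · exact absurd hz hb
        · rw [show t = 0 from hz, th_zero]
        · rw [show t = 1 from hz, th_one]
      have e := gE (y, t) hte
      refine ⟨by rw [e]; exact (onesUK hE).2, ?_⟩
      simp only [e]
      rw [hh, hte, (p y).2]; rfl
  obtain ⟨μ, cμ, hμ⟩ := exists_mu (N := N) hT (BdS m) L1 g L1.continuous.continuousOn hgc
    (fun z _ => hL1U z) (fun z hz => by
      obtain ⟨a, b⟩ := hgq z hz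
      exact (qmap_eq_iff (x := ⟨L1 z, hL1U z⟩) (y := ⟨g z, a⟩)).1 ((hL1q z).trans b.symm))
  obtain ⟨M, hMG, hMμ⟩ := extend_G hm N μ cμ (fun z hz => (hμ z hz).1) (fun y => by
    have hz : (y, (0 : unitInterval)) ∈ BdS m := Or.inr (Or.inl rfl)
    refine G_free hT (hμ _ hz).1 (G_one N) (hL1U (y, 0)) ?_
    rw [(hμ _ hz).2, hL10, g0 _ rfl, one_mul])
  have hFU : ∀ z, M z * L1 z ∈ UK K := fun z => mul_mem_UK (hMG z).1 (hL1U z)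
  let F : C((Fin m → unitInterval) × unitInterval, ↥(UK K)) :=
    ⟨fun z => ⟨M z * L1 z, hFU z⟩, by
      exact Continuous.subtype_mk (M.continuous.mul L1.continuous) _⟩
  have hFS : ∀ z ∈ BdS m, (F z : Fin r → ℂ) = g z := by
    intro z hz
    show M z * L1 z = g z
    rw [hMμ z hz, (hμ z hz).2]
  obtain ⟨P, hP⟩ := descend (onesUK hE) F
    (fun y => Subtype.ext ((hFS _ (Or.inr (Or.inl rfl))).trans (g0 _ rfl)))
    (fun y => Subtype.ext ((hFS _ (Or.inr (Or.inr rfl))).trans (g1 _ rfl)))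
  refine ⟨P, fun b hb => ?_, ?_⟩
  · apply Subtype.ext
    ext1 s
    obtain ⟨t, rfl⟩ := th_surj s
    rw [hP]
    apply Subtype.ext
    rw [hFS (b, t) (Or.inl hb), gB (b, t) hb]
  · have : (Oq N K hE).comp P = p := by
      ext1 y
      apply Subtype.ext
      ext1 s
      obtain ⟨t, rfl⟩ := th_surj s
      show qmap N K ((P y).1 (th t)) = _
      rw [hP, ← hh, ← hL1q]
      exact (qmap_eq_iff.2 ⟨M (y, t), hMG _, rfl⟩).symm
    rw [this]
    exact ContinuousMap.HomotopicRel.refl _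

end LQ

lemma isOpen_PolSp {r : ℕ} (K : Set (Finset (Fin r))) (hE : (∅ : Finset (Fin r)) ∈ K)
    (D : Fin r → ℕ) : IsOpen (PolSp K D) := by
  let J : C((∀ i, Fin (D i) → ℂ) × OnePoint ℝ, Fin r → ℂ) :=
    ⟨fun z i => j0F D z.1 i z.2, continuous_pi fun i => by
      have : Continuous fun z : C(OnePoint ℝ, ℂ) × OnePoint ℝ => z.1 z.2 := continuous_eval
      exact this.comp ((((continuous_apply i).comp (j0F D).continuous).comp continuous_fst).prodMk
        continuous_snd)⟩
  have hP : PolSp K D = J.curry ⁻¹' {f | Set.MapsTo f Set.univ (UK K)} := by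
    ext f
    constructor
    · intro h x _
      exact ((j0F_mem_iff K hE D f).2 h).2.1 x
    · intro h σ hσ t
      obtain ⟨i, hi, hne⟩ := mem_UK.1 (h (Set.mem_univ (t : OnePoint ℝ))) σ hσ
      refine ⟨i, hi, fun h0 => hne ?_⟩
      show j0F D f i (t : OnePoint ℝ) = 0
      rw [j0F_apply, h0, zero_div]
  rw [hP]
  exact (ContinuousMap.isOpen_setOfPred_mapsTo isCompact_univ (isOpen_UK K)).preimage
    J.curry.continuous

lemma polSp_joined {r : ℕ} (K : Set (Finset (Fin r))) (hE : (∅ : Finset (Fin r)) ∈ K)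
    (hcard : ∀ σ, σ ∉ K → 2 ≤ σ.card) (D : Fin r → ℕ) (f f' : ↥(PolSp K D)) :
    Joined f f' := by
  obtain ⟨ε, hε, hb⟩ := Metric.isOpen_iff.1 (isOpen_PolSp K hE D) f.1 f.2
  obtain ⟨ε', hε', hb'⟩ := Metric.isOpen_iff.1 (isOpen_PolSp K hE D) f'.1 f'.2
  let v : (Fin 1 → ℝ) → ∀ i, Fin (D i) → ℂ := fun b => f.1 + (b 0) • (f'.1 - f.1)
  have hv : ContDiff ℝ 1 v := by
    have h0 : ContDiff ℝ 1 fun b : Fin 1 → ℝ => b 0 := contDiff_apply ℝ ℝ 0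
    exact contDiff_const.add (h0.smul contDiff_const)
  obtain ⟨c, hc, hcm⟩ := (polSp_pert_dense K hcard D v hv).exists_mem_open
    (Metric.isOpen_ball (x := (0 : ∀ i, Fin (D i) → ℂ)) (ε := min ε ε'))
    ⟨0, Metric.mem_ball_self (lt_min hε hε')⟩
  have hcn : ‖c‖ < min ε ε' := by simpa using hcm
  have h1 : JoinedIn (PolSp K D) f.1 (f.1 + c) := by
    apply JoinedIn.of_segment_subset
    refine ((convex_ball f.1 ε).segment_subset (Metric.mem_ball_self hε) ?_).trans hb
    simpa using hcn.trans_le (min_le_left _ _)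
  have h2 : JoinedIn (PolSp K D) f'.1 (f'.1 + c) := by
    apply JoinedIn.of_segment_subset
    refine ((convex_ball f'.1 ε').segment_subset (Metric.mem_ball_self hε') ?_).trans hb'
    simpa using hcn.trans_le (min_le_right _ _)
  have h3 : JoinedIn (PolSp K D) (f.1 + c) (f'.1 + c) := by
    refine JoinedIn.ofLine (f := fun t : ℝ => v (fun _ => t) + c) ?_ ?_ ?_ ?_
    · refine Continuous.continuousOn ?_
      have hcv : Continuous v := hv.continuous
      have hci : Continuous fun t : ℝ => (fun _ : Fin 1 => t) := continuous_pi fun _ => continuous_id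
      exact (hcv.comp hci).add continuous_const
    · show f.1 + (0 : ℝ) • (f'.1 - f.1) + c = f.1 + c
      rw [zero_smul, add_zero]
    · show f.1 + (1 : ℝ) • (f'.1 - f.1) + c = f'.1 + c
      rw [one_smul, add_sub_cancel]
    · rintro _ ⟨t, -, rfl⟩
      have hc' : ∀ b, v b + c ∈ PolSp K D := hc
      exact hc' (fun _ => t)
  exact ((h1.trans h3).trans h2.symm).joined_subtype

/-- Zero-dimensional loops joined by a path are homotopic. -/
lemma homRel_of_joined {X : Type*} [TopologicalSpace X] (p p' : C(Fin 0 → unitInterval, X))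
    (h : Joined (p 0) (p' 0)) : p.HomotopicRel p' (Cube.boundary (Fin 0)) := by
  obtain ⟨γ⟩ := h
  refine ⟨⟨⟨⟨fun z => γ z.1, γ.continuous.comp continuous_fst⟩, fun y => ?_, fun y => ?_⟩, ?_⟩⟩
  · rw [Subsingleton.elim y 0]; exact γ.source
  · rw [Subsingleton.elim y 0]; exact γ.target
  · rintro t y ⟨i, -⟩
    exact i.elim0

lemma homRel_of_inj {X Y : Type*} [TopologicalSpace X] [TopologicalSpace Y] {f : C(X, Y)} {k : ℕ}
    {x : X} (h : Function.Injective (piMap k f x)) (p q : C(Fin k → unitInterval, X))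
    (hp : p ∈ GenLoop (Fin k) X x) (hq : q ∈ GenLoop (Fin k) X x)
    (hh : (f.comp p).HomotopicRel (f.comp q) (Cube.boundary (Fin k))) :
    p.HomotopicRel q (Cube.boundary (Fin k)) := by
  have : (Quotient.mk _ ⟨p, hp⟩ : HomotopyGroup (Fin k) X x) = Quotient.mk _ ⟨q, hq⟩ :=
    h (Quotient.sound hh)
  exact Quotient.exact this

lemma homRel_of_surj {X Y : Type*} [TopologicalSpace X] [TopologicalSpace Y] {f : C(X, Y)} {k : ℕ}
    {x : X} (h : Function.Surjective (piMap k f x)) (q : C(Fin k → unitInterval, Y))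
    (hq : q ∈ GenLoop (Fin k) Y (f x)) :
    ∃ p ∈ GenLoop (Fin k) X x, (f.comp p).HomotopicRel q (Cube.boundary (Fin k)) := by
  obtain ⟨c, hc⟩ := h (Quotient.mk _ ⟨q, hq⟩)
  induction c using Quotient.inductionOn with
  | _ p => exact ⟨p.1, p.2, Quotient.exact hc⟩

lemma comp_mem_gl {X Y : Type*} [TopologicalSpace X] [TopologicalSpace Y] {f : C(X, Y)} {k : ℕ}
    {x : X} {p : C(Fin k → unitInterval, X)} (hp : p ∈ GenLoop (Fin k) X x) :
    f.comp p ∈ GenLoop (Fin k) Y (f x) := fun y hy => by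
  show f (p y) = f x
  rw [hp y hy]

lemma inj_of_homRel {X Y : Type*} [TopologicalSpace X] [TopologicalSpace Y] {f : C(X, Y)} {k : ℕ}
    {x : X} (h : ∀ p ∈ GenLoop (Fin k) X x, ∀ q ∈ GenLoop (Fin k) X x,
      (f.comp p).HomotopicRel (f.comp q) (Cube.boundary (Fin k)) →
      p.HomotopicRel q (Cube.boundary (Fin k))) : Function.Injective (piMap k f x) := by
  intro c c' hcc
  induction c using Quotient.inductionOn with
  | _ p1 =>
  induction c' using Quotient.inductionOn with
  | _ p2 =>
  exact Quotient.sound (h p1.1 p1.2 p2.1 p2.2 (Quotient.exact hcc))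

lemma surj_of_homRel {X Y : Type*} [TopologicalSpace X] [TopologicalSpace Y] {f : C(X, Y)} {k : ℕ}
    {x : X} (h : ∀ q ∈ GenLoop (Fin k) Y (f x), ∃ p ∈ GenLoop (Fin k) X x,
      (f.comp p).HomotopicRel q (Cube.boundary (Fin k))) : Function.Surjective (piMap k f x) := by
  intro c
  induction c using Quotient.inductionOn with
  | _ q =>
  obtain ⟨p, hp, hh⟩ := h q.1 q.2
  exact ⟨Quotient.mk _ ⟨p, hp⟩, Quotient.sound hh⟩

section Fin
variable {n r : ℕ} {N : Fin r → Fin n → ℤ} {K : Set (Finset (Fin r))}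
  {hE : (∅ : Finset (Fin r)) ∈ K} {D : Fin r → ℕ}

lemma Oq_comp_eq (i : C(↥(PolSp K D), Loop (XS N K) (baseX N K hE)))
    (hi : IsID N K hE D i) (j : C(↥(PolSp K D), Loop ↥(UK K) (onesUK hE)))
    (hj : IsLiftOfID N K hE D j) : (Oq N K hE).comp j = i := by
  ext1 f
  apply Subtype.ext
  ext1 s
  induction s using OnePoint.rec with
  | infty => rw [(i f).2]; exact ((Oq N K hE).comp j f).2
  | coe t => rw [hi f t]; exact hj f t

lemma isID_Oq (j : C(↥(PolSp K D), Loop ↥(UK K) (onesUK hE)))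
    (hj : IsLiftOfID N K hE D j) : IsID N K hE D ((Oq N K hE).comp j) := fun f t => hj f t

lemma j0_lift (hsum : ∑ k, (D k : ℤ) • N k = 0) : IsLiftOfID N K hE D (j0 K hE D) := by
  intro f t
  symm
  rw [qmap_eq_iff]
  refine ⟨fun i => (((t : ℂ) - Complex.I) ^ (D i))⁻¹, ⟨fun i => ?_, fun m => ?_⟩, ?_⟩
  · exact inv_ne_zero (pow_ne_zero _ (xmi_ne t))
  · have h1 : ∀ i, ((((t : ℂ) - Complex.I) ^ (D i))⁻¹) ^ (∑ j, N i j * m j) =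
        ((t : ℂ) - Complex.I) ^ (-((D i : ℤ) * ∑ j, N i j * m j)) := by
      intro i
      rw [zpow_neg, zpow_mul, zpow_natCast, inv_zpow]
    rw [Finset.prod_congr rfl fun i _ => h1 i]
    have h2 : ∀ s : Finset (Fin r), ∏ i ∈ s, ((t : ℂ) - Complex.I) ^ (-((D i : ℤ) * ∑ j, N i j * m j)) =
        ((t : ℂ) - Complex.I) ^ (∑ i ∈ s, -((D i : ℤ) * ∑ j, N i j * m j)) := by
      intro s
      induction s using Finset.induction_on with
      | empty => simp
      | insert a s ha ih => rw [Finset.prod_insert ha, Finset.sum_insert ha, ih, zpow_add₀ (xmi_ne t)]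
    rw [h2]
    have h3 : ∑ i, ((D i : ℤ) * ∑ j, N i j * m j) = 0 := by
      have : ∀ j, ∑ i, (D i : ℤ) * N i j = 0 := fun j => by
        have := congrFun hsum j
        simpa [Finset.sum_apply] using this
      simp_rw [Finset.mul_sum]
      rw [Finset.sum_comm]
      refine Finset.sum_eq_zero fun j _ => ?_
      simp_rw [← mul_assoc]
      rw [← Finset.sum_mul, this, zero_mul]
    rw [Finset.sum_neg_distrib, h3, neg_zero, zpow_zero]
  · ext i
    have := j0F_apply D f.1 i t
    show _ = j0F D f.1 i (t : OnePoint ℝ)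
    rw [this, div_eq_inv_mul]
    rfl

lemma surj_lift (hT : HasTau N K) (j : C(↥(PolSp K D), Loop ↥(UK K) (onesUK hE)))
    (hj : (Oq N K hE).comp j = (Oq N K hE).comp (j0 K hE D)) (k : ℕ) (hk : 1 ≤ k)
    (x : ↥(PolSp K D)) (h0 : Function.Surjective (piMap k (j0 K hE D) x)) :
    Function.Surjective (piMap k j x) := by
  apply surj_of_homRel
  intro q hq
  have hjx : ∀ x s, qmap N K ((j x).1 s) = qmap N K ((j0 K hE D x).1 s) := fun x s =>
    congrArg (fun z : C(↥(PolSp K D), Loop (XS N K) (baseX N K hE)) => (z x).1 s) hj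
  obtain ⟨μ, cμ, hμ⟩ := exists_mu (N := N) hT (Set.univ : Set (OnePoint ℝ))
    (fun s => ((j x).1 s).1) (fun s => ((j0 K hE D x).1 s).1)
    (Continuous.continuousOn (continuous_subtype_val.comp (j x).1.continuous))
    (Continuous.continuousOn (continuous_subtype_val.comp (j0 K hE D x).1.continuous))
    (fun s _ => ((j x).1 s).2) (fun s _ => qmap_eq_iff.1 (hjx x s))
  have cμ' : Continuous μ := continuousOn_univ.1 cμ
  have hμ1 : μ OnePoint.infty = 1 := by
    have h := (hμ OnePoint.infty trivial)
    have h2 := h.2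
    rw [(j x).2, (j0 K hE D x).2] at h2
    refine G_free hT h.1 (G_one N) (onesUK hE).2 ?_
    rw [h2, one_mul]
  -- multiplication by the loop `μ`
  let Mu : C((Fin k → unitInterval) × OnePoint ℝ, ↥(UK K)) :=
    ⟨fun z => ⟨μ z.2 * ((q z.1).1 z.2).1, mul_mem_UK (hμ z.2 trivial).1.1 ((q z.1).1 z.2).2⟩, by
      refine Continuous.subtype_mk ((cμ'.comp continuous_snd).mul ?_) _
      exact continuous_subtype_val.comp (loop_eval_cont.comp
        ((q.continuous.comp continuous_fst).prodMk continuous_snd))⟩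
  have hMuI : ∀ y, Mu.curry y OnePoint.infty = onesUK hE := fun y => by
    apply Subtype.ext
    show μ OnePoint.infty * ((q y).1 OnePoint.infty).1 = _
    rw [hμ1, one_mul, (q y).2]
  let Q : C(Fin k → unitInterval, Loop ↥(UK K) (onesUK hE)) :=
    ⟨fun y => ⟨Mu.curry y, hMuI y⟩, Mu.curry.continuous.subtype_mk hMuI⟩
  have hQ : ∀ y s, ((Q y).1 s).1 = μ s * ((q y).1 s).1 := fun _ _ => rfl
  have hQg : Q ∈ GenLoop (Fin k) _ (j0 K hE D x) := by
    intro y hy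
    apply Subtype.ext
    ext1 s
    apply Subtype.ext
    rw [hQ, hq y hy, (hμ s trivial).2]
  have hOQ : (Oq N K hE).comp Q = (Oq N K hE).comp q := by
    ext1 y
    apply Subtype.ext
    ext1 s
    exact (qmap_eq_iff.2 ⟨μ s, (hμ s trivial).1, rfl⟩).symm
  obtain ⟨p, hp, hpQ⟩ := homRel_of_surj h0 Q hQg
  refine ⟨p, hp, ?_⟩
  refine homRel_of_inj (piMap_inj_of_liftP (Oq N K hE) k (liftP_Oq N K hE hT (k + 1) (by omega)) (j x))
    (j.comp p) q (comp_mem_gl hp) hq ?_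
  rw [← hOQ, ← ContinuousMap.comp_assoc, hj, ContinuousMap.comp_assoc]
  exact hpQ.elim fun H => ⟨H.compContinuousMap _⟩

lemma rmin_le_card {σ : Finset (Fin r)} (h : σ ∉ K) : rmin K ≤ σ.card := by
  induction σ using Finset.strongInduction with
  | _ σ ih =>
  by_cases hp : ∀ t ⊂ σ, t ∈ K
  · exact Nat.sInf_le ⟨σ, ⟨h, hp⟩, rfl⟩
  · push Not at hp
    obtain ⟨t, ht, htK⟩ := hp
    exact (ih t ht htK).trans (Finset.card_le_card ht.1)

lemma dBound_arith {k : ℕ} (hk : (k : ℤ) ≤ dBound K D) :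
    2 ≤ rmin K ∧ ∀ i, k + 1 < 2 * (rmin K - 1) * D i := by
  unfold dBound at hk
  have h2 : 2 ≤ rmin K := by
    by_contra h
    have h1 : (rmin K : ℤ) - 1 ≤ 0 := by omega
    have h3 : ((rmin K : ℤ) - 1) * (dmin D : ℤ) ≤ 0 :=
      mul_nonpos_of_nonpos_of_nonneg h1 (by positivity)
    have : (0 : ℤ) ≤ k := by positivity
    nlinarith
  refine ⟨h2, fun i => ?_⟩
  have hd : dmin D ≤ D i := Nat.sInf_le ⟨i, rfl⟩
  obtain ⟨ρ, hρ⟩ : ∃ ρ, rmin K = ρ + 1 := ⟨rmin K - 1, by omega⟩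
  rw [hρ] at hk ⊢
  have hk' : k + 2 ≤ 2 * ρ * dmin D := by
    have : ((k : ℤ)) + 2 ≤ 2 * ρ * dmin D := by
      push_cast at hk
      linarith [hk, show 2 * ((ρ : ℤ) + 1 - 1) * (dmin D : ℤ) = 2 * ρ * dmin D by ring]
    exact_mod_cast this
  have := Nat.mul_le_mul_left (2 * ρ) hd
  simp only [Nat.add_sub_cancel]
  omega

end Fin

theorem polSpace_main
    {n r : ℕ} (F : Fan n) (N : Fin r → Fin n → ℤ)
    (hPG : IsPrimGens F N) (hNS : F.NonSingular) (hC : F.Complete) (h2 : Cond2 N)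
    (F1 : Fan n) (hsub : F1.cones ⊆ F.cones) (hne : F1.cones ≠ F.cones)
    (hrays : ∀ k, ray (zr (N k)) ∈ F1.cones) (hPG1 : IsPrimGens F1 N)
    (D : Fin r → ℕ) (hD : ∀ k, 0 < D k)
    (hsum : ∑ k, (D k : ℤ) • N k = 0) :
    ((∃ j : C(↥(PolSp (KC F1 N) D), Loop ↥(UK (KC F1 N)) (onesUK (empty_mem_KC F1 N))),
        IsLiftOfID N (KC F1 N) (empty_mem_KC F1 N) D ⇑j) ∧
      ∀ j : C(↥(PolSp (KC F1 N) D), Loop ↥(UK (KC F1 N)) (onesUK (empty_mem_KC F1 N))),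
        IsLiftOfID N (KC F1 N) (empty_mem_KC F1 N) D ⇑j →
          HomotopyEquivThrough j (dBound (KC F1 N) D)) ∧
    (∀ i : C(↥(PolSp (KC F1 N) D),
        Loop (XS N (KC F1 N)) (baseX N (KC F1 N) (empty_mem_KC F1 N))),
      IsID N (KC F1 N) (empty_mem_KC F1 N) D ⇑i →
      ∀ k : ℕ, 2 ≤ k → (k : ℤ) ≤ dBound (KC F1 N) D →
        ∀ f₀ : ↥(PolSp (KC F1 N) D), Function.Bijective (piMap k i f₀)) := by
  have hNS1 : F1.NonSingular := fun σ hσ => hNS σ (hsub hσ)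
  have hT : HasTau N (KC F1 N) := hasTau F1 N hPG1 hNS1 h2
  have hE : (∅ : Finset (Fin r)) ∈ KC F1 N := empty_mem_KC F1 N
  have hj0 : IsLiftOfID N (KC F1 N) hE D (j0 (KC F1 N) hE D) := j0_lift hsum
  have hsurj0 : ∀ k : ℕ, (k : ℤ) ≤ dBound (KC F1 N) D → ∀ x,
      Function.Surjective (piMap k (j0 (KC F1 N) hE D) x) := fun k hk x =>
    piMap_surj_of_liftP _ k (liftP_j0 _ hE _ (dBound_arith hk).1 (fun _ => rmin_le_card) D
      fun i => by have := (dBound_arith hk).2 i; omega) x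
  have hinj0 : ∀ k : ℕ, (k : ℤ) ≤ dBound (KC F1 N) D → ∀ x,
      Function.Injective (piMap k (j0 (KC F1 N) hE D) x) := fun k hk x =>
    piMap_inj_of_liftP _ k (liftP_j0 _ hE _ (dBound_arith hk).1 (fun _ => rmin_le_card) D
      (dBound_arith hk).2) x
  have hinjQ : ∀ k : ℕ, 1 ≤ k → ∀ x, Function.Injective (piMap k (Oq N (KC F1 N) hE) x) :=
    fun k hk x => piMap_inj_of_liftP _ k (liftP_Oq N _ hE hT (k + 1) (by omega)) x
  have hsurjQ : ∀ k : ℕ, 2 ≤ k → ∀ x, Function.Surjective (piMap k (Oq N (KC F1 N) hE) x) :=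
    fun k hk x => piMap_surj_of_liftP _ k (liftP_Oq N _ hE hT k hk) x
  have hjn : ∀ k : ℕ, (k : ℤ) ≤ dBound (KC F1 N) D → ∀ f f' : ↥(PolSp (KC F1 N) D), Joined f f' :=
    fun k hk => polSp_joined (KC F1 N) hE
      (fun σ hσ => (dBound_arith hk).1.trans (rmin_le_card hσ)) D
  refine ⟨⟨⟨_, hj0⟩, fun j hj x k hk => ?_⟩, fun i hi k hk2 hk x => ?_⟩
  · have hOj : (Oq N (KC F1 N) hE).comp j = (Oq N (KC F1 N) hE).comp (j0 (KC F1 N) hE D) :=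
      Oq_comp_eq _ (isID_Oq _ hj0) j hj
    rcases Nat.eq_zero_or_pos k with rfl | hk1
    · constructor
      · exact inj_of_homRel fun p _ q _ _ => homRel_of_joined _ _ (hjn 0 hk _ _)
      · apply surj_of_homRel
        intro q hq
        have hbd : ∀ y, y ∉ Cube.boundary (Fin 0) := by
          rintro y ⟨i, -⟩
          exact i.elim0
        obtain ⟨p1, -, h1⟩ := homRel_of_surj (hsurj0 0 hk x) q fun y hy => absurd hy (hbd y)
        obtain ⟨p2, -, h2⟩ := homRel_of_surj (hsurj0 0 hk x)
          (j.comp (ContinuousMap.const _ x)) fun y hy => absurd hy (hbd y)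
        refine ⟨ContinuousMap.const _ x, fun y hy => absurd hy (hbd y), ?_⟩
        have h3 : p2.HomotopicRel p1 (Cube.boundary (Fin 0)) :=
          homRel_of_joined _ _ (hjn 0 hk _ _)
        have h4 : ((j0 (KC F1 N) hE D).comp p2).HomotopicRel ((j0 (KC F1 N) hE D).comp p1)
            (Cube.boundary (Fin 0)) := h3.elim fun H => ⟨H.compContinuousMap _⟩
        exact (h2.symm.trans h4).trans h1
    · refine ⟨inj_of_homRel fun p hp q hq hh => ?_, surj_lift hT j hOj k hk1 x (hsurj0 k hk x)⟩
      refine homRel_of_inj (hinj0 k hk x) p q hp hq ?_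
      refine homRel_of_inj (hinjQ k hk1 (j0 (KC F1 N) hE D x)) _ _ (comp_mem_gl hp)
        (comp_mem_gl hq) ?_
      rw [← ContinuousMap.comp_assoc, ← ContinuousMap.comp_assoc, ← hOj,
        ContinuousMap.comp_assoc, ContinuousMap.comp_assoc]
      exact hh.elim fun H => ⟨H.compContinuousMap _⟩
  · obtain rfl : (Oq N (KC F1 N) hE).comp (j0 (KC F1 N) hE D) = i := Oq_comp_eq i hi _ hj0
    constructor
    · refine inj_of_homRel fun p hp q hq hh => ?_
      refine homRel_of_inj (hinj0 k hk x) p q hp hq ?_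
      exact homRel_of_inj (hinjQ k (by omega) (j0 (KC F1 N) hE D x)) _ _ (comp_mem_gl hp)
        (comp_mem_gl hq) hh
    · refine surj_of_homRel fun q hq => ?_
      obtain ⟨p1, hp1, h1⟩ := homRel_of_surj (hsurjQ k hk2 (j0 (KC F1 N) hE D x)) q hq
      obtain ⟨p, hp, h⟩ := homRel_of_surj (hsurj0 k hk x) p1 hp1
      refine ⟨p, hp, ?_⟩
      have h' : ((Oq N (KC F1 N) hE).comp ((j0 (KC F1 N) hE D).comp p)).HomotopicRel
          ((Oq N (KC F1 N) hE).comp p1) (Cube.boundary (Fin k)) :=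
        h.elim fun H => ⟨H.compContinuousMap _⟩
      exact h'.trans h1

/-- For a complete non-singular fan `Σ` satisfying (2.9.2) and a subfan
`Σ(1) ⊆ Σ₁ ⊊ Σ`, with `∑ d_k n_k = 0`: (i) any lift `j_D` of `i_D` through `Ω q_{Σ₁}`
exists and is a homotopy equivalence through dimension `d(D,Σ₁)`; (ii) `i_D` induces an
isomorphism on `π_k` for `2 ≤ k ≤ d(D,Σ₁)`. -/
theorem polSpace_subfan_lift_and_pi_iso
    {n r : ℕ} (F : Fan n) (N : Fin r → Fin n → ℤ)
    (hPG : IsPrimGens F N) (hNS : F.NonSingular) (hC : F.Complete) (h2 : Cond2 N)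
    (F1 : Fan n) (hsub : F1.cones ⊆ F.cones) (hne : F1.cones ≠ F.cones)
    (hrays : ∀ k, ray (zr (N k)) ∈ F1.cones) (hPG1 : IsPrimGens F1 N)
    (D : Fin r → ℕ) (hD : ∀ k, 0 < D k)
    (hsum : ∑ k, (D k : ℤ) • N k = 0) :
    ((∃ j : C(↥(PolSp (KC F1 N) D), Loop ↥(UK (KC F1 N)) (onesUK (empty_mem_KC F1 N))),
        IsLiftOfID N (KC F1 N) (empty_mem_KC F1 N) D ⇑j) ∧
      ∀ j : C(↥(PolSp (KC F1 N) D), Loop ↥(UK (KC F1 N)) (onesUK (empty_mem_KC F1 N))),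
        IsLiftOfID N (KC F1 N) (empty_mem_KC F1 N) D ⇑j →
          HomotopyEquivThrough j (dBound (KC F1 N) D)) ∧
    (∀ i : C(↥(PolSp (KC F1 N) D),
        Loop (XS N (KC F1 N)) (baseX N (KC F1 N) (empty_mem_KC F1 N))),
      IsID N (KC F1 N) (empty_mem_KC F1 N) D ⇑i →
      ∀ k : ℕ, 2 ≤ k → (k : ℤ) ≤ dBound (KC F1 N) D →
        ∀ f₀ : ↥(PolSp (KC F1 N) D), Function.Bijective (piMap k i f₀)) := by
  exact polSpace_main F N hPG hNS hC h2 F1 hsub hne hrays hPG1 D hD hsum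

end Toric
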